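/- arXiv:2109.01371 — 4 statements merged into one kernel-verified Lean document; each statement's English description precedes it below -/
import Mathlib

section
/- There is a countable family (D_i)_{i∈ℕ} of clones on {0,1,2} such that every clone on {0,1,2} all of whose operations preserve C_3 is minor equivalent to some D_i; i.e., minor equivalence has only countably many equivalence classes on the clones of self-dual operations. -/
/-- The three-element domain `{0,1,2}`. -/
abbrev D3 : Type := Fin 3

/-- `n`-ary operations on `{0,1,2}`. -/
abbrev Op (n : ℕ) : Type := (Fin n → D3) → D3

/-- An `n`-ary operation `f` preserves a `k`-ary relation `R`. -/
def Preserves {n k : ℕ} (f : Op n) (R : Set (Fin k → D3)) : Prop :=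
  ∀ t : Fin n → (Fin k → D3), (∀ i, t i ∈ R) → (fun j => f fun i => t i j) ∈ R

/-- `C₃ = {(0,1),(1,2),(2,0)}`. -/
def C3rel : Set (Fin 2 → D3) :=
  { t | (t 0 = 0 ∧ t 1 = 1) ∨ (t 0 = 1 ∧ t 1 = 2) ∨ (t 0 = 2 ∧ t 1 = 0) }

/-- A clone on `{0,1,2}`. -/
structure IsClone (C : ∀ n, Set (Op n)) : Prop where
  proj_mem : ∀ (n : ℕ) (i : Fin n), (fun x => x i) ∈ C n
  comp_mem : ∀ (n m : ℕ) (f : Op n) (g : Fin n → Op m),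
    f ∈ C n → (∀ i, g i ∈ C m) → (fun x => f fun i => g i x) ∈ C m

/-- The minor `f_π` of an `n`-ary operation `f` along `π`. -/
def minor {n r : ℕ} (f : Op n) (π : Fin n → Fin r) : Op r :=
  fun x => f fun i => x (π i)

/-- `ξ` is a minor-preserving map from `C` to `D`. -/
def IsMinorHom (C D : ∀ n, Set (Op n)) (ξ : ∀ n, Op n → Op n) : Prop :=
  (∀ n, ∀ f ∈ C n, ξ n f ∈ D n) ∧
  (∀ (n r : ℕ) (f : Op n) (π : Fin n → Fin r), f ∈ C n → ξ r (minor f π) = minor (ξ n f) π)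

/-- Two clones are minor equivalent if there are minor-preserving maps in both directions. -/
def MinorEquivalent (C D : ∀ n, Set (Op n)) : Prop :=
  (∃ ξ, IsMinorHom C D ξ) ∧ (∃ ξ, IsMinorHom D C ξ)


namespace SelfDual

/-- `f` can be substituted by members of `C`. -/
def Acts (C : ∀ n, Set (Op n)) {I : Type} (f : (I → D3) → D3) : Prop :=
  ∀ (n : ℕ) (p : I → Op n), (∀ i, p i ∈ C n) → (fun x => f fun i => p i x) ∈ C n

def A2 (C : ∀ n, Set (Op n)) (g : D3 → D3 → D3) : Prop :=
  ∀ (n : ℕ) (p q : Op n), p ∈ C n → q ∈ C n → (fun x => g (p x) (q x)) ∈ C n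

def A3 (C : ∀ n, Set (Op n)) (g : D3 → D3 → D3 → D3) : Prop :=
  ∀ (n : ℕ) (p q r : Op n), p ∈ C n → q ∈ C n → r ∈ C n →
    (fun x => g (p x) (q x) (r x)) ∈ C n

variable {C C' : ∀ n, Set (Op n)} {I J : Type}

theorem Acts.proj (i : I) : Acts C (fun x : I → D3 => x i) := fun _ _ hp => hp i

theorem Acts.comp {f : (I → D3) → D3} {g : I → (J → D3) → D3} (hf : Acts C f)
    (hg : ∀ i, Acts C (g i)) : Acts C (fun x => f fun i => g i x) :=
  fun n p hp => hf n (fun i x => g i fun j => p j x) (fun i => hg i n p hp)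

theorem Acts.minor {f : (I → D3) → D3} (hf : Acts C f) (π : I → J) :
    Acts C (fun x : J → D3 => f fun i => x (π i)) :=
  hf.comp (fun i => Acts.proj (π i))

theorem Acts.of_mem (hC : IsClone C) {n : ℕ} {f : Op n} (h : f ∈ C n) : Acts C f :=
  fun m p hp => hC.comp_mem n m f p h hp

theorem Acts.mem (hC : IsClone C) {n : ℕ} {f : Op n} (h : Acts C f) : f ∈ C n :=
  h n (fun i x => x i) (fun i => hC.proj_mem n i)

theorem A2.app {g : D3 → D3 → D3} (hg : A2 C g) {f h : (I → D3) → D3} (hf : Acts C f)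
    (hh : Acts C h) : Acts C (fun x => g (f x) (h x)) :=
  fun n p hp => hg n _ _ (hf n p hp) (hh n p hp)

theorem A3.app {g : D3 → D3 → D3 → D3} (hg : A3 C g) {f h k : (I → D3) → D3} (hf : Acts C f)
    (hh : Acts C h) (hk : Acts C k) : Acts C (fun x => g (f x) (h x) (k x)) :=
  fun n p hp => hg n _ _ _ (hf n p hp) (hh n p hp) (hk n p hp)

theorem A2.of_acts {f : (Fin 2 → D3) → D3} (hf : Acts C f) : A2 C (fun x y => f ![x, y]) := by
  intro n p q hp hq
  have := hf n ![p, q] (by intro i; fin_cases i <;> assumption)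
  convert this using 3 with x
  ext i; fin_cases i <;> rfl

theorem A3.of_acts {f : (Fin 3 → D3) → D3} (hf : Acts C f) :
    A3 C (fun x y z => f ![x, y, z]) := by
  intro n p q r hp hq hr
  have := hf n ![p, q, r] (by intro i; fin_cases i <;> assumption)
  convert this using 3 with x
  ext i; fin_cases i <;> rfl

theorem A2.acts {g : D3 → D3 → D3} (hg : A2 C g) :
    Acts C (fun x : Fin 2 → D3 => g (x 0) (x 1)) := hg.app (Acts.proj 0) (Acts.proj 1)

theorem A3.acts {g : D3 → D3 → D3 → D3} (hg : A3 C g) :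
    Acts C (fun x : Fin 3 → D3 => g (x 0) (x 1) (x 2)) :=
  hg.app (Acts.proj 0) (Acts.proj 1) (Acts.proj 2)

structure Good (C : ∀ n, Set (Op n)) : Prop where
  clone : IsClone C
  sd : ∀ n, ∀ f ∈ C n, ∀ x, f (fun i => x i + 1) = f x + 1
  idem : ∀ n, ∀ f ∈ C n, ∀ c, f (fun _ => c) = c

theorem Good.mem (hC : Good C) {n : ℕ} {f : Op n} (h : Acts C f) : f ∈ C n := h.mem hC.clone
theorem Good.acts (hC : Good C) {n : ℕ} {f : Op n} (h : f ∈ C n) : Acts C f :=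
  Acts.of_mem hC.clone h

theorem Good.fin (hC : Good C) [Finite I] {f : (I → D3) → D3} (hf : Acts C f) :
    ∃ (n : ℕ) (e : I ≃ Fin n), (fun x : Fin n → D3 => f fun i => x (e i)) ∈ C n := by
  obtain ⟨n, ⟨e⟩⟩ := Finite.exists_equiv_fin I
  exact ⟨n, e, hC.mem (hf.minor e)⟩

theorem Good.asd (hC : Good C) [Finite I] {f : (I → D3) → D3} (hf : Acts C f) (x : I → D3) :
    f (fun i => x i + 1) = f x + 1 := by
  obtain ⟨n, e, h⟩ := hC.fin hf
  simpa using hC.sd n _ h (fun j => x (e.symm j))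

theorem Good.aidem (hC : Good C) [Finite I] {f : (I → D3) → D3} (hf : Acts C f) (c : D3) :
    f (fun _ => c) = c := by
  obtain ⟨n, e, h⟩ := hC.fin hf
  simpa using hC.idem n _ h c

theorem d3_shift (c : D3) : c = 0 ∨ c = 0 + 1 ∨ c = 0 + 1 + 1 := by revert c; decide

theorem Good.asdc (hC : Good C) [Finite I] {f : (I → D3) → D3} (hf : Acts C f) (x : I → D3)
    (c : D3) : f (fun i => x i + c) = f x + c := by
  rcases d3_shift c with rfl | rfl | rfl
  · simp
  · simpa using hC.asd hf x
  · have h1 := hC.asd hf x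
    have h2 := hC.asd hf (fun i => x i + 1)
    have : ∀ y : D3, y + (0 + 1 + 1) = y + 1 + 1 := by decide
    simp only [this]
    rw [h2, h1]

theorem Good.npos (hC : Good C) {n : ℕ} {f : Op n} (hf : f ∈ C n) : 0 < n := by
  rcases Nat.eq_zero_or_pos n with rfl | h
  · exfalso
    have := hC.sd 0 f hf (fun i => i.elim0)
    have h2 : (fun i : Fin 0 => (i.elim0 : D3) + 1) = fun i => i.elim0 := by
      ext i; exact i.elim0
    have h3 : (fun i : Fin 0 => (fun i : Fin 0 => (i.elim0 : D3)) i + 1) = fun i => i.elim0 := h2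
    rw [h3] at this
    revert this
    generalize f _ = y
    revert y
    decide
  · exact h

/-! minor equivalence -/

abbrev MHom (C D : ∀ n, Set (Op n)) : Prop := ∃ ξ, IsMinorHom C D ξ

theorem MHom.of_le (h : ∀ n, ∀ f ∈ C n, f ∈ C' n) : MHom C C' :=
  ⟨fun _ f => f, h, fun _ _ _ _ _ => rfl⟩

theorem MHom.trans {C1 C2 C3 : ∀ n, Set (Op n)} (h1 : MHom C1 C2) (h2 : MHom C2 C3) :
    MHom C1 C3 := by
  obtain ⟨a, ha, ha'⟩ := h1
  obtain ⟨b, hb, hb'⟩ := h2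
  refine ⟨fun n f => b n (a n f), fun n f hf => hb n _ (ha n f hf), ?_⟩
  intro n r f π hf
  simp only
  rw [ha' n r f π hf, hb' n r _ π (ha n f hf)]

theorem meq_symm (h : MinorEquivalent C C') : MinorEquivalent C' C := ⟨h.2, h.1⟩
theorem meq_trans {C1 C2 C3 : ∀ n, Set (Op n)} (h1 : MinorEquivalent C1 C2)
    (h2 : MinorEquivalent C2 C3) : MinorEquivalent C1 C3 :=
  ⟨MHom.trans h1.1 h2.1, MHom.trans h2.2 h1.2⟩

theorem proj_clone : IsClone (fun n => {f : Op n | ∃ i, f = fun x => x i}) := by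
  constructor
  · intro n i; exact ⟨i, rfl⟩
  · rintro n m f g ⟨i, rfl⟩ hg
    exact hg i

theorem assemble {ι : Type} [Countable ι] (P : ι → (∀ n, Set (Op n)) → Prop)
    (h1 : ∀ C, IsClone C → (∀ n, ∀ f ∈ C n, Preserves f C3rel) →
      ∃ k C', Good C' ∧ MinorEquivalent C C' ∧ P k C')
    (h2 : ∀ k C C', Good C → Good C' → P k C → P k C' → MHom C C') :
    ∃ Dfam : ℕ → (∀ n, Set (Op n)),
      (∀ i, IsClone (Dfam i)) ∧
      (∀ C : ∀ n, Set (Op n), IsClone C → (∀ n, ∀ f ∈ C n, Preserves f C3rel) →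
        ∃ i, MinorEquivalent C (Dfam i)) := by
  classical
  obtain ⟨e, he⟩ := exists_injective_nat ι
  let D : ℕ → (∀ n, Set (Op n)) := fun i =>
    if h : ∃ (k : ι) (C : ∀ n, Set (Op n)), e k = i ∧ Good C ∧ P k C then h.choose_spec.choose
    else (fun n => {f : Op n | ∃ i, f = fun x => x i})
  refine ⟨D, ?_, ?_⟩
  · intro i
    by_cases h : ∃ (k : ι) (C : ∀ n, Set (Op n)), e k = i ∧ Good C ∧ P k C
    · simp only [D, dif_pos h]
      exact h.choose_spec.choose_spec.2.1.clone
    · simp only [D, dif_neg h]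
      exact proj_clone
  · intro C hC hC3
    obtain ⟨k, C', hg, hm, hP⟩ := h1 C hC hC3
    refine ⟨e k, ?_⟩
    have h : ∃ (k' : ι) (C : ∀ n, Set (Op n)), e k' = e k ∧ Good C ∧ P k' C :=
      ⟨k, C', rfl, hg, hP⟩
    have hs := h.choose_spec.choose_spec
    have hk : h.choose = k := he hs.1
    have hD : D (e k) = h.choose_spec.choose := by simp only [D, dif_pos h]
    rw [hD]
    have aux : ∀ k' D', k' = k → P k' D' → P k D' := by
      rintro _ _ rfl h; exact h
    have hP2 := aux _ _ hk hs.2.2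
    exact meq_trans hm ⟨h2 k _ _ hg hs.2.1 hP hP2, h2 k _ _ hs.2.1 hg hP2 hP⟩

/-- reduction to idempotent clones -/
theorem to_good (hC : IsClone C) (h3 : ∀ n, ∀ f ∈ C n, Preserves f C3rel) :
    ∃ C', Good C' ∧ MinorEquivalent C C' := by
  have sd : ∀ n, ∀ f ∈ C n, ∀ x, f (fun i => x i + 1) = f x + 1 := by
    intro n f hf x
    have := h3 n f hf (fun i => ![x i, x i + 1]) (by
      intro i
      simp only [C3rel, Set.mem_ofPred_eq, Matrix.cons_val_zero, Matrix.cons_val_one]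
      generalize x i = y
      revert y; decide)
    simp only [C3rel, Set.mem_ofPred_eq, Matrix.cons_val_zero, Matrix.cons_val_one] at this
    revert this
    generalize f (fun i => x i + 1) = a
    generalize f (fun i => x i) = b
    revert a b
    decide
  have diag : ∀ n, ∀ f ∈ C n, ∀ c, f (fun _ => c) = f (fun _ => 0) + c := by
    intro n f hf c
    have h1 := sd n f hf (fun _ => 0)
    have h2 := sd n f hf (fun _ => 0 + 1)
    rcases d3_shift c with rfl | rfl | rfl
    · simp
    · simpa using h1
    · rw [h2, h1]
      generalize f _ = y
      revert y; decide
  let C' : ∀ n, Set (Op n) := fun n => {f | f ∈ C n ∧ f (fun _ => 0) = 0}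
  have hmem : ∀ n, ∀ f ∈ C n, (fun x => f x - f (fun _ => 0)) ∈ C n := by
    intro n f hf
    have hu : (fun x : Fin 1 → D3 => f (fun _ => x 0)) ∈ C 1 :=
      hC.comp_mem n 1 f (fun _ x => x 0) hf (fun _ => hC.proj_mem 1 0)
    have h1 : (fun x => f (fun _ => f x)) ∈ C n := hC.comp_mem 1 n _ (fun _ => f) hu (fun _ => hf)
    have h2 : (fun x => f (fun _ => f (fun _ => f x))) ∈ C n :=
      hC.comp_mem 1 n _ (fun _ x => f (fun _ => f x)) hu (fun _ => h1)
    convert h2 using 2 with x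
    rw [diag n f hf (f fun _ => f x), diag n f hf (f x)]
    generalize f x = a
    generalize f _ = b
    revert a b; decide
  refine ⟨C', ⟨⟨?_, ?_⟩, ?_, ?_⟩, ?_, ?_⟩
  · intro n i; exact ⟨hC.proj_mem n i, rfl⟩
  · intro n m f g hf hg
    refine ⟨hC.comp_mem n m f g hf.1 (fun i => (hg i).1), ?_⟩
    simp only [(hg _).2]
    exact hf.2
  · intro n f hf; exact sd n f hf.1
  · intro n f hf c
    rw [diag n f hf.1 c, hf.2]; simp
  · refine ⟨fun n f x => f x - f (fun _ => 0), ?_, ?_⟩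
    · intro n f hf
      exact ⟨hmem n f hf, by simp⟩
    · intro n r f π hf
      rfl
  · exact MHom.of_le (fun n f hf => hf.1)

/-! Baker-Pixley -/

def NU (C : ∀ n, Set (Op n)) (k : ℕ) : Prop :=
  ∃ h ∈ C (k + 1), ∀ (x y : D3) (i : Fin (k + 1)), h (Function.update (fun _ => x) i y) = x

theorem nu_const {k : ℕ} {h : Op (k + 1)}
    (hh : ∀ (x y : D3) (i : Fin (k + 1)), h (Function.update (fun _ => x) i y) = x)
    (v : Fin (k + 1) → D3) (x : D3) (i : Fin (k + 1)) (hv : ∀ j, j ≠ i → v j = x) :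
    h v = x := by
  have : v = Function.update (fun _ => x) i (v i) := by
    ext j
    by_cases hj : j = i
    · subst hj; simp
    · simp [hj, hv j hj]
  rw [this]; exact hh _ _ _

theorem baker_pixley (hC : Good C) (hC' : Good C') {k : ℕ} (hk : NU C' k)
    (hag : C (3 ^ k) = C' (3 ^ k)) : ∀ n, ∀ f ∈ C n, f ∈ C' n := by
  classical
  intro n f hf
  have npos := hC.npos hf
  obtain ⟨h, hh, hnu⟩ := hk
  have small : ∀ a : Fin k → (Fin n → D3), ∃ g ∈ C' n, ∀ j, g (a j) = f (a j) := by
    intro a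
    have e : (Fin k → D3) ≃ Fin (3 ^ k) := Fintype.equivFinOfCardEq (by simp)
    let π : Fin n → Fin (3 ^ k) := fun i => e (fun j => a j i)
    have h1 : minor f π ∈ C (3 ^ k) :=
      hC.clone.comp_mem n _ f (fun i x => x (π i)) hf (fun i => hC.clone.proj_mem _ _)
    rw [hag] at h1
    let ρ : Fin (3 ^ k) → Fin n := fun y => if hy : ∃ i, π i = y then hy.choose else ⟨0, npos⟩
    have hρ : ∀ i, π (ρ (π i)) = π i := by
      intro i
      have hy : ∃ i', π i' = π i := ⟨i, rfl⟩
      simp only [ρ, dif_pos hy]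
      exact hy.choose_spec
    have h2 : minor (minor f π) ρ ∈ C' n :=
      hC'.clone.comp_mem _ n _ (fun i x => x (ρ i)) h1 (fun i => hC'.clone.proj_mem _ _)
    refine ⟨_, h2, ?_⟩
    intro j
    simp only [minor]
    congr 1
    ext i
    have := congrFun (e.injective (hρ i)) j
    exact congrArg Fin.val this
  have main : ∀ (m : ℕ) (Y : Finset (Fin n → D3)), Y.card = m →
      ∃ g ∈ C' n, ∀ y ∈ Y, g y = f y := by
    intro m
    induction m with
    | zero =>
      intro Y hY
      rw [Finset.card_eq_zero] at hY
      subst hY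
      exact ⟨_, hC'.clone.proj_mem n ⟨0, npos⟩, by simp⟩
    | succ m ih =>
      intro Y hY
      by_cases hmk : Y.card ≤ k
      · obtain ⟨a, ha⟩ : ∃ a : Fin k → (Fin n → D3), ∀ y ∈ Y, ∃ j, a j = y := by
          let q := Y.equivFin
          refine ⟨fun j => if hj : (j : ℕ) < Y.card then (q.symm ⟨j, hj⟩ : Fin n → D3)
            else fun _ => 0, ?_⟩
          intro y hy
          refine ⟨⟨q ⟨y, hy⟩, lt_of_lt_of_le (q ⟨y, hy⟩).2 hmk⟩, ?_⟩
          simp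
        obtain ⟨g, hg, hgj⟩ := small a
        refine ⟨g, hg, ?_⟩
        intro y hy
        obtain ⟨j, rfl⟩ := ha y hy
        exact hgj j
      · push Not at hmk
        let q := Y.equivFin
        let pt : Fin (k + 1) → (Fin n → D3) := fun j =>
          (q.symm ⟨j, lt_of_lt_of_le j.2 hmk⟩ : Fin n → D3)
        have hpt : ∀ j, pt j ∈ Y := fun j => (q.symm _).2
        have hinj : Function.Injective pt := by
          intro i j hij
          have := q.symm.injective (Subtype.ext hij)
          simpa [Fin.ext_iff] using this
        have := fun j => ih (Y.erase (pt j)) (by rw [Finset.card_erase_of_mem (hpt j), hY]; rfl)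
        choose g hg hgy using this
        refine ⟨_, hC'.clone.comp_mem _ n h g hh hg, ?_⟩
        intro y hy
        by_cases hyj : ∃ j, pt j = y
        · obtain ⟨j, rfl⟩ := hyj
          refine nu_const hnu _ _ j ?_
          intro l hl
          exact hgy l _ (Finset.mem_erase.2 ⟨fun h => hl (hinj h.symm), hy⟩)
        · push Not at hyj
          refine nu_const hnu _ _ 0 ?_
          intro l _
          exact hgy l _ (Finset.mem_erase.2 ⟨fun h => hyj l h.symm, hy⟩)
  obtain ⟨g, hg, hgy⟩ := main _ Finset.univ rfl
  have : g = f := by ext y; rw [hgy y (Finset.mem_univ _)]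
  rwa [← this]

end SelfDual


namespace SelfDual
variable {C C' : ∀ n, Set (Op n)} {I J : Type}

theorem d3c (c : D3) : c = 0 ∨ c = 1 ∨ c = 2 := by revert c; decide
theorem d3two (c : D3) : 2 * c = c + c := by revert c; decide

theorem A2.p1 : A2 C (fun x _ => x) := fun _ _ _ hp _ => hp
theorem A2.p2 : A2 C (fun _ y => y) := fun _ _ _ _ hq => hq
theorem A2.comp {g h k : D3 → D3 → D3} (hg : A2 C g) (hh : A2 C h) (hk : A2 C k) :
    A2 C (fun x y => g (h x y) (k x y)) :=
  fun n p q hp hq => hg n _ _ (hh n p q hp hq) (hk n p q hp hq)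

theorem A3.p1 : A3 C (fun x _ _ => x) := fun _ _ _ _ hp _ _ => hp
theorem A3.p2 : A3 C (fun _ y _ => y) := fun _ _ _ _ _ hq _ => hq
theorem A3.p3 : A3 C (fun _ _ z => z) := fun _ _ _ _ _ _ hr => hr
theorem A3.comp {g h k l : D3 → D3 → D3 → D3} (hg : A3 C g) (hh : A3 C h) (hk : A3 C k)
    (hl : A3 C l) : A3 C (fun x y z => g (h x y z) (k x y z) (l x y z)) :=
  fun n p q r hp hq hr => hg n _ _ _ (hh n p q r hp hq hr) (hk n p q r hp hq hr)
    (hl n p q r hp hq hr)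
theorem A2.comp3 {g : D3 → D3 → D3} {h k : D3 → D3 → D3 → D3} (hg : A2 C g) (hh : A3 C h)
    (hk : A3 C k) : A3 C (fun x y z => g (h x y z) (k x y z)) :=
  fun n p q r hp hq hr => hg n _ _ (hh n p q r hp hq hr) (hk n p q r hp hq hr)

theorem A2.sd {g : D3 → D3 → D3} (hC : Good C) (hg : A2 C g) (x y : D3) :
    g (x + 1) (y + 1) = g x y + 1 := by
  simpa using hC.asd hg.acts ![x, y]
theorem A2.idem {g : D3 → D3 → D3} (hC : Good C) (hg : A2 C g) (x : D3) : g x x = x :=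
  hC.aidem hg.acts x
theorem A3.sd {g : D3 → D3 → D3 → D3} (hC : Good C) (hg : A3 C g) (x y z : D3) :
    g (x + 1) (y + 1) (z + 1) = g x y z + 1 := by
  simpa using hC.asd hg.acts ![x, y, z]
theorem A3.idem {g : D3 → D3 → D3 → D3} (hC : Good C) (hg : A3 C g) (x : D3) : g x x x = x :=
  hC.aidem hg.acts x

def binop (a b : D3) (x y : D3) : D3 := if x = y then x else if y = x + 1 then a + x else b + x

theorem A2.eq_binop {g : D3 → D3 → D3} (hC : Good C) (hg : A2 C g) :
    g = binop (g 0 1) (g 0 2) := by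
  have i := hg.idem hC
  have s := hg.sd hC
  funext x y
  have s1 := s 0 1
  have s2 := s 0 2
  have s3 := s 1 2
  have s4 := s 1 0
  have e1 : (0:D3)+1 = 1 := rfl
  have e2 : (1:D3)+1 = 2 := rfl
  have e3 : (2:D3)+1 = 0 := rfl
  rw [e1, e2] at s1
  rw [e1, e3] at s2
  rw [e2, e3] at s3
  rw [e2, e1] at s4
  fin_cases x <;> fin_cases y <;> simp [binop, i, s1, s2, s3, s4, add_assoc, e2]

def mm (x y : D3) : D3 := 2 * x + 2 * y

def Cons (C : ∀ n, Set (Op n)) : Prop :=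
  ∀ n, ∀ f ∈ C n, ∀ x : Fin n → D3, (∀ i, x i = 0 ∨ x i = 1) → f x ≠ 2

theorem mm_of_not_cons (hC : Good C) (h : ¬ Cons C) : A2 C mm := by
  simp only [Cons] at h
  push Not at h
  obtain ⟨n, f, hf, x, hx, h2⟩ := h
  have hg : A2 C (fun a b => f (fun i => if x i = 0 then a else b)) := by
    intro m p q hp hq
    have := hC.clone.comp_mem n m f (fun i => if x i = 0 then p else q) hf
      (by intro i; split_ifs <;> assumption)
    convert this using 4
    split_ifs <;> rfl
  set g : D3 → D3 → D3 := (fun a b => f (fun i => if x i = 0 then a else b)) with hgd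
  have h01 : g 0 1 = 2 := by
    rw [hgd, ← h2]
    simp only
    congr 1
    funext i
    rcases hx i with h | h <;> simp [h]
  have key : ∀ b, A2 C (binop 2 b) → A2 C mm := by
    intro b hb
    have fin : A2 C (binop 2 2) → A2 C mm := by
      intro h
      have ht := h.comp A2.p2 (h.comp A2.p1 A2.p2)
      have hh := h.comp (h.comp A2.p1 A2.p2) A2.p1
      have hm := h.comp ht hh
      convert hm using 1
      decide
    rcases d3c b with rfl | rfl | rfl
    · apply fin
      have := hb.comp hb (hb.comp A2.p2 A2.p1)
      convert this using 1
      decide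
    · convert hb using 1
      decide
    · exact fin hb
  have := hg.eq_binop hC
  rw [h01] at this
  rw [this] at hg
  exact key _ hg

/-- affine case -/
def Aff (C : ∀ n, Set (Op n)) : Prop :=
  A2 C mm ∧ ∀ n, ∀ f ∈ C n, ∀ p q : Fin n → D3, f (fun i => p i + q i) = f p + f q

theorem sub_add_of_mm (h : A2 C mm) : A3 C (fun x y z => x - y + z) := by
  have := h.comp3 (h.comp3 A3.p1 A3.p3) A3.p2
  convert this using 1
  decide

theorem aff_le (hC : Good C) (hC' : Good C') (h : Aff C) (h' : Aff C') :
    ∀ n, ∀ f ∈ C n, f ∈ C' n := by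
  classical
  intro n f hf
  have npos := hC.npos hf
  let i0 : Fin n := ⟨0, npos⟩
  have hm := sub_add_of_mm h'.1
  have f0 : f (fun _ => 0) = 0 := hC.idem n f hf 0
  have key : ∀ S : Finset (Fin n),
      Acts C' (fun x : Fin n → D3 => x i0 + f (fun i => if i ∈ S then x i - x i0 else 0)) := by
    intro S
    induction S using Finset.induction_on with
    | empty => simpa [f0] using Acts.proj i0
    | insert a S ha ih =>
      have step : ∀ F, Acts C' F → Acts C' (fun x => F x - x i0 + x a) := fun F hF =>
        hm.app hF (Acts.proj i0) (Acts.proj a)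
      have e : ∀ x : Fin n → D3, f (fun i => if i ∈ insert a S then x i - x i0 else 0) =
          f (fun i => if i ∈ S then x i - x i0 else 0) +
            f (fun i => if i = a then x a - x i0 else 0) := by
        intro x
        rw [← h.2 n f hf]
        congr 1
        funext i
        by_cases hi : i = a
        · subst hi; simp [ha]
        · simp [hi]
      have e2 : ∀ d : D3, f (fun i => if i = a then d else 0) =
          d * f (fun i => if i = a then 1 else 0) := by
        have hz : f (fun i => if i = a then 0 else 0) = 0 := by simpa using f0
        have h2 : f (fun i => if i = a then 2 else 0) = 2 * f (fun i => if i = a then 1 else 0) := by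
          rw [d3two, ← h.2 n f hf]
          congr 1; funext i; split_ifs <;> rfl
        intro d
        rcases d3c d with rfl | rfl | rfl
        · simp [f0]
        · simp
        · exact h2
      have e' : ∀ x : Fin n → D3, f (fun i => if i ∈ insert a S then x i - x i0 else 0) =
          f (fun i => if i ∈ S then x i - x i0 else 0) +
            (x a - x i0) * f (fun i => if i = a then 1 else 0) := by
        intro x
        rw [e, e2]
      simp only [e']
      generalize f (fun i => if i = a then 1 else 0) = k
      rcases d3c k with rfl | rfl | rfl
      · have e3 : ∀ d e z : D3, d + (e + z * 0) = d + e := by decide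
        simpa only [e3] using ih
      · convert step _ ih using 2
        generalize f _ = c
        rename_i x
        generalize x i0 = b
        generalize x a = d
        revert b c d
        clear * -
        decide
      · convert step _ (step _ ih) using 2
        generalize f _ = c
        rename_i x
        generalize x i0 = b
        generalize x a = d
        revert b c d
        clear * -
        decide
  have := key Finset.univ
  simp only [Finset.mem_univ, if_true] at this
  have hh := hC'.mem this
  convert hh using 1
  funext x
  have := h.2 n f hf (fun _ => x i0) (fun i => x i - x i0)
  simp only [add_sub_cancel] at this
  rw [this, hC.idem n f hf]

/-- non-affine -/
def Phi (C : ∀ n, Set (Op n)) (ψ : D3 → D3 → D3) : Prop :=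
  A3 C (fun x y z => x + ψ (y - x) (z - x))

theorem Phi.comp {ψ α β : D3 → D3 → D3} (h : Phi C ψ) (ha : Phi C α) (hb : Phi C β) :
    Phi C (fun u v => ψ (α u v) (β u v)) := by
  have := A3.comp h A3.p1 ha hb
  simpa [Phi] using this

theorem Phi.add (hm : A2 C mm) {α β : D3 → D3 → D3} (ha : Phi C α) (hb : Phi C β) :
    Phi C (fun u v => α u v + β u v) := by
  have := (sub_add_of_mm hm).comp ha A3.p1 hb
  unfold Phi
  convert this using 4
  simp only
  generalize α _ _ = a
  generalize β _ _ = b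
  rename_i x _ _
  generalize x = x
  clear * -
  revert x a b
  decide

theorem Phi.u : Phi C (fun u _ => u) := by simpa [Phi] using A3.p2
theorem Phi.v : Phi C (fun _ v => v) := by simpa [Phi] using A3.p3
theorem Phi.z : Phi C (fun _ _ => 0) := by simpa [Phi] using A3.p1

theorem nu2_of_maj {g : D3 → D3 → D3 → D3} (hC : Good C) (hg : A3 C g)
    (h : ∀ x y, g x x y = x ∧ g x y x = x ∧ g y x x = x) : NU C 2 := by
  refine ⟨_, hC.mem hg.acts, ?_⟩
  intro x y i
  fin_cases i
  · simpa [Function.update] using (h x y).2.2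
  · simpa [Function.update] using (h x y).2.1
  · simpa [Function.update] using (h x y).1

theorem nu_of_phi (hC : Good C) (h : Phi C (fun u v => u * u * v)) : NU C 2 :=
  nu2_of_maj hC h (by decide)

theorem Phi.two (hm : A2 C mm) {α : D3 → D3 → D3} (ha : Phi C α) :
    Phi C (fun u v => 2 * α u v) := by
  simpa [d3two] using ha.add hm ha

theorem Phi.mul (hm : A2 C mm) {α : D3 → D3 → D3} (ha : Phi C α) (k : D3) :
    Phi C (fun u v => k * α u v) := by
  rcases d3c k with rfl | rfl | rfl
  · simpa using Phi.z
  · simpa using ha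
  · exact ha.two hm

theorem Phi.cancel (hm : A2 C mm) {α : D3 → D3 → D3} {k : D3} (hk : k ≠ 0)
    (ha : Phi C (fun u v => k * α u v)) : Phi C α := by
  have := ha.mul hm k
  convert this using 3 with u v
  generalize α u v = a
  clear * - hk
  revert k a; decide

theorem nu_of_square (hC : Good C) (hm : A2 C mm) {r : D3 → D3} (h : Phi C (fun u _ => r u))
    (hr : r 1 + r 2 ≠ 0) (h0 : r 0 = 0) : NU C 2 := by
  have h2 := h.add hm (h.comp (Phi.u.two hm) Phi.v)
  have h3 : Phi C (fun u _ => u * u) := by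
    refine Phi.cancel hm hr ?_
    convert h2 using 3 with u v
    rcases d3c u with rfl | rfl | rfl
    · simp [h0]
    · simp
    · rw [show (2:D3)*2 = 1 from rfl]; simp [add_comm]
  -- polarize
  have huv : Phi C (fun u v => u * v) := by
    have a := (h3.comp (Phi.u.add hm Phi.v) Phi.v).add hm
      ((h3.two hm).add hm ((h3.comp Phi.v Phi.v).two hm))
    have b := a.two hm
    convert b using 1
    decide
  have := huv.comp h3 Phi.v
  exact nu_of_phi hC this

theorem nu_of_not_aff (hC : Good C) (hm : A2 C mm) (h : ¬ Aff C) : NU C 2 := by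
  have h2 : ¬ ∀ n, ∀ f ∈ C n, ∀ p q : Fin n → D3, f (fun i => p i + q i) = f p + f q :=
    fun h' => h ⟨hm, h'⟩
  push Not at h2
  obtain ⟨n, f, hf, p, q, hpq⟩ := h2
  have hf0 : f (fun _ => 0) = 0 := hC.idem n f hf 0
  -- psi
  have hψ : Phi C (fun u v => f (fun i => u * p i + v * q i)) := by
    intro m x y z hx hy hz
    have hlin : ∀ i, (fun t => x t + (((y t) - x t) * p i + (z t - x t) * q i)) ∈ C m := by
      intro i
      have : Phi C (fun u v => p i * u + q i * v) := (Phi.u.mul hm _).add hm (Phi.v.mul hm _)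
      have := this m x y z hx hy hz
      simpa [mul_comm] using this
    have := hC.clone.comp_mem n m f _ hf hlin
    convert this using 2 with t
    have := hC.asdc (hC.acts hf) (fun i => ((y t) - x t) * p i + (z t - x t) * q i) (x t)
    simp only [add_comm (x t)]
    exact this.symm
  set ψ : D3 → D3 → D3 := fun u v => f (fun i => u * p i + v * q i) with hψd
  have ψ0 : ψ 0 0 = 0 := by simp [hψd, hf0]
  have ψ11 : ψ 1 1 ≠ ψ 1 0 + ψ 0 1 := by simpa [hψd] using hpq
  by_cases hodd : ∀ a b : D3, ψ a b + ψ (2 * a) (2 * b) = 0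
  · -- odd case
    have h10 := hψ.comp Phi.u Phi.z
    have h01 := hψ.comp Phi.z Phi.v
    have h3 := hψ.add hm ((h10.two hm).add hm (h01.two hm))
    set χ : D3 → D3 → D3 := fun u v => ψ u v + (2 * ψ u 0 + 2 * ψ 0 v) with hχ
    have h4 := h3.comp Phi.u (Phi.v.two hm)
    have h5 := h3.add hm h4
    have h6 := h3.add hm (h4.two hm)
    have o1 := hodd 1 0
    have o2 := hodd 0 1
    have o3 := hodd 1 1
    have o4 := hodd 1 2
    rw [show (2:D3)*1=2 from rfl] at o1 o2 o3 o4
    rw [show (2:D3)*0=0 from rfl] at o1 o2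
    rw [show (2:D3)*2=1 from rfl] at o4
    have c1 : χ 1 1 + χ 1 2 ≠ 0 ∨ χ 1 1 + 2 * χ 1 2 ≠ 0 := by
      simp only [hχ]
      clear * - ψ11 o1 o2 o3 o4 ψ0
      revert ψ11 o1 o2 o3 o4 ψ0
      generalize ψ 0 0 = a0
      generalize ψ 0 1 = a1
      generalize ψ 0 2 = a2
      generalize ψ 1 0 = a3
      generalize ψ 2 0 = a4
      generalize ψ 1 1 = a5
      generalize ψ 1 2 = a6
      generalize ψ 2 1 = a7
      generalize ψ 2 2 = a8
      intro b6 b1 b2 b3 b4 b5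
      subst b6
      obtain rfl : a4 = - a3 := (neg_eq_of_add_eq_zero_right b2).symm
      obtain rfl : a2 = - a1 := (neg_eq_of_add_eq_zero_right b3).symm
      clear b2 b3 b4 b5
      revert a1 a3 a5 a6
      decide
    have tab : ∀ u v, χ u v = (χ 1 1 + χ 1 2) * 2 * (u * v * v) +
       (χ 1 1 + 2 * χ 1 2) * 2 * (u * u * v) := by
      simp only [hχ]
      clear * - o1 o2 o3 o4 ψ0
      intro u v
      have e4 := (neg_eq_of_add_eq_zero_right o1).symm
      have e2 := (neg_eq_of_add_eq_zero_right o2).symm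
      have e8 := (neg_eq_of_add_eq_zero_right o3).symm
      have e7 := (neg_eq_of_add_eq_zero_right o4).symm
      rcases d3c u with rfl | rfl | rfl <;>
      rcases d3c v with rfl | rfl | rfl <;>
      simp only [e4, e2, e8, e7, ψ0] <;>
      generalize ψ 0 1 = a1 <;>
      generalize ψ 1 0 = a3 <;>
      generalize ψ 1 1 = a5 <;>
      generalize ψ 1 2 = a6 <;>
      revert a1 a3 a5 a6 <;> decide
    rcases c1 with c1 | c1
    · have : Phi C (fun u v => u * v * v) := by
        refine Phi.cancel hm c1 ?_
        convert h5 using 3 with u v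
        rw [tab u v, tab u (2 * v)]
        generalize (χ 1 1 + χ 1 2) = k
        generalize (χ 1 1 + 2 * χ 1 2) = l
        revert u v k l; decide
      have := this.comp Phi.v Phi.u
      refine nu_of_phi hC ?_
      convert this using 3 with u v
      clear * -
      revert u v; decide
    · have : Phi C (fun u v => u * u * v) := by
        refine Phi.cancel hm c1 ?_
        convert h6 using 3 with u v
        rw [tab u v, tab u (2 * v)]
        generalize (χ 1 1 + χ 1 2) = k
        generalize (χ 1 1 + 2 * χ 1 2) = l
        revert u v k l; decide
      exact nu_of_phi hC this
  · push Not at hodd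
    obtain ⟨a, b, hab⟩ := hodd
    have := hψ.comp (Phi.u.mul hm a) (Phi.u.mul hm b)
    refine nu_of_square hC hm (r := fun u => ψ (a * u) (b * u)) this ?_ ?_
    · simpa [mul_comm] using hab
    · simpa using ψ0

end SelfDual


namespace SelfDual
variable {C C' : ∀ n, Set (Op n)} {I J : Type}

def tw (c : D3) (s : I → Bool) : I → D3 := fun i => if s i then c + 1 else c
def bf (f : (I → D3) → D3) (s : I → Bool) : Bool := decide (f (tw 0 s) = 1)

/-- `h` restricted to two-element subsets is `B` -/
def Rep (h : (I → D3) → D3) (B : (I → Bool) → Bool) : Prop :=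
  ∀ c s, h (tw c s) = if B s then c + 1 else c

theorem rep_bf [Finite I] (hC : Good C) (hc : Cons C) {f : (I → D3) → D3} (hf : Acts C f) :
    Rep f (bf f) := by
  intro c s
  have h1 : f (tw c s) = f (tw 0 s) + c := by
    rw [← hC.asdc hf]
    congr 1
    funext i
    simp only [tw]
    split_ifs
    · rw [zero_add, add_comm]
    · rw [zero_add]
  have h2 : f (tw 0 s) ≠ 2 := by
    obtain ⟨n, e, h⟩ := hC.fin hf
    have := hc n _ h (tw 0 (fun j => s (e.symm j))) (by
      intro i; simp only [tw]; split_ifs <;> simp)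
    simp only [tw, Equiv.symm_apply_apply] at this
    exact this
  rw [h1]
  simp only [bf, decide_eq_true_eq]
  rcases d3c (f (tw 0 s)) with h | h | h
  · simp [h]
  · simp [h, add_comm]
  · exact absurd h h2

theorem Rep.bf_eq {h : (I → D3) → D3} {B : (I → Bool) → Bool} (hr : Rep h B) : bf h = B := by
  funext s
  have := hr 0 s
  simp only [bf, this]
  cases B s <;> simp

theorem Rep.proj (i : I) : Rep (fun x => x i) (fun s => s i) := fun _ _ => rfl

theorem tw_of {c : D3} {y : I → D3} (h : ∀ i, y i = c ∨ y i = c + 1) :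
    y = tw c (fun i => decide (y i = c + 1)) := by
  funext i
  have : c ≠ c + 1 := by clear h; revert c; decide
  rcases h i with h | h
  · simp [tw, h]
  · simp [tw, h]

theorem tw_or_surj (y : I → D3) : (∃ c s, y = tw c s) ∨ ∀ c, ∃ i, y i = c := by
  by_cases h : ∀ c, ∃ i, y i = c
  · exact Or.inr h
  · left
    push Not at h
    obtain ⟨c, hc⟩ := h
    refine ⟨c + 1, _, tw_of ?_⟩
    intro i
    have := hc i
    revert this
    generalize y i = z
    clear hc
    revert z c
    decide

theorem A2.sub (hC : Good C) {n : ℕ} {f : Op n} (hf : f ∈ C n) {h : Fin n → D3 → D3 → D3}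
    (hh : ∀ i, A2 C (h i)) : A2 C (fun x y => f (fun i => h i x y)) :=
  fun m p q hp hq => hC.clone.comp_mem n m f _ hf (fun i => hh i m p q hp hq)

theorem A3.sub (hC : Good C) {n : ℕ} {f : Op n} (hf : f ∈ C n) {h : Fin n → D3 → D3 → D3 → D3}
    (hh : ∀ i, A3 C (h i)) : A3 C (fun x y z => f (fun i => h i x y z)) :=
  fun m p q r hp hq hr => hC.clone.comp_mem n m f _ hf (fun i => hh i m p q r hp hq hr)

theorem A2.ite {g h : D3 → D3 → D3} (b : Prop) [Decidable b] (hg : A2 C g) (hh : A2 C h) :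
    A2 C (fun x y => if b then g x y else h x y) := by
  split_ifs <;> assumption

theorem A3.ite {g h : D3 → D3 → D3 → D3} (b : Prop) [Decidable b] (hg : A3 C g) (hh : A3 C h) :
    A3 C (fun x y z => if b then g x y z else h x y z) := by
  split_ifs <;> assumption

def Sel (C : ∀ n, Set (Op n)) : Prop :=
  ∀ g, A2 C g → g = (fun x _ => x) ∨ g = (fun _ y => y)

def tm (x y : D3) : D3 := if x = y then x else if y = x + 1 then x else y
def tj (x y : D3) : D3 := if x = y then x else if y = x + 1 then y else x

theorem A2.cons {g : D3 → D3 → D3} (hC : Good C) (hc : Cons C) (hg : A2 C g) :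
    (g 0 1 = 0 ∨ g 0 1 = 1) ∧ (g 0 2 = 0 ∨ g 0 2 = 2) := by
  have h1 := hc 2 _ (hC.mem hg.acts) ![0, 1] (by intro i; fin_cases i <;> simp)
  have h2 := hc 2 _ (hC.mem hg.acts) ![1, 0] (by intro i; fin_cases i <;> simp)
  have h3 := hg.sd hC 0 2
  simp at h1 h2 h3
  rw [h3] at h2
  revert h1 h2
  generalize g 0 1 = a
  generalize g 0 2 = b
  revert a b
  decide

theorem sel_or (hC : Good C) (hc : Cons C) : A2 C tm ∨ A2 C tj ∨ Sel C := by
  by_cases h : Sel C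
  · exact Or.inr (Or.inr h)
  · simp only [Sel] at h
    push Not at h
    obtain ⟨g, hg, h1, h2⟩ := h
    have hb := hg.eq_binop hC
    obtain ⟨c1, c2⟩ := hg.cons hC hc
    rcases c1 with c1 | c1 <;> rcases c2 with c2 | c2 <;> rw [c1, c2] at hb
    · exact absurd (by rw [hb]; decide) h1
    · left
      rw [hb] at hg
      convert hg using 1
      decide
    · right; left
      rw [hb] at hg
      convert hg using 1
      decide
    · exact absurd (by rw [hb]; decide) h2

def IsMin (g : D3 → D3 → D3 → D3) : Prop := ∀ x y, g x x y = y ∧ g x y x = y ∧ g y x x = y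
def Pr (g : D3 → D3 → D3 → D3) : Prop :=
  (∀ x y, g x x y = x ∧ g x y x = x ∧ g y x x = y) ∨
  (∀ x y, g x x y = x ∧ g x y x = y ∧ g y x x = x) ∨
  (∀ x y, g x x y = y ∧ g x y x = x ∧ g y x x = x)

theorem sel_tri (hC : Good C) (hs : Sel C) (hn : ¬ NU C 2) (g : D3 → D3 → D3 → D3)
    (hg : A3 C g) : IsMin g ∨ Pr g := by
  have hx : ∀ (a b c : D3 → D3 → D3), A2 C a → A2 C b → A2 C c →
      A2 C (fun x y => g (a x y) (b x y) (c x y)) := fun a b c ha hb hc n p q hp hq =>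
        hg n _ _ _ (ha n p q hp hq) (hb n p q hp hq) (hc n p q hp hq)
  have cv : ∀ k : D3 → D3 → D3, A2 C k → (∀ x y, k x y = x) ∨ (∀ x y, k x y = y) := by
    intro k hk
    rcases hs k hk with rfl | rfl
    · left; intro _ _; rfl
    · right; intro _ _; rfl
  rcases cv _ (hx _ _ _ A2.p1 A2.p1 A2.p2) with e1 | e1 <;>
  rcases cv _ (hx _ _ _ A2.p1 A2.p2 A2.p1) with e2 | e2 <;>
  rcases cv _ (hx _ _ _ A2.p2 A2.p1 A2.p1) with e3 | e3
  · exact absurd (nu2_of_maj hC hg fun x y => ⟨e1 x y, e2 x y, e3 x y⟩) hn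
  · exact Or.inr (Or.inl fun x y => ⟨e1 x y, e2 x y, e3 x y⟩)
  · exact Or.inr (Or.inr (Or.inl fun x y => ⟨e1 x y, e2 x y, e3 x y⟩))
  · refine absurd (nu2_of_maj hC (hg.comp A3.p1 A3.p2 hg) fun x y => ⟨?_, ?_, ?_⟩) hn <;>
      simp only [e1, e2, e3]
  · exact Or.inr (Or.inr (Or.inr fun x y => ⟨e1 x y, e2 x y, e3 x y⟩))
  · refine absurd (nu2_of_maj hC (hg.comp A3.p1 hg A3.p3) fun x y => ⟨?_, ?_, ?_⟩) hn <;>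
      simp only [e1, e2, e3]
  · refine absurd (nu2_of_maj hC (hg.comp hg A3.p2 A3.p3) fun x y => ⟨?_, ?_, ?_⟩) hn <;>
      simp only [e1, e2, e3]
  · exact Or.inl fun x y => ⟨e1 x y, e2 x y, e3 x y⟩

def ClsProj (C : ∀ n, Set (Op n)) : Prop := Cons C ∧ ∀ g, A3 C g → Pr g
def ClsMin (C : ∀ n, Set (Op n)) : Prop :=
  Cons C ∧ (∃ p, A3 C p ∧ IsMin p) ∧ ∀ g, A3 C g → IsMin g ∨ Pr g

theorem bf_minor {n r : ℕ} (f : Op n) (π : Fin n → Fin r) (s : Fin r → Bool) :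
    bf (minor f π) s = bf f (fun i => s (π i)) := rfl

/-- additivity -/
theorem bf_add (hC : Good C) (hc : Cons C) (h : ∀ g, A3 C g → IsMin g ∨ Pr g) {n : ℕ} {f : Op n}
    (hf : f ∈ C n) (s s' : Fin n → Bool) (hd : ∀ i, s i = true → s' i = false) :
    bf f (fun i => s i || s' i) = (bf f s ^^ bf f s') := by
  have hg := A3.sub hC hf (h := fun i x y z => if s i then x else if s' i then y else z)
    (fun i => A3.ite _ A3.p1 (A3.ite _ A3.p2 A3.p3))
  have e1 : (fun i => if s i then (1:D3) else if s' i then 0 else 0) = tw 0 s := by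
    funext i; simp [tw]
  have e2 : (fun i => if s i then (0:D3) else if s' i then 1 else 0) = tw 0 s' := by
    funext i; simp only [tw]
    cases h : s i
    · simp
    · simp [hd i h]
  have e3 : (fun i => if s i then (1:D3) else if s' i then 1 else 0)
      = tw 0 (fun i => s i || s' i) := by
    funext i; simp only [tw]
    by_cases h : s i = true <;> simp [h]
  have hh := h _ hg
  simp only [IsMin, Pr] at hh
  simp only [bf, ← e1, ← e2, ← e3]
  rcases hh with hh | hh | hh | hh
  · rw [(hh 0 1).2.2, (hh 0 1).2.1, (hh 1 0).1]; rfl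
  · rw [(hh 0 1).2.2, (hh 0 1).2.1, (hh 1 0).1]; rfl
  · rw [(hh 0 1).2.2, (hh 0 1).2.1, (hh 1 0).1]; rfl
  · rw [(hh 0 1).2.2, (hh 0 1).2.1, (hh 1 0).1]; rfl

theorem bf_or (hC : Good C) (h : ∀ g, A3 C g → Pr g) {n : ℕ} {f : Op n}
    (hf : f ∈ C n) (s s' : Fin n → Bool) (hd : ∀ i, s i = true → s' i = false) :
    ¬ (bf f s = true ∧ bf f s' = true) := by
  have hg := A3.sub hC hf (h := fun i x y z => if s i then x else if s' i then y else z)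
    (fun i => A3.ite _ A3.p1 (A3.ite _ A3.p2 A3.p3))
  have e1 : (fun i => if s i then (1:D3) else if s' i then 0 else 0) = tw 0 s := by
    funext i; simp [tw]
  have e2 : (fun i => if s i then (0:D3) else if s' i then 1 else 0) = tw 0 s' := by
    funext i; simp only [tw]
    cases h : s i
    · simp
    · simp [hd i h]
  have hh := h _ hg
  simp only [Pr] at hh
  simp only [bf, ← e1, ← e2]
  rcases hh with hh | hh | hh <;>
  · rw [(hh 0 1).2.2, (hh 0 1).2.1]; simp

theorem bf_univ (hC : Good C) {n : ℕ} {f : Op n} (hf : f ∈ C n) : bf f (fun _ => true) = true := by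
  have := hC.idem n f hf 1
  have e : tw 0 (fun _ : Fin n => true) = fun _ => 1 := rfl
  rw [bf, e, this]; rfl
theorem bf_empty (hC : Good C) {n : ℕ} {f : Op n} (hf : f ∈ C n) :
    bf f (fun _ => false) = false := by
  have := hC.idem n f hf 0
  have e : tw 0 (fun _ : Fin n => false) = fun _ => 0 := rfl
  rw [bf, e, this]; rfl

theorem proj_hom (hC : Good C) (hC' : Good C') (h : ClsProj C) : MHom C C' := by
  classical
  refine ⟨fun n f a => if bf f (fun i => decide (a i = 0)) then 0 else
    if bf f (fun i => decide (a i = 1)) then 1 else 2, ?_, fun _ _ _ _ _ => rfl⟩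
  intro n f hf
  have add := fun s s' hd => bf_add hC h.1 (fun g hg => Or.inr (h.2 g hg)) hf s s' hd
  obtain ⟨i, hi⟩ : ∃ i, bf f (fun j => decide (j = i)) = true := by
    by_contra hcon
    push Not at hcon
    have : ∀ S : Finset (Fin n), bf f (fun j => decide (j ∈ S)) = false := by
      intro S
      induction S using Finset.induction_on with
      | empty => simpa using bf_empty hC hf
      | insert a S ha ih =>
        have := add (fun j => decide (j = a)) (fun j => decide (j ∈ S)) (by
          intro i hi; simp at hi ⊢; subst hi; exact ha)
        rw [ih, Bool.eq_false_iff.2 (hcon a)] at this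
        simpa using this
    have h1 := this Finset.univ
    have h2 := bf_univ hC hf
    simp [h2] at h1
  have key : ∀ s, bf f s = s i := by
    intro s
    cases hs : s i
    · rw [Bool.eq_false_iff]
      intro hcon
      exact bf_or hC h.2 hf (fun j => decide (j = i)) s (by
        intro j hj; simp at hj; subst hj; exact hs) ⟨hi, hcon⟩
    · have := add (fun j => decide (j = i)) (fun j => s j && !decide (j = i)) (by
        intro j hj; simp at hj; subst hj; simp)
      have e : (fun j => decide (j = i) || (s j && !decide (j = i))) = s := by
        funext j
        by_cases hj : j = i
        · subst hj; simp [hs]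
        · simp [hj]
      rw [e] at this
      rw [this, hi]
      have h3 := bf_or hC h.2 hf (fun j => decide (j = i)) (fun j => s j && !decide (j = i)) (by
        intro j hj; simp at hj; subst hj; simp)
      simp only [hi, true_and, Bool.not_eq_true] at h3
      rw [h3]; rfl
  have : (fun a : Fin n → D3 => if bf f (fun i => decide (a i = 0)) then (0:D3) else
    if bf f (fun i => decide (a i = 1)) then 1 else 2) = fun a => a i := by
    funext a
    rw [key, key]
    rcases d3c (a i) with h | h | h <;> simp [h]
  simp only
  rw [this]
  exact hC'.clone.proj_mem n i

end SelfDual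


namespace SelfDual
variable {C C' : ∀ n, Set (Op n)} {I J : Type}

def qq (x y z : D3) : D3 := if x ≠ y ∧ x ≠ z ∧ y ≠ z then y else x

def triop (a b x y z : D3) : D3 :=
  if x = y then z else if x = z then y else if y = z then x else
    if y = x + 1 then x + a else x + b

theorem min_eq_triop (hC : Good C) {p : D3 → D3 → D3 → D3} (hp : A3 C p) (hm : IsMin p) :
    p = triop (p 0 1 2) (p 0 2 1) := by
  funext x y z
  simp only [triop]
  split_ifs with h1 h2 h3 h4
  · subst h1; exact (hm x z).1
  · subst h2; exact (hm x y).2.1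
  · subst h3; exact (hm y x).2.2
  · subst h4
    obtain rfl : z = x + 2 := by revert x z; decide
    have := hC.asdc hp.acts ![0, 1, 2] x
    simp at this
    rw [add_comm 1 x, add_comm 2 x] at this
    rw [this, add_comm]
  · obtain rfl : y = x + 2 := by clear h2 h3; revert x y; decide
    obtain rfl : z = x + 1 := by revert x z; decide
    have := hC.asdc hp.acts ![0, 2, 1] x
    simp at this
    rw [add_comm 1 x, add_comm 2 x] at this
    rw [this, add_comm]

theorem qq_of_min (hC : Good C) {p : D3 → D3 → D3 → D3} (hp : A3 C p) (hm : IsMin p) :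
    A3 C qq := by
  have hb := min_eq_triop hC hp hm
  have k0 : A3 C (triop 0 0) → A3 C qq := by
    intro h
    have := h.comp (h.comp A3.p3 A3.p2 A3.p1) A3.p3 A3.p2
    convert this using 1
    decide
  have k1 : A3 C (triop 1 1) → A3 C qq := by
    intro h
    have hs := h.comp h A3.p2 A3.p3
    have := hs.comp hs A3.p1 A3.p2
    convert this using 1
    decide
  have k2 : A3 C (triop 2 2) → A3 C qq := by
    intro h
    have hs := h.comp h A3.p2 A3.p3
    have := hs.comp hs A3.p1 A3.p2
    convert this using 1
    decide
  have key : ∀ a b, A3 C (triop a b) → A3 C qq := by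
    intro a b h
    have hy := h.comp A3.p2 A3.p1 A3.p3
    have hz := h.comp A3.p3 A3.p2 A3.p1
    rcases d3c a with rfl | rfl | rfl <;> rcases d3c b with rfl | rfl | rfl
    · exact k0 h
    · apply k2; convert hy using 1; decide
    · apply k1; convert hz using 1; decide
    · apply k2; convert hz using 1; decide
    · exact k1 h
    · apply k0; convert hy using 1; decide
    · apply k1; convert hy using 1; decide
    · apply k0; convert hz using 1; decide
    · exact k2 h
  rw [hb] at hp
  exact key _ _ hp

theorem qq_d {x y z : D3} (h1 : x ≠ y) (h2 : x ≠ z) (h3 : y ≠ z) : qq x y z = y := by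
  simp [qq, h1, h2, h3]
theorem qq_xy (x z : D3) : qq x x z = x := by simp [qq]
theorem qq_xz (x y : D3) : qq x y x = x := by simp [qq]
theorem qq_yz (x y : D3) : qq x y y = x := by simp [qq]

def Sim (y a : I → D3) : Prop := ∀ k l, y k = y l ↔ a k = a l

theorem sim_ne {y a : I → D3} (h : Sim y a) {i j : I} (hij : a i ≠ a j) : y i ≠ y j :=
  fun e => hij ((h i j).1 e)

theorem hBase (hq : A3 C qq) {a : I → D3} {i j k : I} (hij : a i ≠ a j) (hik : a i ≠ a k)
    (hjk : a j ≠ a k) (y : I → D3) (hy : ¬ Sim y a) :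
    ∃ r u : (I → D3) → D3, Acts C r ∧ Acts C u ∧
      (∀ z, Sim z a → r z = z j ∧ u z = z k) ∧ r y = y i ∧ u y = y i := by
  have Q : ∀ r s t : (I → D3) → D3, Acts C r → Acts C s → Acts C t →
    Acts C (fun x => qq (r x) (s x) (t x)) := fun r s t hr hs ht => hq.app hr hs ht
  have P : ∀ i, Acts C (fun x : I → D3 => x i) := fun i => Acts.proj i
  by_cases hd : y i ≠ y j ∧ y i ≠ y k ∧ y j ≠ y k
  · obtain ⟨d1, d2, d3⟩ := hd
    have : ∃ l, (a l = a j ∧ y l ≠ y j) ∨ (a l = a k ∧ y l ≠ y k) ∨ (a l = a i ∧ y l ≠ y i) := by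
      by_contra hcon
      push Not at hcon
      apply hy
      intro l m
      have hl := hcon l
      have hm := hcon m
      have al : a l = a i ∨ a l = a j ∨ a l = a k := by
        clear * - hij hik hjk
        revert hij hik hjk
        generalize a l = x; generalize a i = p; generalize a j = q; generalize a k = r
        revert x p q r; decide
      have am : a m = a i ∨ a m = a j ∨ a m = a k := by
        clear * - hij hik hjk
        revert hij hik hjk
        generalize a m = x; generalize a i = p; generalize a j = q; generalize a k = r
        revert x p q r; decide
      rcases al with al | al | al <;> rcases am with am | am | am
      · rw [al, am, hl.2.2 al, hm.2.2 am]; simp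
      · rw [al, am, hl.2.2 al, hm.1 am]; simp [hij, d1]
      · rw [al, am, hl.2.2 al, hm.2.1 am]; simp [hik, d2]
      · rw [al, am, hl.1 al, hm.2.2 am]; simp [hij.symm, d1.symm]
      · rw [al, am, hl.1 al, hm.1 am]; simp
      · rw [al, am, hl.1 al, hm.2.1 am]; simp [hjk, d3]
      · rw [al, am, hl.2.1 al, hm.2.2 am]; simp [hik.symm, d2.symm]
      · rw [al, am, hl.2.1 al, hm.1 am]; simp [hjk.symm, d3.symm]
      · rw [al, am, hl.2.1 al, hm.2.1 am]; simp
    obtain ⟨l, hl⟩ := this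
    have yl : y l = y i ∨ y l = y j ∨ y l = y k := by
      clear * - d1 d2 d3
      revert d1 d2 d3
      generalize y l = x; generalize y i = p; generalize y j = q; generalize y k = r
      revert x p q r; decide
    rcases hl with ⟨h1, h2⟩ | ⟨h1, h2⟩ | ⟨h1, h2⟩
    · refine ⟨_, _, Q _ _ _ (P i) (P l) (P k), Q _ _ _ (P i) (P k) (P l), ?_, ?_, ?_⟩
      · intro z hz
        have e : z l = z j := (hz l j).2 h1
        simp only [e]
        exact ⟨qq_d (sim_ne hz hij) (sim_ne hz hik) (sim_ne hz hjk),
          qq_d (sim_ne hz hik) (sim_ne hz hij) (sim_ne hz hjk.symm)⟩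
      · rcases yl with e | e | e
        · simp only [e]; exact qq_xy _ _
        · exact absurd e h2
        · simp only [e]; exact qq_yz _ _
      · rcases yl with e | e | e
        · simp only [e]; exact qq_xz _ _
        · exact absurd e h2
        · simp only [e]; exact qq_yz _ _
    · refine ⟨_, _, Q _ _ _ (P i) (P j) (P l), Q _ _ _ (P i) (P l) (P j), ?_, ?_, ?_⟩
      · intro z hz
        have e : z l = z k := (hz l k).2 h1
        simp only [e]
        exact ⟨qq_d (sim_ne hz hij) (sim_ne hz hik) (sim_ne hz hjk),
          qq_d (sim_ne hz hik) (sim_ne hz hij) (sim_ne hz hjk.symm)⟩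
      · rcases yl with e | e | e
        · simp only [e]; exact qq_xz _ _
        · simp only [e]; exact qq_yz _ _
        · exact absurd e h2
      · rcases yl with e | e | e
        · simp only [e]; exact qq_xy _ _
        · simp only [e]; exact qq_yz _ _
        · exact absurd e h2
    · rcases yl with e | e | e
      · exact absurd e h2
      · have W := Q _ _ _ (P l) (P k) (P j)
        refine ⟨_, _, Q _ _ _ (P i) (P j) W, Q _ _ _ (P i) W (P j), ?_, ?_, ?_⟩
        · intro z hz
          have e : z l = z i := (hz l i).2 h1
          simp only [e]
          rw [qq_d (sim_ne hz hik) (sim_ne hz hij) (sim_ne hz hjk.symm)]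
          exact ⟨qq_d (sim_ne hz hij) (sim_ne hz hik) (sim_ne hz hjk),
            qq_d (sim_ne hz hik) (sim_ne hz hij) (sim_ne hz hjk.symm)⟩
        · simp only [e, qq_xz, qq_yz]
        · simp only [e, qq_xz, qq_yz]
      · have W := Q _ _ _ (P l) (P j) (P k)
        refine ⟨_, _, Q _ _ _ (P i) W (P k), Q _ _ _ (P i) (P k) W, ?_, ?_, ?_⟩
        · intro z hz
          have e : z l = z i := (hz l i).2 h1
          simp only [e]
          rw [qq_d (sim_ne hz hij) (sim_ne hz hik) (sim_ne hz hjk)]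
          exact ⟨qq_d (sim_ne hz hij) (sim_ne hz hik) (sim_ne hz hjk),
            qq_d (sim_ne hz hik) (sim_ne hz hij) (sim_ne hz hjk.symm)⟩
        · simp only [e, qq_xz, qq_yz]
        · simp only [e, qq_xz, qq_yz]
  · refine ⟨_, _, Q _ _ _ (P i) (P j) (P k), Q _ _ _ (P i) (P k) (P j), ?_, ?_, ?_⟩
    · intro z hz
      exact ⟨qq_d (sim_ne hz hij) (sim_ne hz hik) (sim_ne hz hjk),
          qq_d (sim_ne hz hik) (sim_ne hz hij) (sim_ne hz hjk.symm)⟩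
    · simp only [qq, if_neg hd]
    · have : ¬ (y i ≠ y k ∧ y i ≠ y j ∧ y k ≠ y j) := fun h => hd ⟨h.2.1, h.1, h.2.2.symm⟩
      simp only [qq, if_neg this]

theorem lemmaH [Finite I] (hq : A3 C qq) {a : I → D3} {i j k : I} (hij : a i ≠ a j)
    (hik : a i ≠ a k) (hjk : a j ≠ a k) :
    ∃ h : (I → D3) → D3, Acts C h ∧ (∀ z, Sim z a → h z = z j) ∧ ∀ z, ¬ Sim z a → h z = z i := by
  classical
  have : Fintype I := Fintype.ofFinite I
  have main : ∀ P : Finset (I → D3), (∀ y ∈ P, ¬ Sim y a) →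
      ∃ r u : (I → D3) → D3, Acts C r ∧ Acts C u ∧
      (∀ z, Sim z a → r z = z j ∧ u z = z k) ∧ ∀ y ∈ P, r y = y i ∧ u y = y i := by
    intro P
    induction P using Finset.induction_on with
    | empty =>
      intro _
      exact ⟨_, _, Acts.proj j, Acts.proj k, fun z _ => ⟨rfl, rfl⟩, by simp⟩
    | insert y P _ ih =>
      intro hP
      obtain ⟨r, u, hr, hu, h1, h2⟩ := ih (fun y hy => hP y (Finset.mem_insert_of_mem hy))
      obtain ⟨r', u', hr', hu', h1', h2', h3'⟩ :=
        hBase hq hij hik hjk y (hP y (Finset.mem_insert_self _ _))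
      refine ⟨_, _, hq.app (Acts.proj i) hr hu', hq.app (Acts.proj i) hu' hr, ?_, ?_⟩
      · intro z hz
        simp only [(h1 z hz).1, (h1' z hz).2]
        exact ⟨qq_d (sim_ne hz hij) (sim_ne hz hik) (sim_ne hz hjk),
            qq_d (sim_ne hz hik) (sim_ne hz hij) (sim_ne hz hjk.symm)⟩
      · intro x hx
        rcases Finset.mem_insert.1 hx with rfl | hx
        · simp only [h3', qq_xy, qq_xz, and_self]
        · simp only [(h2 x hx).1, qq_xy, qq_xz, and_self]
  obtain ⟨r, u, hr, -, h1, h2⟩ := main (Finset.univ.filter fun y => ¬ Sim y a) (by simp)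
  exact ⟨r, hr, fun z hz => (h1 z hz).1, fun z hz => (h2 z (by simpa using hz)).1⟩

theorem sim_form {y a : I → D3} (h : Sim y a) (hs : ∀ c, ∃ i, a i = c) :
    ∃ c, y = (fun i => a i + c) ∨ y = (fun i => - a i + c) := by
  obtain ⟨i0, h0⟩ := hs 0
  obtain ⟨i1, h1⟩ := hs 1
  obtain ⟨i2, h2⟩ := hs 2
  have n1 : y i0 ≠ y i1 := sim_ne h (by rw [h0, h1]; decide)
  have n2 : y i0 ≠ y i2 := sim_ne h (by rw [h0, h2]; decide)
  have n3 : y i1 ≠ y i2 := sim_ne h (by rw [h1, h2]; decide)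
  have key : ∀ l, y l = (y i1 - y i0) * a l + y i0 := by
    intro l
    rcases d3c (a l) with e | e | e
    · rw [(h l i0).2 (e.trans h0.symm), e]
      generalize y i1 = s
      generalize y i0 = t
      clear * -
      revert s t; decide
    · rw [(h l i1).2 (e.trans h1.symm), e]
      generalize y i1 = s
      generalize y i0 = t
      clear * -
      revert s t; decide
    · rw [(h l i2).2 (e.trans h2.symm), e]
      clear * - n1 n2 n3
      revert n1 n2 n3
      generalize y i1 = s
      generalize y i0 = t
      generalize y i2 = u
      revert s t u; decide
  refine ⟨y i0, ?_⟩
  rcases d3c (y i1 - y i0) with e | e | e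
  · exact absurd (sub_eq_zero.1 e).symm n1
  · left; funext l; rw [key l, e]
    generalize a l = s
    generalize y i0 = t
    clear * -
    revert s t; decide
  · right; funext l; rw [key l, e]
    generalize a l = s
    generalize y i0 = t
    clear * -
    revert s t; decide

theorem Rep.min {p : D3 → D3 → D3 → D3} (hm : IsMin p) (hi : ∀ x, p x x x = x)
    {f g h : (I → D3) → D3} {F G H : (I → Bool) → Bool} (hf : Rep f F) (hg : Rep g G)
    (hh : Rep h H) : Rep (fun x => p (f x) (g x) (h x)) (fun s => F s ^^ G s ^^ H s) := by
  intro c s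
  simp only [hf c s, hg c s, hh c s]
  rcases Bool.eq_false_or_eq_true (F s) with e1 | e1 <;>
  rcases Bool.eq_false_or_eq_true (G s) with e2 | e2 <;>
  rcases Bool.eq_false_or_eq_true (H s) with e3 | e3 <;>
    simp [e1, e2, e3, hi, (hm _ _).1, (hm _ _).2.1, (hm _ _).2.2]

theorem min_hom (hC : Good C) (hC' : Good C') (h : ClsMin C) (h' : ClsMin C') : MHom C C' := by
  classical
  refine ⟨fun n f x => f (fun i => - x i) - f x, ?_, fun _ _ _ _ _ => rfl⟩
  intro n f hf
  simp only
  obtain ⟨p, hp, hpm⟩ := h'.2.1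
  have hq := qq_of_min hC' hp hpm
  have npos := hC.npos hf
  let i0 : Fin n := ⟨0, npos⟩
  have add := fun s s' hd => bf_add hC h.1 h.2.2 hf s s' hd
  have hrep := rep_bf hC h.1 (hC.acts hf)
  have hcompl : ∀ s, bf f (fun i => !s i) = !bf f s := by
    intro s
    have := add s (fun i => !s i) (by intro i hi; simp [hi])
    simp only [Bool.or_not_self, bf_univ hC hf] at this
    revert this
    cases bf f s <;> cases bf f (fun i => !s i) <;> simp
  -- the base operation
  have base : ∀ S : Finset (Fin n), ∃ g : Op n, Acts C' g ∧
      Rep g (fun s => s i0 ^^ bf f (fun i => decide (i ∈ S) && (s i ^^ s i0))) := by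
    intro S
    induction S using Finset.induction_on with
    | empty =>
      refine ⟨_, Acts.proj i0, ?_⟩
      have := bf_empty hC hf
      simp only [Finset.notMem_empty, decide_false, Bool.false_and, this, Bool.xor_false]
      exact Rep.proj i0
    | insert a S ha ih =>
      obtain ⟨g, hg, hr⟩ := ih
      have e : ∀ s : Fin n → Bool, bf f (fun i => decide (i ∈ insert a S) && (s i ^^ s i0)) =
          (bf f (fun i => decide (i ∈ S) && (s i ^^ s i0)) ^^
            (bf f (fun i => decide (i = a)) && (s a ^^ s i0))) := by
        intro s
        have e1 := add (fun i => decide (i ∈ S) && (s i ^^ s i0))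
          (fun i => decide (i = a) && (s a ^^ s i0)) (by
            intro i hi
            have : i ∈ S := by simp at hi; exact hi.1
            have : i ≠ a := fun e => ha (e ▸ this)
            simp [this])
        have e2 : (fun i => decide (i ∈ insert a S) && (s i ^^ s i0)) =
            fun i => (decide (i ∈ S) && (s i ^^ s i0)) || (decide (i = a) && (s a ^^ s i0)) := by
          funext i
          by_cases hi : i = a
          · subst hi; simp [ha]
          · simp [hi]
        rw [e2, e1]
        congr 1
        cases (s a ^^ s i0)
        · simpa using bf_empty hC hf
        · simp
      by_cases hU : bf f (fun i => decide (i = a)) = true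
      · refine ⟨_, hp.app hg (Acts.proj i0) (Acts.proj a), ?_⟩
        have := Rep.min hpm (hp.idem hC') hr (Rep.proj i0) (Rep.proj a)
        convert this using 2 with s
        rw [e, hU]
        generalize bf f _ = b
        generalize s i0 = b'
        generalize s a = b''
        revert b b' b''
        decide
      · refine ⟨g, hg, ?_⟩
        convert hr using 2 with s
        rw [e]
        simp [hU]
  have base : ∃ g : Op n, Acts C' g ∧ Rep g (bf f) := by
    obtain ⟨g, hg, hr⟩ := base Finset.univ
    refine ⟨g, hg, ?_⟩
    convert hr using 2 with s
    simp only [Finset.mem_univ, decide_true, Bool.true_and]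
    cases hs : s i0
    · simp
    · simp [hcompl]
  set F : Op n := fun x => f (fun i => - x i) - f x with hF
  have Frep : Rep F (bf f) := by
    intro c s
    have e : (fun i => - tw c s i) = tw (- c - 1) (fun i => !s i) := by
      funext i
      by_cases hi : s i = true
      · simp only [tw, hi, if_true]
        clear * -
        revert c; decide
      · simp only [tw, hi]
        clear * -
        revert c; decide
    simp only [hF]
    rw [e, hrep, hrep, hcompl]
    cases bf f s
    · clear * -
      revert c; decide
    · clear * -
      revert c; decide
  have Fadd : ∀ x c, F (fun i => x i + c) = F x + c := by
    intro x c
    simp only [hF]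
    rw [hC.asdc (hC.acts hf)]
    have e : (fun i => -(x i + c)) = (fun i => - x i + -c) := by
      funext i
      rw [neg_add]
    rw [e, hC.asdc (hC.acts hf) (fun i => - x i)]
    generalize f x = u
    generalize f _ = v
    clear * -
    revert u v c; decide
  have Fneg : ∀ x, F (fun i => - x i) = - F x := by
    intro x
    simp only [hF, neg_neg, neg_sub]
  have Fhom : ∀ y a i, Sim y a → (∀ c, ∃ i, a i = c) → F a = a i → F y = y i := by
    intro y a i hs ha hi
    obtain ⟨c, rfl | rfl⟩ := sim_form hs ha
    · rw [Fadd, hi]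
    · rw [Fadd (fun i => - a i), Fneg, hi]
  have main : ∀ P : Finset (Fin n → D3), ∃ g : Op n, Acts C' g ∧ Rep g (bf f) ∧
      ∀ a ∈ P, g a = F a := by
    intro P
    induction P using Finset.induction_on with
    | empty =>
      obtain ⟨g, hg, hr⟩ := base
      exact ⟨g, hg, hr, by simp⟩
    | insert a P _ ih =>
      obtain ⟨g, hg, hr, hP⟩ := ih
      by_cases hga : g a = F a
      · refine ⟨g, hg, hr, ?_⟩
        intro x hx
        rcases Finset.mem_insert.1 hx with rfl | hx
        · exact hga
        · exact hP x hx
      · rcases tw_or_surj a with ⟨c, s, rfl⟩ | hsurj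
        · exact absurd (by rw [hr, Frep]) hga
        · obtain ⟨d, hd1, hd2⟩ : ∃ d, d ≠ F a ∧ d ≠ g a := by
            clear * -
            generalize F a = x
            generalize g a = y
            revert x y; decide
          obtain ⟨i, hi⟩ := hsurj (F a)
          obtain ⟨j, hj⟩ := hsurj d
          obtain ⟨k, hk⟩ := hsurj (g a)
          obtain ⟨t, ht, ht1, ht2⟩ := lemmaH (C := C') hq (a := a) (i := i) (j := j) (k := k)
            (by rw [hi, hj]; exact hd1.symm) (by rw [hi, hk]; exact Ne.symm hga)
            (by rw [hj, hk]; exact hd2)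
          refine ⟨_, hq.app hg (Acts.proj i) ht, ?_, ?_⟩
          · intro c s
            have : ¬ Sim (tw c s) a := by
              intro hs
              have e1 := sim_ne hs (i := i) (j := j) (by rw [hi, hj]; exact hd1.symm)
              have e2 := sim_ne hs (i := i) (j := k) (by rw [hi, hk]; exact Ne.symm hga)
              have e3 := sim_ne hs (i := j) (j := k) (by rw [hj, hk]; exact hd2)
              simp only [tw] at e1 e2 e3
              revert e1 e2 e3
              cases s i <;> cases s j <;> cases s k <;> simp
            simp only [ht2 _ this, qq_yz]
            exact hr c s
          · intro x hx
            have hxx : x = a ∨ (x ∈ P) := Finset.mem_insert.1 hx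
            rcases hxx with rfl | hx
            · have e := ht1 x (fun _ _ => Iff.rfl)
              simp only [e, hi, hj]
              exact qq_d hga hd2.symm hd1.symm
            · by_cases hs : Sim x a
              · have e1 := Fhom x a i hs hsurj hi.symm
                simp only [hP x hx, e1, qq_xy]
              · simp only [ht2 x hs, qq_yz]
                exact hP x hx
  obtain ⟨g, hg, -, hP⟩ := main Finset.univ
  have : g = F := by funext a; exact hP a (Finset.mem_univ _)
  rw [← this]
  exact hC'.mem hg

end SelfDual


namespace SelfDual
variable {C C' : ∀ n, Set (Op n)} {I J X : Type}

def sbH (b00 b01 b02 b10 b11 b12 b20 b21 b22 : Bool) : Bool :=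
  (b00 || b01 || b02) && (b10 || b11 || b12) && (b20 || b21 || b22) &&
    (b00 || b10 || b20) && (b01 || b11 || b21) && (b02 || b12 || b22) &&
    (!(b01 && b10) || b00) && (!(b02 && b11) || b01) && (!(b00 && b12) || b02) &&
    (!(b11 && b20) || b10) && (!(b12 && b21) || b11) && (!(b10 && b22) || b12) &&
    (!(b21 && b00) || b20) && (!(b22 && b01) || b21) && (!(b20 && b02) || b22)

def sbC (b00 b01 b02 b10 b11 b12 b20 b21 b22 : Bool) : Bool :=
    (b00 && b01 && b02 && b10 && b11 && b12 && b20 && b21 && b22) ||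
    ((b00 && b11 && b22 && !b01 && !b02 && !b10 && !b12 && !b20 && !b21) ||
    ((b01 && b12 && b20 && !b00 && !b02 && !b10 && !b11 && !b21 && !b22) ||
    (b02 && b10 && b21 && !b00 && !b01 && !b11 && !b12 && !b20 && !b22)))

theorem section_bool0 : ∀ b00 b01 b02 b10 b11 b12 b20 b21 b22 : Bool,
    (!sbH b00 b01 b02 b10 b11 b12 b20 b21 b22 || sbC b00 b01 b02 b10 b11 b12 b20 b21 b22) = true := by
  decide

theorem section_bool (b00 b01 b02 b10 b11 b12 b20 b21 b22 : Bool) :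
    sbH b00 b01 b02 b10 b11 b12 b20 b21 b22 = true →
    sbC b00 b01 b02 b10 b11 b12 b20 b21 b22 = true := by
  have := section_bool0 b00 b01 b02 b10 b11 b12 b20 b21 b22
  intro h
  rw [h] at this
  simpa using this

theorem section_lemma (W : D3 → D3 → Prop)
    (hcl : ∀ x y x' y', W x y → W x' y' → W (tm x x') (tm y y'))
    (h1 : ∀ x, ∃ y, W x y) (h2 : ∀ y, ∃ x, W x y) :
    (∀ x y, W x y) ∨ ∃ i, ∀ x y, W x y ↔ y = x + i := by
  classical
  have cl : ∀ x y, W x (y + 1) → W (x + 1) y → W x y := by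
    intro x y a b
    have := hcl _ _ _ _ a b
    have e1 : tm x (x + 1) = x := by clear * -; revert x; decide
    have e2 : tm (y + 1) y = y := by clear * -; revert y; decide
    rwa [e1, e2] at this
  have r : ∀ P : D3 → Prop, (∃ y, P y) → P 0 ∨ P 1 ∨ P 2 := by
    rintro P ⟨y, hy⟩
    rcases d3c y with rfl | rfl | rfl <;> simp [hy]
  have key := section_bool (decide (W 0 0)) (decide (W 0 1)) (decide (W 0 2)) (decide (W 1 0))
    (decide (W 1 1)) (decide (W 1 2)) (decide (W 2 0)) (decide (W 2 1)) (decide (W 2 2))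
  simp only [sbH, sbC, Bool.or_eq_true, Bool.and_eq_true, Bool.not_eq_true', decide_eq_true_eq,
    decide_eq_false_iff_not, ← Bool.decide_and, and_imp, ← imp_iff_not_or] at key
  have k2 := key (by have := r _ (h1 0); tauto) (by have := r _ (h1 1); tauto)
    (by have := r _ (h1 2); tauto) (by have := r _ (h2 0); tauto) (by have := r _ (h2 1); tauto)
    (by have := r _ (h2 2); tauto)
    (cl 0 0) (cl 0 1) (cl 0 2)
    (cl 1 0) (cl 1 1) (cl 1 2)
    (cl 2 0) (cl 2 1) (cl 2 2)
  have fin : ∀ Q : D3 → D3 → Prop, Q 0 0 → Q 0 1 → Q 0 2 → Q 1 0 → Q 1 1 → Q 1 2 → Q 2 0 → Q 2 1 →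
      Q 2 2 → ∀ x y, Q x y := by
    intro Q _ _ _ _ _ _ _ _ _ x y
    rcases d3c x with rfl | rfl | rfl <;> rcases d3c y with rfl | rfl | rfl <;> assumption
  rcases k2 with k | k | k | k
  · left
    obtain ⟨⟨⟨⟨⟨⟨⟨⟨_, _⟩, _⟩, _⟩, _⟩, _⟩, _⟩, _⟩, _⟩ := k
    apply fin <;> assumption
  · right; refine ⟨0, ?_⟩
    obtain ⟨⟨⟨⟨⟨⟨⟨⟨_, _⟩, _⟩, _⟩, _⟩, _⟩, _⟩, _⟩, _⟩ := k
    apply fin <;> simp [*]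
  · right; refine ⟨1, ?_⟩
    obtain ⟨⟨⟨⟨⟨⟨⟨⟨_, _⟩, _⟩, _⟩, _⟩, _⟩, _⟩, _⟩, _⟩ := k
    apply fin <;> simp [*]
  · right; refine ⟨2, ?_⟩
    obtain ⟨⟨⟨⟨⟨⟨⟨⟨_, _⟩, _⟩, _⟩, _⟩, _⟩, _⟩, _⟩, _⟩ := k
    apply fin <;> simp [*]

theorem three_lemma (T : D3 → D3 → D3 → Prop)
    (hcl : ∀ x y z x' y' z', T x y z → T x' y' z' → T (tm x x') (tm y y') (tm z z'))
    (h1 : ∀ x y, ∃ z, T x y z) (h2 : ∀ x z, ∃ y, T x y z) (h3 : ∀ y z, ∃ x, T x y z) :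
    ∀ x y z, T x y z := by
  have ti : ∀ x, tm x x = x := by decide
  have tl : ∀ x, tm x (x + 1) = x := by decide
  have sec : ∀ s, (∀ x y, T s x y) ∨ ∃ i, ∀ x y, T s x y ↔ y = x + i := by
    intro s
    refine section_lemma (T s) ?_ (h1 s) (h2 s)
    intro x y x' y' a b
    have := hcl _ _ _ _ _ _ a b
    rwa [ti] at this
  have spread : ∀ s, (∀ x y, T (s + 1) x y) → ∀ x y, T s x y := by
    intro s hs
    rcases sec s with h | ⟨i, hi⟩
    · exact h
    · exfalso
      have := hcl _ _ _ _ _ _ ((hi 1 (1 + i)).2 rfl) (hs 0 (1 + i))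
      rw [tl, ti, hi] at this
      clear * - this
      revert i; decide
  by_cases hf : ∃ s, ∀ x y, T s x y
  · obtain ⟨s, hs⟩ := hf
    have s1 := spread (s + 2) (by rwa [show s + 2 + 1 = s by clear * -; revert s; decide])
    have s2 := spread (s + 1) (by rwa [show s + 1 + 1 = s + 2 by clear * -; revert s; decide])
    intro x
    rcases (show x = s ∨ x = s + 1 ∨ x = s + 2 by clear * -; revert x s; decide) with
      rfl | rfl | rfl <;> assumption
  · exfalso
    push Not at hf
    have sec' : ∀ s, ∃ i, ∀ x y, T s x y ↔ y = x + i := fun s => by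
      rcases sec s with h | h
      · obtain ⟨x, y, hxy⟩ := hf s
        exact absurd (h x y) hxy
      · exact h
    choose i hi using sec'
    have hne : ∃ s, i s ≠ i (s + 1) := by
      by_contra hcon
      push Not at hcon
      obtain ⟨s, hs⟩ := h3 0 (i 0 + 1)
      rw [hi] at hs
      have e1 := hcon 0
      have e2 := hcon 1
      rw [show (0:D3) + 1 = 1 from rfl] at e1
      rw [show (1:D3) + 1 = 2 from rfl] at e2
      have : i s = i 0 := by
        rcases d3c s with rfl | rfl | rfl
        · rfl
        · exact e1.symm
        · exact (e1.trans e2).symm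
      rw [this] at hs
      clear * - hs
      revert hs
      generalize i 0 = t
      revert t; decide
    obtain ⟨s, hs⟩ := hne
    have := hcl _ _ _ _ _ _ ((hi s 1 (1 + i s)).2 rfl) ((hi (s + 1) 0 (0 + i (s + 1))).2 rfl)
    rw [tl, hi] at this
    clear * - this hs
    revert this hs
    generalize i s = t
    generalize i (s + 1) = u
    revert t u; decide

theorem lemmaI (R : (X → D3) → Prop) (hcl : ∀ r r', R r → R r' → R (fun x => tm (r x) (r' x)))
    (h0 : ∃ r, R r) (h1 : ∀ x u, ∃ r, R r ∧ r x = u)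
    (h2 : ∀ x y, x ≠ y → ∀ u v, ∃ r, R r ∧ r x = u ∧ r y = v) (Y : Finset X) (g : X → D3) :
    ∃ r, R r ∧ ∀ x ∈ Y, r x = g x := by
  classical
  have main : ∀ (m : ℕ) (Y : Finset X), Y.card = m → ∀ g : X → D3,
      ∃ r, R r ∧ ∀ x ∈ Y, r x = g x := by
    intro m
    induction m using Nat.strong_induction_on with
    | _ m ih =>
    intro Y hY g
    by_cases h3 : 2 < Y.card
    · obtain ⟨p, q, s, hp, hq, hs, hpq, hps, hqs⟩ := Finset.two_lt_card_iff.1 h3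
      have ti : ∀ x, tm x x = x := by decide
      have ext1 : ∀ t ∈ Y, ∀ g' : X → D3, ∃ r, R r ∧ ∀ x ∈ Y, x ≠ t → r x = g' x := by
        intro t ht g'
        obtain ⟨r, hr, hr'⟩ := ih (m - 1) (by
          have := Finset.card_pos.2 ⟨t, ht⟩; omega) (Y.erase t)
          (by rw [Finset.card_erase_of_mem ht, hY]) g'
        exact ⟨r, hr, fun x hx hxt => hr' x (Finset.mem_erase.2 ⟨hxt, hx⟩)⟩
      have := three_lemma (fun a b c => ∃ r, R r ∧ (∀ x ∈ Y, x ≠ p → x ≠ q → x ≠ s → r x = g x) ∧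
        r p = a ∧ r q = b ∧ r s = c) ?_ ?_ ?_ ?_ (g p) (g q) (g s)
      · obtain ⟨r, hr, hr1, e1, e2, e3⟩ := this
        refine ⟨r, hr, ?_⟩
        intro x hx
        by_cases x1 : x = p
        · rw [x1, e1]
        by_cases x2 : x = q
        · rw [x2, e2]
        by_cases x3 : x = s
        · rw [x3, e3]
        exact hr1 x hx x1 x2 x3
      · rintro _ _ _ _ _ _ ⟨r, hr, a1, rfl, rfl, rfl⟩ ⟨r', hr', a1', rfl, rfl, rfl⟩
        refine ⟨_, hcl _ _ hr hr', ?_, rfl, rfl, rfl⟩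
        intro x hx x1 x2 x3
        simp only [a1 x hx x1 x2 x3, a1' x hx x1 x2 x3, ti]
      · intro a b
        obtain ⟨r, hr, hr'⟩ := ext1 s hs (Function.update (Function.update g p a) q b)
        refine ⟨r s, r, hr, ?_, ?_, ?_, rfl⟩
        · intro x hx x1 x2 x3
          rw [hr' x hx x3]; simp [x1, x2]
        · rw [hr' p hp hps]; simp [hpq]
        · rw [hr' q hq hqs]; simp
      · intro a b
        obtain ⟨r, hr, hr'⟩ := ext1 q hq (Function.update (Function.update g p a) s b)
        refine ⟨r q, r, hr, ?_, ?_, rfl, ?_⟩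
        · intro x hx x1 x2 x3
          rw [hr' x hx x2]; simp [x1, x3]
        · rw [hr' p hp hpq]; simp [hps]
        · rw [hr' s hs hqs.symm]; simp
      · intro a b
        obtain ⟨r, hr, hr'⟩ := ext1 p hp (Function.update (Function.update g q a) s b)
        refine ⟨r p, r, hr, ?_, rfl, ?_, ?_⟩
        · intro x hx x1 x2 x3
          rw [hr' x hx x1]; simp [x2, x3]
        · rw [hr' q hq hpq.symm]; simp [hqs]
        · rw [hr' s hs hps.symm]; simp
    · have : Y.card = 0 ∨ Y.card = 1 ∨ Y.card = 2 := by omega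
      rcases this with h | h | h
      · rw [Finset.card_eq_zero] at h
        subst h
        obtain ⟨r, hr⟩ := h0
        exact ⟨r, hr, by simp⟩
      · obtain ⟨x, rfl⟩ := Finset.card_eq_one.1 h
        obtain ⟨r, hr, e⟩ := h1 x (g x)
        exact ⟨r, hr, by simpa using e⟩
      · obtain ⟨x, y, hxy, rfl⟩ := Finset.card_eq_two.1 h
        obtain ⟨r, hr, e, e'⟩ := h2 x y hxy (g x) (g y)
        exact ⟨r, hr, by simpa using ⟨e, e'⟩⟩
  exact main _ Y rfl g

def MeetOn (S : Set I) (f : (I → D3) → D3) : Prop :=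
  ∀ y c, (∀ i ∈ S, y i = c ∨ y i = c + 1) →
    ((∀ i ∈ S, y i = c + 1) → f y = c + 1) ∧ ((∃ i ∈ S, y i = c) → f y = c)

theorem tm_low (c : D3) : tm c (c + 1) = c ∧ tm (c + 1) c = c ∧ tm c c = c := by
  revert c; decide

theorem MeetOn.tm {S : Set I} {f g : (I → D3) → D3} (hf : MeetOn S f) (hg : MeetOn S g) :
    MeetOn S (fun x => tm (f x) (g x)) := by
  intro y c h
  obtain ⟨a, b⟩ := hf y c h
  obtain ⟨a', b'⟩ := hg y c h
  refine ⟨fun h => ?_, fun h => ?_⟩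
  · simp only [a h, a' h, (tm_low _).2.2]
  · simp only [b h, b' h, (tm_low _).2.2]

theorem MeetOn.tm_proj {S : Set I} {f : (I → D3) → D3} (hf : MeetOn S f) {i : I} (hi : i ∈ S) :
    MeetOn S (fun x => SelfDual.tm (f x) (x i)) := by
  intro y c h
  obtain ⟨a, b⟩ := hf y c h
  refine ⟨fun h' => ?_, fun h' => ?_⟩
  · simp only [a h', h' i hi, (tm_low _).2.2]
  · simp only [b h']
    rcases h i hi with e | e <;> simp only [e, tm_low]

theorem meet_exists (ht : A2 C tm) (T : Finset I) (hT : T.Nonempty) :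
    ∃ f : (I → D3) → D3, Acts C f ∧ MeetOn (↑T) f := by
  classical
  induction hT using Finset.Nonempty.cons_induction with
  | singleton a =>
    refine ⟨_, Acts.proj a, ?_⟩
    intro y c h
    simp
  | cons a S ha hS ih =>
    obtain ⟨f, hf, hm⟩ := ih
    refine ⟨_, ht.app (Acts.proj a) hf, ?_⟩
    intro y c h
    simp only [Finset.coe_cons, Set.mem_insert_iff, Finset.mem_coe, forall_eq_or_imp] at h
    obtain ⟨p, q⟩ := hm y c h.2
    refine ⟨fun h' => ?_, fun h' => ?_⟩
    · simp only [Finset.coe_cons, Set.mem_insert_iff, Finset.mem_coe, forall_eq_or_imp] at h'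
      simp only [h'.1, p h'.2, tm_low]
    · by_cases hx : ∃ i ∈ (S : Set I), y i = c
      · simp only [q hx]
        rcases h.1 with e | e <;> simp only [e, tm_low]
      · push Not at hx
        have e2 : ∀ i ∈ (S : Set I), y i = c + 1 := fun i hi => by
          rcases h.2 i hi with e | e
          · exact absurd e (hx i hi)
          · exact e
        have e3 : y a = c := by
          obtain ⟨i, hi, e⟩ := h'
          simp only [Finset.coe_cons, Set.mem_insert_iff] at hi
          rcases hi with rfl | hi
          · exact e
          · exact absurd e (hx i hi)
        simp only [p e2, e3, tm_low]

/-- Equivariant -/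
def Equi (c : (I → D3) → D3) : Prop := ∀ a, c (fun i => a i + 1) = c a + 1

theorem Equi.add {c : (I → D3) → D3} (hc : Equi c) (a : I → D3) (k : D3) :
    c (fun i => a i + k) = c a + k := by
  have h1 := hc a
  have h2 := hc (fun i => a i + 1)
  rcases d3_shift k with rfl | rfl | rfl
  · simp
  · simpa using h1
  · have : ∀ y : D3, y + (0 + 1 + 1) = y + 1 + 1 := by decide
    simp only [this]
    rw [h2, h1]

/-- from interpolation on normalised points to all points -/
theorem interp (hC : Good C) (ht : A2 C tm) [Finite I] (S : Set I) {i0 : I}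
    (Q : (I → D3) → Prop)
    (hQ : ∀ a k, Q a → Q (fun i => a i + k))
    (hne : ∃ f : (I → D3) → D3, Acts C f ∧ MeetOn S f)
    (h1 : ∀ a, Q a → a i0 = 0 → ∀ u, ∃ f : (I → D3) → D3, Acts C f ∧ MeetOn S f ∧ f a = u)
    (h2 : ∀ a b, Q a → a i0 = 0 → Q b → b i0 = 0 → a ≠ b → ∀ u v,
      ∃ f : (I → D3) → D3, Acts C f ∧ MeetOn S f ∧ f a = u ∧ f b = v)
    {c : (I → D3) → D3} (hc : Equi c) :
    ∃ f : (I → D3) → D3, Acts C f ∧ MeetOn S f ∧ ∀ a, Q a → f a = c a := by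
  classical
  have : Fintype I := Fintype.ofFinite I
  obtain ⟨r, ⟨f, hf, hm, hr⟩, hY⟩ := lemmaI (X := {a : I → D3 // Q a ∧ a i0 = 0})
    (fun r => ∃ f : (I → D3) → D3, Acts C f ∧ MeetOn S f ∧ ∀ a, r a = f a.1)
    (by
      rintro r r' ⟨f, hf, hm, e⟩ ⟨f', hf', hm', e'⟩
      exact ⟨_, ht.app hf hf', hm.tm hm', fun a => by simp only [e, e']⟩)
    (by
      obtain ⟨f, hf, hm⟩ := hne
      exact ⟨fun a => f a.1, f, hf, hm, fun _ => rfl⟩)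
    (by
      intro x u
      obtain ⟨f, hf, hm, e⟩ := h1 x.1 x.2.1 x.2.2 u
      exact ⟨fun a => f a.1, ⟨f, hf, hm, fun _ => rfl⟩, e⟩)
    (by
      intro x y hxy u v
      obtain ⟨f, hf, hm, e⟩ := h2 x.1 y.1 x.2.1 x.2.2 y.2.1 y.2.2 (fun h => hxy (Subtype.ext h)) u v
      exact ⟨fun a => f a.1, ⟨f, hf, hm, fun _ => rfl⟩, e⟩)
    Finset.univ (fun a => c a.1)
  refine ⟨f, hf, hm, ?_⟩
  intro a ha
  have e := hY ⟨fun i => a i + - a i0, hQ a _ ha, by simp⟩ (Finset.mem_univ _)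
  rw [hr] at e
  simp only at e
  rw [hC.asdc hf, hc.add] at e
  exact add_right_cancel e

theorem lemmaT (hC : Good C) (ht : A2 C tm) [Finite I] [Nonempty I] {c : (I → D3) → D3}
    (hc : Equi c) :
    ∃ f : (I → D3) → D3, Acts C f ∧ MeetOn Set.univ f ∧ ∀ a, (∀ u, ∃ i, a i = u) → f a = c a := by
  classical
  have : Fintype I := Fintype.ofFinite I
  obtain ⟨i0⟩ := ‹Nonempty I›
  have hne : ∃ f : (I → D3) → D3, Acts C f ∧ MeetOn Set.univ f := by
    simpa using meet_exists (C := C) ht Finset.univ ⟨i0, Finset.mem_univ i0⟩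
  have one : ∀ a : I → D3, (∀ u, ∃ i, a i = u) →
      ∀ u, ∃ f : (I → D3) → D3, Acts C f ∧ MeetOn Set.univ f ∧ f a = u := by
    intro a ha
    have step : ∀ u, (∃ f : (I → D3) → D3, Acts C f ∧ MeetOn Set.univ f ∧ f a = u + 1) →
        (∃ f : (I → D3) → D3, Acts C f ∧ MeetOn Set.univ f ∧ f a = u) := by
      rintro u ⟨f, hf, hm, e⟩
      obtain ⟨i, hi⟩ := ha u
      exact ⟨_, ht.app hf (Acts.proj i), hm.tm_proj (Set.mem_univ i), by
        simp only [e, hi, tm_low]⟩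
    obtain ⟨f, hf, hm⟩ := hne
    have s0 : ∃ f' : (I → D3) → D3, Acts C f' ∧ MeetOn Set.univ f' ∧ f' a = f a :=
      ⟨f, hf, hm, rfl⟩
    generalize f a = w at s0
    have s1 := step (w + 2) (by rwa [show w + 2 + 1 = w by clear * -; revert w; decide])
    have s2 := step (w + 1) (by rwa [show w + 1 + 1 = w + 2 by clear * -; revert w; decide])
    intro x
    rcases (show x = w ∨ x = w + 1 ∨ x = w + 2 by clear * -; revert x w; decide) with
      rfl | rfl | rfl <;> assumption
  refine interp hC ht Set.univ (i0 := i0) (fun a => ∀ u, ∃ i, a i = u) ?_ hne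
    (fun a ha _ => one a ha) ?_ hc
  · intro a k ha u
    obtain ⟨i, hi⟩ := ha (u - k)
    exact ⟨i, by simp [hi]⟩
  · intro a b ha ha0 hb hb0 hab
    let W : D3 → D3 → Prop := fun u v =>
      ∃ f : (I → D3) → D3, Acts C f ∧ MeetOn Set.univ f ∧ f a = u ∧ f b = v
    have pr : ∀ u v i, W u v → W (tm u (a i)) (tm v (b i)) := by
      rintro u v i ⟨f, hf, hm, rfl, rfl⟩
      exact ⟨_, ht.app hf (Acts.proj i), hm.tm_proj (Set.mem_univ i), rfl, rfl⟩
    rcases section_lemma W (by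
        rintro x y x' y' ⟨f, hf, hm, rfl, rfl⟩ ⟨f', hf', hm', rfl, rfl⟩
        exact ⟨_, ht.app hf hf', hm.tm hm', rfl, rfl⟩)
      (by
        intro x
        obtain ⟨f, hf, hm, e⟩ := one a ha x
        exact ⟨f b, f, hf, hm, e, rfl⟩)
      (by
        intro x
        obtain ⟨f, hf, hm, e⟩ := one b hb x
        exact ⟨f a, f, hf, hm, rfl, e⟩) with h | ⟨k, hk⟩
    · exact h
    · exfalso
      obtain ⟨i, hi⟩ : ∃ i, a i ≠ b i := by
        by_contra hcon
        push Not at hcon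
        exact hab (funext hcon)
      have q : ∀ x i, tm (x + k) (b i) = tm x (a i) + k := fun x i =>
        (hk _ _).1 (pr x (x + k) i ((hk _ _).2 rfl))
      have q0 := fun x => q x i0
      have qi := fun x => q x i
      rw [ha0, hb0] at q0
      clear * - q0 qi hi
      revert q0 qi hi
      generalize a i = x
      generalize b i = y
      revert x y k
      decide

def A4 (C : ∀ n, Set (Op n)) (g : D3 → D3 → D3 → D3 → D3) : Prop :=
  ∀ (n : ℕ) (p q r s : Op n), p ∈ C n → q ∈ C n → r ∈ C n → s ∈ C n →
    (fun x => g (p x) (q x) (r x) (s x)) ∈ C n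

theorem A4.app {g : D3 → D3 → D3 → D3 → D3} (hg : A4 C g) {f h k l : (I → D3) → D3}
    (hf : Acts C f) (hh : Acts C h) (hk : Acts C k) (hl : Acts C l) :
    Acts C (fun x => g (f x) (h x) (k x) (l x)) :=
  fun n p hp => hg n _ _ _ _ (hf n p hp) (hh n p hp) (hk n p hp) (hl n p hp)

theorem A4.shift (hC : Good C) {g : D3 → D3 → D3 → D3 → D3} (hg : A4 C g) (x y z w c : D3) :
    g (x + c) (y + c) (z + c) (w + c) = g x y z w + c := by
  have := hC.asdc (hg.app (I := Fin 4) (Acts.proj 0) (Acts.proj 1) (Acts.proj 2) (Acts.proj 3))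
    ![x, y, z, w] c
  simpa using this

def HasV (C : ∀ n, Set (Op n)) : Prop :=
  ∃ v, A4 C v ∧ (∀ e w, v e e e w = e) ∧ ∃ w w', v 0 1 2 w ≠ v 0 1 2 w'

theorem lemmaTS (hC : Good C) (ht : A2 C tm) [Finite I] (S : Set I) (hS : S.Nonempty)
    {c : (S → D3) → D3} (hc : Equi c) :
    ∃ f : (I → D3) → D3, Acts C f ∧ MeetOn S f ∧
      ∀ a : I → D3, (∀ u, ∃ i ∈ S, a i = u) → f a = c (fun i => a i) := by
  have : Nonempty S := hS.to_subtype
  obtain ⟨f, hf, hm, e⟩ := lemmaT hC ht (I := S) hc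
  refine ⟨_, hf.minor Subtype.val, ?_, ?_⟩
  · intro y d h
    obtain ⟨p, q⟩ := hm (fun i => y i) d (fun i _ => h i.1 i.2)
    refine ⟨fun h' => p fun i _ => h' i.1 i.2, fun h' => q ?_⟩
    obtain ⟨i, hi, h''⟩ := h'
    exact ⟨⟨i, hi⟩, Set.mem_univ _, h''⟩
  · intro a ha
    apply e
    intro u
    obtain ⟨i, hi, h⟩ := ha u
    exact ⟨⟨i, hi⟩, h⟩

theorem equi_proj (i : I) (k : D3) : Equi (fun a : I → D3 => a i + k) := by
  intro a
  simp only
  rw [add_assoc, add_comm 1 k, add_assoc]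

theorem lemmaV (hC : Good C) (ht : A2 C tm) (hv : HasV C) [Finite I] (S : Set I)
    (hS : S.Nonempty) {c : (I → D3) → D3} (hc : Equi c) :
    ∃ f : (I → D3) → D3, Acts C f ∧ MeetOn S f ∧
      ∀ a : I → D3, (∀ u, ∃ i ∈ S, a i = u) → f a = c a := by
  classical
  have : Fintype I := Fintype.ofFinite I
  obtain ⟨i0, hi0⟩ := hS
  have val : ∀ k, ∃ f : (I → D3) → D3, Acts C f ∧ MeetOn S f ∧
      ∀ a : I → D3, (∀ u, ∃ i ∈ S, a i = u) → a i0 = 0 → f a = k := by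
    intro k
    obtain ⟨f, hf, hm, e⟩ := lemmaTS hC ht S ⟨i0, hi0⟩ (equi_proj (⟨i0, hi0⟩ : S) k)
    exact ⟨f, hf, hm, fun a ha h0 => by rw [e a ha]; simp [h0]⟩
  refine interp hC ht S (i0 := i0) (fun a => ∀ u, ∃ i ∈ S, a i = u) ?_ ?_ ?_ ?_ hc
  · intro a k ha u
    obtain ⟨i, hi, h⟩ := ha (u - k)
    exact ⟨i, hi, by simp [h]⟩
  · obtain ⟨f, hf, hm, -⟩ := val 0
    exact ⟨f, hf, hm⟩
  · intro a ha h0 u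
    obtain ⟨f, hf, hm, e⟩ := val u
    exact ⟨f, hf, hm, e a ha h0⟩
  · intro a b ha ha0 hb hb0 hab u v
    by_cases hSab : ∀ i ∈ S, a i = b i
    · revert u v
      let W : D3 → D3 → Prop := fun u v =>
        ∃ f : (I → D3) → D3, Acts C f ∧ MeetOn S f ∧ f a = u ∧ f b = v
      have diag : ∀ x, W x x := fun x => by
        obtain ⟨f, hf, hm, e⟩ := val x
        exact ⟨f, hf, hm, e a ha ha0, e b hb hb0⟩
      rcases section_lemma W (by
          rintro x y x' y' ⟨f, hf, hm, rfl, rfl⟩ ⟨f', hf', hm', rfl, rfl⟩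
          exact ⟨_, ht.app hf hf', hm.tm hm', rfl, rfl⟩)
        (fun x => ⟨x, diag x⟩) (fun x => ⟨x, diag x⟩) with h | ⟨k, hk⟩
      · exact h
      · exfalso
        have k0 : k = 0 := by have := (hk 0 0).1 (diag 0); simpa using this.symm
        subst k0
        obtain ⟨l, hl⟩ : ∃ i, a i ≠ b i := by
          by_contra hcon
          push Not at hcon
          exact hab (funext hcon)
        obtain ⟨v, hv, hv1, w, w', hw⟩ := hv
        have hk' : ∃ t, v 0 1 2 (a l - t) ≠ v 0 1 2 (b l - t) := by
          clear * - hl hw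
          revert hl hw
          generalize a l = x
          generalize b l = y
          have gen : ∀ p q r x y w w' : D3, x ≠ y →
            (if w = 0 then p else if w = 1 then q else r) ≠
            (if w' = 0 then p else if w' = 1 then q else r) →
            ∃ t, (if x - t = 0 then p else if x - t = 1 then q else r) ≠
            (if y - t = 0 then p else if y - t = 1 then q else r) := by decide
          have ev : ∀ w, v 0 1 2 w = if w = 0 then v 0 1 2 0 else if w = 1 then v 0 1 2 1
              else v 0 1 2 2 := by
            intro w
            rcases d3c w with rfl | rfl | rfl <;> simp
          intro h1 h2
          rw [ev w, ev w'] at h2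
          obtain ⟨t, h⟩ := gen _ _ _ x y w w' h1 h2
          exact ⟨t, by rw [ev (x - t), ev (y - t)]; exact h⟩
        obtain ⟨t, htt⟩ := hk'
        obtain ⟨f0, hf0, hm0, e0⟩ := val (0 + t)
        obtain ⟨f1, hf1, hm1, e1⟩ := val (1 + t)
        obtain ⟨f2, hf2, hm2, e2⟩ := val (2 + t)
        have hW : W (v (f0 a) (f1 a) (f2 a) (a l)) (v (f0 b) (f1 b) (f2 b) (b l)) := by
          refine ⟨_, hv.app hf0 hf1 hf2 (Acts.proj l), ?_, rfl, rfl⟩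
          intro y d h
          obtain ⟨p0, q0⟩ := hm0 y d h
          obtain ⟨p1, q1⟩ := hm1 y d h
          obtain ⟨p2, q2⟩ := hm2 y d h
          refine ⟨fun h' => ?_, fun h' => ?_⟩
          · simp only [p0 h', p1 h', p2 h', hv1]
          · simp only [q0 h', q1 h', q2 h', hv1]
        rw [hk, e0 a ha ha0, e0 b hb hb0, e1 a ha ha0, e1 b hb hb0, e2 a ha ha0, e2 b hb hb0,
          ← sub_add_cancel (a l) t, ← sub_add_cancel (b l) t, A4.shift hC hv,
          A4.shift hC hv, add_zero] at hW
        exact htt (add_right_cancel hW).symm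
    · push Not at hSab
      obtain ⟨l, hlS, hl⟩ := hSab
      let a' : S → D3 := fun i => a i
      let c' : (S → D3) → D3 := fun x => if (fun i => x i - x ⟨i0, hi0⟩) = a' then
        x ⟨i0, hi0⟩ + u else x ⟨i0, hi0⟩ + v
      have hc' : Equi c' := by
        intro x
        simp only [c', add_sub_add_right_eq_sub]
        split_ifs
        · rw [add_assoc, add_comm 1 u, add_assoc]
        · rw [add_assoc, add_comm 1 v, add_assoc]
      obtain ⟨f, hf, hm, e⟩ := lemmaTS hC ht S ⟨i0, hi0⟩ hc'
      refine ⟨f, hf, hm, ?_, ?_⟩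
      · rw [e a ha]
        simp [c', ha0, a']
      · rw [e b hb]
        have : ¬ (fun i : S => b i) = fun i : S => a i := fun h => hl (congrFun h ⟨l, hlS⟩).symm
        simp [c', hb0, a', this]

end SelfDual


namespace SelfDual
variable {C C' : ∀ n, Set (Op n)} {I J X : Type}

def lv (c : D3) (b : Bool) : D3 := if b then c + 1 else c

theorem tm_lv (c : D3) (b b' : Bool) : tm (lv c b) (lv c b') = lv c (b && b') := by
  revert c b b'; decide

theorem lv_inj {c : D3} {b b' : Bool} (h : lv c b = lv c b') : b = b' := by
  revert c b b'; decide

theorem Rep.lv {h : (I → D3) → D3} {B : (I → Bool) → Bool} (hr : Rep h B) (c : D3)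
    (s : I → Bool) : h (fun i => lv c (s i)) = SelfDual.lv c (B s) := hr c s

theorem lv_cases {c x : D3} (h : x = c ∨ x = c + 1) : ∃ b, x = lv c b := by
  rcases h with h | h
  · exact ⟨false, h⟩
  · exact ⟨true, h⟩

theorem meet_fin (ht : A2 C tm) {ι : Type} (T : Finset ι) (hT : T.Nonempty)
    (g : ι → (I → D3) → D3) (hg : ∀ t, Acts C (g t)) :
    ∃ h : (I → D3) → D3, Acts C h ∧ ∀ y c (b : ι → Bool), (∀ t ∈ T, g t y = lv c (b t)) →
      h y = lv c (decide (∀ t ∈ T, b t = true)) := by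
  classical
  induction hT using Finset.Nonempty.cons_induction with
  | singleton a =>
    refine ⟨_, hg a, ?_⟩
    intro y c b h
    rw [h a (by simp)]
    simp
  | cons a S ha hS ih =>
    obtain ⟨f, hf, hm⟩ := ih
    refine ⟨_, ht.app (hg a) hf, ?_⟩
    intro y c b h
    simp only [hm y c b (fun t ht => h t (Finset.mem_cons_of_mem ht)),
      h a (Finset.mem_cons_self a S), tm_lv]
    congr 1
    rw [← Bool.decide_coe (b a), ← Bool.decide_and]
    simp

def JG (G : D3 → D3 → D3 → D3) : Prop :=
  ∀ c x y z, G (lv c x) (lv c y) (lv c z) = lv c (x && (y || z))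
def JJ (G : D3 → D3 → D3 → D3) : Prop :=
  ∀ c x y z, G (lv c x) (lv c y) (lv c z) = lv c (x && (!y || z))

theorem join_fin {G : D3 → D3 → D3 → D3} (hG : A3 C G) (hJ : JG G) {ι : Type} (T : Finset ι)
    (hT : T.Nonempty) (g : ι → (I → D3) → D3) (hg : ∀ t, Acts C (g t)) {X : (I → D3) → D3}
    (hX : Acts C X) :
    ∃ h : (I → D3) → D3, Acts C h ∧ ∀ y c (b0 : Bool) (b : ι → Bool), X y = lv c b0 →
      (∀ t ∈ T, g t y = lv c (b t)) →
      h y = lv c (b0 && decide (∃ t ∈ T, b t = true)) := by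
  classical
  induction hT using Finset.Nonempty.cons_induction with
  | singleton a =>
    refine ⟨_, hG.app hX (hg a) (hg a), ?_⟩
    intro y c b0 b h0 h
    simp only [h a (by simp), h0, hJ c]
    simp
  | cons a S ha hS ih =>
    obtain ⟨f, hf, hm⟩ := ih
    refine ⟨_, hG.app hX (hg a) hf, ?_⟩
    intro y c b0 b h0 h
    simp only [hm y c b0 b h0 (fun t ht => h t (Finset.mem_cons_of_mem ht)),
      h a (Finset.mem_cons_self a S), h0, hJ c]
    congr 1
    have : decide (∃ t ∈ Finset.cons a S ha, b t = true) =
        (b a || decide (∃ t ∈ S, b t = true)) := by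
      rw [← Bool.decide_coe (b a), ← Bool.decide_or]
      simp
    rw [this]
    cases b0 <;> simp

def Dom (C : ∀ n, Set (Op n)) : Prop :=
  ∀ n, ∀ f ∈ C n, ∃ i, ∀ s, bf f s = true → s i = true

def Mono (C : ∀ n, Set (Op n)) : Prop :=
  ∀ n, ∀ f ∈ C n, ∀ s s' : Fin n → Bool, (∀ i, s i = true → s' i = true) → bf f s = true →
    bf f s' = true

theorem nu_of_not_dom (hC : Good C) (hc : Cons C) (ht : A2 C tm) (h : ¬ Dom C) :
    ∃ k, NU C k := by
  classical
  simp only [Dom] at h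
  push Not at h
  obtain ⟨n, f, hf, hs⟩ := h
  have npos := hC.npos hf
  choose s hs1 hs2 using hs
  have rf := rep_bf hC hc (hC.acts hf)
  have hm : ∀ i : Fin n, ∃ h : (Fin n → D3) → D3, Acts C h ∧ ∀ y c (b : Fin n → Bool),
      (∀ j ∈ Finset.univ.filter (fun j => s j i = false), y j = lv c (b j)) →
      h y = lv c (decide (∀ j ∈ Finset.univ.filter (fun j => s j i = false), b j = true)) :=
    fun i => by
      convert meet_fin ht (Finset.univ.filter (fun j => s j i = false))
        ⟨i, by simpa using hs2 i⟩ (fun j (y : Fin n → D3) => y j) (fun j => Acts.proj j)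
  choose m hm1 hm2 using hm
  have hg : Acts C (fun x => f fun i => m i x) := (hC.acts hf).comp hm1
  set g : (Fin n → D3) → D3 := fun x => f fun i => m i x with hgdef
  have rg : ∀ c (b : Fin n → Bool), ∃ b', g (fun j => lv c (b j)) = lv c b' := by
    intro c b
    refine ⟨_, ((rep_bf hC hc hg).lv c b)⟩
  have g1 : ∀ c (b : Fin n → Bool) (j0 : Fin n), (∀ j, j ≠ j0 → b j = true) →
      g (fun j => lv c (b j)) = c + 1 := by
    intro c b j0 hb
    by_cases hb0 : b j0 = true
    · have : (fun j => lv c (b j)) = fun _ => c + 1 := by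
        funext j
        by_cases hj : j = j0
        · rw [hj, hb0]; rfl
        · rw [hb j hj]; rfl
      rw [this]
      exact hC.aidem hg _
    · have : (fun i => m i (fun j => lv c (b j))) = fun i => lv c (s j0 i) := by
        funext i
        rw [hm2 i _ c b (fun _ _ => rfl)]
        congr 1
        by_cases hsi : s j0 i = true
        · rw [hsi, decide_eq_true_iff]
          intro j hj
          apply hb
          rintro rfl
          simp [hsi] at hj
        · rw [Bool.not_eq_true] at hsi
          rw [hsi, decide_eq_false_iff_not]
          intro hcon
          exact hb0 (hcon j0 (by simp [hsi]))
      simp only [hgdef, this]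
      rw [rf.lv, hs1]
      rfl
  obtain ⟨h, hh, hh2⟩ := meet_fin ht (Finset.univ : Finset (Fin (n + 1))) ⟨0, Finset.mem_univ _⟩
    (fun l (x : Fin (n + 1) → D3) => g (fun j => x (l.succAbove j))) (fun l => hg.minor _)
  refine ⟨n, h, hC.mem hh, ?_⟩
  intro d e p
  have tri : e = d ∨ e = d + 1 ∨ d = e + 1 := by revert d e; decide
  rcases tri with rfl | rfl | rfl
  · rw [Function.update_eq_self]
    exact hC.aidem hh _
  · let b : Fin (n + 1) → Bool := fun q => decide (q = p)
    have e1 : Function.update (fun _ : Fin (n + 1) => d) p (d + 1) = fun q => lv d (b q) := by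
      funext q
      by_cases hq : q = p
      · subst hq; simp [b, lv]
      · simp [b, lv, hq]
    choose β hβ using fun l : Fin (n + 1) => rg d (fun j => b (l.succAbove j))
    rw [e1, hh2 _ d β (fun l _ => hβ l)]
    have : β p = false := by
      have := hβ p
      have e2 : (fun j => lv d (b (p.succAbove j))) = fun _ => d := by
        funext j
        simp [b, lv, Fin.succAbove_ne]
      rw [e2, hC.aidem hg] at this
      exact (lv_inj (b := false) this).symm
    have : ¬ (∀ t ∈ (Finset.univ : Finset (Fin (n + 1))), β t = true) := by
      intro hcon
      rw [hcon p (Finset.mem_univ _)] at this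
      cases this
    simp only [this, decide_false]; rfl
  · let b : Fin (n + 1) → Bool := fun q => decide (q ≠ p)
    have e1 : Function.update (fun _ : Fin (n + 1) => e + 1) p e = fun q => lv e (b q) := by
      funext q
      by_cases hq : q = p
      · subst hq; simp [b, lv]
      · simp [b, lv, hq]
    rw [e1, hh2 _ e (fun _ => true)]
    · simp [lv]
    · intro l _
      by_cases hl : ∃ j0, l.succAbove j0 = p
      · obtain ⟨j0, hj0⟩ := hl
        apply g1 e (fun j => b (l.succAbove j)) j0
        intro j hj
        simp only [b, decide_eq_true_iff]
        rw [← hj0]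
        exact fun h => hj (Fin.succAbove_right_injective h)
      · push Not at hl
        apply g1 e (fun j => b (l.succAbove j)) ⟨0, npos⟩
        intro j hj
        simp only [b, decide_eq_true_iff]
        exact hl j

def HasJ (C : ∀ n, Set (Op n)) : Prop := ∃ j, A3 C j ∧ JJ j
def HasG (C : ∀ n, Set (Op n)) : Prop := ∃ j, A3 C j ∧ JG j

theorem hasJ_of (hC : Good C) (hc : Cons C) (ht : A2 C tm) (hd : Dom C) (h : ¬ Mono C) :
    HasJ C := by
  classical
  simp only [Mono] at h
  push Not at h
  obtain ⟨n, f, hf, a, b, hab, ha, hb⟩ := h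
  rw [ne_eq, Bool.not_eq_true] at hb
  obtain ⟨i1, hi1⟩ := hd n f hf
  have hai := hi1 a ha
  have rf := rep_bf hC hc (hC.acts hf)
  refine ⟨_, A3.sub hC hf (h := fun i x y z => if a i then x else if b i then y else tm y z)
    (fun i => A3.ite _ A3.p1 (A3.ite _ A3.p2 (ht.comp3 A3.p2 A3.p3))), ?_⟩
  intro c x y z
  have e : (fun i => if a i then lv c x else if b i then lv c y else tm (lv c y) (lv c z)) =
      fun i => lv c (if a i then x else if b i then y else y && z) := by
    funext i
    rw [tm_lv]
    split_ifs <;> rfl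
  simp only [e]
  rw [rf.lv]
  congr 1
  cases x
  · rw [Bool.false_and, Bool.eq_false_iff]
    intro hcon
    have := hi1 _ hcon
    simp [hai] at this
  · cases y
    · rw [← ha.trans (by simp : true = (true && (!false || z)))]
      congr 1
      funext i
      cases h : a i <;> simp
    · cases z
      · rw [← hb.trans (by simp : false = (true && (!true || false)))]
        congr 1
        funext i
        cases h : a i
        · simp
        · simp [hab i h]
      · rw [← (bf_univ hC hf).trans (by simp : true = (true && (!true || true)))]
        congr 1
        funext i
        simp

def IsMeet {n : ℕ} (f : Op n) (S : Set (Fin n)) : Prop :=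
  ∀ s, bf f s = true ↔ ∀ i ∈ S, s i = true

theorem hasG_of (hC : Good C) (hc : Cons C) (ht : A2 C tm) (hm : Mono C)
    (h : ¬ ∀ n, ∀ f ∈ C n, ∃ S, IsMeet f S) : HasG C := by
  classical
  push Not at h
  obtain ⟨n, f, hf, hS⟩ := h
  have rf := rep_bf hC hc (hC.acts hf)
  obtain ⟨a, b, ha, hb, hab⟩ : ∃ a b : Fin n → Bool, bf f a = true ∧ bf f b = true ∧
      bf f (fun i => a i && b i) = false := by
    by_contra hcon
    push Not at hcon
    simp only [ne_eq, Bool.not_eq_false] at hcon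
    have ind : ∀ T : Finset (Fin n → Bool), (∀ s ∈ T, bf f s = true) →
        bf f (fun i => decide (∀ s ∈ T, s i = true)) = true := by
      intro T
      induction T using Finset.induction_on with
      | empty => intro _; simpa using bf_univ hC hf
      | insert t T ht ih =>
        intro hT
        have := hcon t _ (hT t (Finset.mem_insert_self _ _))
          (ih (fun s hs => hT s (Finset.mem_insert_of_mem hs)))
        convert this using 2
        funext i
        rw [← Bool.decide_coe (t i), ← Bool.decide_and]
        simp
    refine hS {i | ∀ s, bf f s = true → s i = true} ?_
    intro s
    refine ⟨fun h i hi => hi s h, fun h => ?_⟩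
    refine hm n f hf _ s ?_ (ind (Finset.univ.filter (fun s => bf f s = true)) (by simp))
    intro i hi
    apply h
    simpa using hi
  refine ⟨_, A3.sub hC hf (h := fun i x y z => if a i then (if b i then x else tm x y) else
    if b i then tm x z else tm x (tm y z))
    (fun i => A3.ite _ (A3.ite _ A3.p1 (ht.comp3 A3.p1 A3.p2)) (A3.ite _ (ht.comp3 A3.p1 A3.p3)
      (ht.comp3 A3.p1 (ht.comp3 A3.p2 A3.p3)))), ?_⟩
  intro c x y z
  have e : (fun i => if a i then (if b i then lv c x else tm (lv c x) (lv c y)) else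
    if b i then tm (lv c x) (lv c z) else tm (lv c x) (tm (lv c y) (lv c z))) =
      fun i => lv c (if a i then (if b i then x else x && y) else if b i then x && z
        else x && (y && z)) := by
    funext i
    simp only [tm_lv]
    split_ifs <;> rfl
  simp only [e]
  rw [rf.lv]
  congr 1
  cases x
  · rw [← (bf_empty hC hf).trans (by simp : false = (false && (y || z)))]
    congr 1
    funext i
    simp
  · cases y <;> cases z
    · rw [← hab.trans (by simp : false = (true && (false || false)))]
      congr 1
      funext i
      cases a i <;> cases b i <;> rfl
    · rw [← hb.trans (by simp : true = (true && (false || true)))]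
      congr 1
      funext i
      cases a i <;> cases b i <;> rfl
    · rw [← ha.trans (by simp : true = (true && (true || false)))]
      congr 1
      funext i
      cases a i <;> cases b i <;> rfl
    · rw [← (bf_univ hC hf).trans (by simp : true = (true && (true || true)))]
      congr 1
      funext i
      cases a i <;> cases b i <;> rfl

end SelfDual


namespace SelfDual
variable {C C' : ∀ n, Set (Op n)} {I J X : Type}

theorem MeetOn.lv {S : Set I} {p : (I → D3) → D3} (hp : MeetOn S p) (c : D3) (s : I → Bool) :
    ∃ b, (b = true ↔ ∀ i ∈ S, s i = true) ∧ p (fun i => lv c (s i)) = SelfDual.lv c b := by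
  classical
  have := hp (fun i => SelfDual.lv c (s i)) c (fun i _ => by cases s i <;> simp [SelfDual.lv])
  refine ⟨decide (∀ i ∈ S, s i = true), by simp, ?_⟩
  by_cases h : ∀ i ∈ S, s i = true
  · rw [this.1 (fun i hi => by rw [h i hi]; rfl), decide_eq_true h]; rfl
  · rw [decide_eq_false h]
    push Not at h
    obtain ⟨i, hi, h⟩ := h
    exact this.2 ⟨i, hi, by rw [Bool.eq_false_iff.2 h]; rfl⟩

theorem JJ.jg {j : D3 → D3 → D3 → D3} (h : JJ j) : JG (fun x y z => j x (j x y z) z) := by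
  intro c x y z
  simp only [h c]
  congr 1
  cases x <;> cases y <;> cases z <;> rfl

theorem j_le (hC : Good C) (hC' : Good C') (hc : Cons C) (hd : Dom C) (ht : A2 C' tm)
    (hj : HasJ C') : ∀ n, ∀ f ∈ C n, f ∈ C' n := by
  classical
  intro n f hf
  obtain ⟨j, hj, hJ⟩ := hj
  obtain ⟨i1, hi1⟩ := hd n f hf
  have rf := rep_bf hC hc (hC.acts hf)
  have ne : (Finset.univ : Finset (Fin n)).Nonempty := ⟨i1, Finset.mem_univ _⟩
  obtain ⟨m, hm, hm2⟩ := meet_fin ht Finset.univ ne (fun i (y : Fin n → D3) => y i)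
    (fun i => Acts.proj i)
  have hδ : ∀ T : Fin n → Bool, ∃ δ : (Fin n → D3) → D3, Acts C' δ ∧
      ∀ c (s : Fin n → Bool), ∃ b, (b = true ↔ ∀ i, if T i = true then s i1 = true ∧ s i = true else
        s i1 = true ∧ (s i = true → ∀ k, s k = true)) ∧ δ (fun i => lv c (s i)) = lv c b := by
    intro T
    obtain ⟨δ, h1, h2⟩ := meet_fin ht Finset.univ ne
      (fun i (y : Fin n → D3) => if T i = true then tm (y i1) (y i) else j (y i1) (y i) (m y))
      (fun i => by
        by_cases h : T i = true
        · simp only [h, if_true]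
          exact ht.app (Acts.proj _) (Acts.proj _)
        · simp only [h]
          exact hj.app (Acts.proj _) (Acts.proj _) hm)
    refine ⟨δ, h1, ?_⟩
    intro c s
    have := h2 (fun i => lv c (s i)) c (fun i => if T i = true then s i1 && s i else
      s i1 && (!s i || decide (∀ k ∈ Finset.univ, s k = true))) (by
        intro i _
        simp only [hm2 _ c s (fun _ _ => rfl), tm_lv, hJ c]
        split_ifs
        · rfl
        · congr)
    refine ⟨_, ?_, this⟩
    refine Iff.trans (by simp only [decide_eq_true_eq]) (forall_congr' (p := fun i =>
      i ∈ Finset.univ → (if T i = true then s i1 && s i else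
      s i1 && (!s i || decide (∀ k ∈ Finset.univ, s k = true))) = true) ?_)
    refine fun i => ?_
    simp only [Finset.mem_univ, true_imp_iff]
    split_ifs
    · simp
    · cases s i <;> simp
  choose δ hδ1 hδ2 using hδ
  obtain ⟨f0, h1, h2⟩ := join_fin (hj.comp A3.p1 (hj.comp A3.p1 A3.p2 A3.p3) A3.p3) hJ.jg
    (Finset.univ.filter (fun T => bf f T = true)) ⟨fun _ => true, by simp [bf_univ hC hf]⟩ δ hδ1
    (Acts.proj (C := C') i1)
  have rf0 : Rep f0 (bf f) := by
    intro c s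
    choose b hb1 hb2 using fun T => hδ2 T c s
    have := h2 (fun i => lv c (s i)) c (s i1) b rfl (fun T _ => hb2 T)
    change f0 (fun i => lv c (s i)) = lv c (bf f s)
    rw [this]
    congr 1
    rw [Bool.eq_iff_iff, Bool.and_eq_true, decide_eq_true_iff]
    constructor
    · rintro ⟨hs, T, hT, hbT⟩
      rw [Finset.mem_filter] at hT
      have hT1 := hi1 T hT.2
      rw [hb1] at hbT
      by_cases hall : ∀ k, s k = true
      · rw [show s = fun _ => true from funext hall]
        exact bf_univ hC hf
      · rw [show s = T from funext fun i => ?_]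
        · exact hT.2
        · have := hbT i
          split_ifs at this with hTi
          · rw [hTi, this.2]
          · have h3 : ¬ s i = true := fun h => hall (this.2 h)
            rw [Bool.not_eq_true] at h3 hTi
            rw [h3, hTi]
    · intro hs
      refine ⟨hi1 s hs, s, by simp [hs], ?_⟩
      rw [hb1]
      intro i
      split_ifs with h
      · exact ⟨hi1 s hs, h⟩
      · exact ⟨hi1 s hs, fun h' => absurd h' h⟩
  have : Nonempty (Fin n) := ⟨i1⟩
  have round : ∀ g : (Fin n → D3) → D3, Acts C' g → Rep g (bf f) → ∃ g' : (Fin n → D3) → D3,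
      Acts C' g' ∧ Rep g' (bf f) ∧ ∀ a : Fin n → D3, (∀ u, ∃ i, a i = u) →
        g' a = if g a = f a then g a else g a + 2 := by
    intro g hg rg
    have q1 : Equi g := fun a => hC'.asd hg a
    have q2 : Equi (fun a => if g a = f a then g a else g a + 2) := by
      intro a
      simp only
      rw [q1 a, hC.sd n f hf a]
      generalize g a = x
      generalize f a = y
      clear * -
      revert x y; decide
    obtain ⟨p, hp, mp, ep⟩ := lemmaT hC' ht q1
    obtain ⟨q, hq, mq, eq⟩ := lemmaT hC' ht q2
    refine ⟨_, hj.app hg hp hq, ?_, ?_⟩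
    · intro c s
      change j (g fun i => lv c (s i)) (p fun i => lv c (s i)) (q fun i => lv c (s i)) =
        lv c (bf f s)
      obtain ⟨b, hb, e⟩ := mp.lv c s
      obtain ⟨b', hb', e'⟩ := mq.lv c s
      have : b = b' := by rw [Bool.eq_iff_iff, hb, hb']
      rw [e, e', rg.lv, hJ, this]
      cases b' <;> cases bf f s <;> rfl
    · intro a ha
      simp only [ep a ha, eq a ha]
      have k1 := hJ (g a + 2) true true false
      have k2 := hJ (g a) false false false
      have k3 : lv (g a + 2) true = g a := by generalize g a = x; clear * -; revert x; decide
      rw [k3] at k1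
      split_ifs
      · exact k2
      · exact k1
  obtain ⟨g1, hg1, rg1, e1⟩ := round f0 h1 rf0
  obtain ⟨g2, hg2, rg2, e2⟩ := round g1 hg1 rg1
  have : g2 = f := by
    funext a
    rcases tw_or_surj a with ⟨c, s, rfl⟩ | ha
    · rw [rg2, rf]
    · rw [e2 a ha, e1 a ha]
      generalize f0 a = x
      generalize f a = y
      clear * -
      revert x y; decide
  rw [← this]
  exact hC'.mem hg2

/-- value of a function with meet restriction at a point with two values on `S` -/
theorem IsMeet.ne {n : ℕ} (hC : Good C) {f : Op n} (hf : f ∈ C n) {S : Set (Fin n)}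
    (hS : IsMeet f S) : S.Nonempty := by
  by_contra h
  rw [Set.not_nonempty_iff_eq_empty] at h
  have := (hS (fun _ => false)).2 (by simp [h])
  rw [bf_empty hC hf] at this
  cases this

def Pure (C : ∀ n, Set (Op n)) : Prop :=
  ∀ n, ∀ f ∈ C n, ∃ S, IsMeet f S ∧ ∀ a a', (∀ i ∈ S, a i = a' i) → f a = f a'

theorem surj_or (S : Set I) (a : I → D3) :
    (∀ u, ∃ i ∈ S, a i = u) ∨ ∃ c, ∀ i ∈ S, a i = c ∨ a i = c + 1 := by
  by_cases h : ∀ u, ∃ i ∈ S, a i = u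
  · exact Or.inl h
  · right
    push Not at h
    obtain ⟨u, hu⟩ := h
    refine ⟨u + 1, fun i hi => ?_⟩
    have := hu i hi
    revert this
    generalize a i = x
    clear * -
    revert x u; decide

theorem pure_le (hC : Good C) (hC' : Good C') (hc : Cons C) (hp : Pure C) (ht : A2 C' tm) :
    ∀ n, ∀ f ∈ C n, f ∈ C' n := by
  classical
  intro n f hf
  obtain ⟨S, hS, hd⟩ := hp n f hf
  have rf := rep_bf hC hc (hC.acts hf)
  obtain ⟨i0, hi0⟩ := hS.ne hC hf
  let c : (S → D3) → D3 := fun x => f (fun i => if h : i ∈ S then x ⟨i, h⟩ else x ⟨i0, hi0⟩)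
  have hcE : Equi c := by
    intro x
    simp only [c]
    rw [← hC.sd n f hf]
    congr 1
    funext i
    split_ifs <;> rfl
  obtain ⟨g, hg, mg, eg⟩ := lemmaTS hC' ht S ⟨i0, hi0⟩ hcE
  have : g = f := by
    funext a
    rcases surj_or S a with h | ⟨d, h⟩
    · rw [eg a h]
      apply hd
      intro i hi
      simp [hi]
    · have e : f a = f (fun i => lv d (if i ∈ S then decide (a i = d + 1) else false)) := by
        apply hd
        intro i hi
        have : d ≠ d + 1 := by clear * -; revert d; decide
        rcases h i hi with h' | h' <;> simp [lv, h', hi, this]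
      rw [e, rf.lv]
      obtain ⟨p, q⟩ := mg a d h
      by_cases hall : ∀ i ∈ S, a i = d + 1
      · rw [p hall, (hS _).2 (fun i hi => by simp [hall i hi, hi])]; rfl
      · have h0 : ∃ i ∈ S, a i = d := by
          push Not at hall
          obtain ⟨i, hi, h'⟩ := hall
          exact ⟨i, hi, (h i hi).resolve_right h'⟩
        rw [q h0]
        have : ¬ bf f (fun i => if i ∈ S then decide (a i = d + 1) else false) = true := by
          rw [hS]
          intro h2
          apply hall
          intro i hi
          have := h2 i hi
          simpa [hi] using this
        rw [Bool.eq_false_iff.2 this]; rfl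
  rw [← this]
  exact hC'.mem hg

/-- full ternary meets with prescribed value at (0,1,2) -/
theorem tern (hC : Good C) (ht : A2 C tm) (u : D3) :
    ∃ M, A3 C M ∧ (∀ e, M e e e = e) ∧ M 0 1 2 = u := by
  obtain ⟨f, hf, hm, e⟩ := lemmaT hC ht (I := Fin 3) (equi_proj (0 : Fin 3) u)
  refine ⟨_, A3.of_acts hf, fun e => ?_, ?_⟩
  · rw [show ![e, e, e] = fun _ => e from by ext i; fin_cases i <;> rfl]
    exact hC.aidem hf e
  · rw [e]
    · simp
    · intro v
      exact ⟨v, by fin_cases v <;> rfl⟩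

theorem hasV_of_G (hC : Good C) (ht : A2 C tm) (hG : HasG C) : HasV C := by
  obtain ⟨G, hG, hJ⟩ := hG
  obtain ⟨M, hM, hM1, hM2⟩ := tern hC ht 0
  obtain ⟨M', hM', hM1', hM2'⟩ := tern hC ht 2
  refine ⟨fun x y z w => G (M x y z) (M' x y z) w, ?_, ?_, ?_⟩
  · intro n p q r s hp hq hr hs
    exact hG n _ _ _ (hM n _ _ _ hp hq hr) (hM' n _ _ _ hp hq hr) hs
  · intro e w
    simp only [hM1, hM1']
    rcases (show w = e ∨ w = e + 1 ∨ e = w + 1 by clear * -; revert e w; decide) with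
      rfl | rfl | rfl
    · exact hJ w false false false
    · exact hJ e false false true
    · exact hJ w true true false
  · refine ⟨0, 2, ?_⟩
    simp only [hM2, hM2']
    have k1 := hJ 2 true false true
    have k2 := hJ 2 true false false
    simp [lv] at k1 k2
    rw [k1, k2]
    decide

theorem pure_or_V (hC : Good C) (hc : Cons C) (ht : A2 C tm)
    (hm : ∀ n, ∀ f ∈ C n, ∃ S, IsMeet f S) (hv : ¬ HasV C) : Pure C := by
  classical
  intro n f hf
  obtain ⟨S, hS⟩ := hm n f hf
  refine ⟨S, hS, ?_⟩
  have rf := rep_bf hC hc (hC.acts hf)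
  obtain ⟨i0, hi0⟩ := hS.ne hC hf
  have one : ∀ y l w, l ∉ S → f (Function.update y l w) = f y := by
    intro y l w hl
    by_contra hne
    apply hv
    choose M hM hM1 hM2 using tern hC ht
    refine ⟨fun x y' z w => f (fun i => if i = l then w else M (y i) x y' z), ?_, ?_, ?_⟩
    · intro m p q r s hp hq hr hs
      refine hC.clone.comp_mem n m f (fun i x => if i = l then s x else M (y i) (p x) (q x) (r x))
        hf ?_
      intro i
      by_cases h : i = l
      · simpa only [h, if_true] using hs
      · simp only [h, if_false]
        exact hM (y i) m _ _ _ hp hq hr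
    · intro e w
      simp only [hM1]
      rcases (show w = e ∨ w = e + 1 ∨ e = w + 1 by clear * -; revert e w; decide) with
        rfl | rfl | rfl
      · simp only [ite_self]
        exact hC.idem n f hf w
      · have : (fun i => if i = l then e + 1 else e) = fun i => lv e (decide (i = l)) := by
          funext i; simp [lv]
        rw [this, rf.lv]
        have : ¬ bf f (fun i => decide (i = l)) = true := by
          rw [hS]
          intro h
          have := h i0 hi0
          simp at this
          exact hl (this ▸ hi0)
        rw [Bool.eq_false_iff.2 this]; rfl
      · have : (fun i => if i = l then w else w + 1) = fun i => lv w (decide (i ≠ l)) := by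
          funext i; by_cases h : i = l <;> simp [lv, h]
        rw [this, rf.lv]
        have : bf f (fun i => decide (i ≠ l)) = true := by
          rw [hS]
          intro i hi
          simp only [decide_eq_true_iff]
          rintro rfl
          exact hl hi
        rw [this]; rfl
    · refine ⟨w, y l, ?_⟩
      simp only [hM2]
      have e1 : ∀ w, (fun i => if i = l then w else y i) = Function.update y l w := by
        intro w
        funext i
        simp [Function.update_apply]
      rw [e1, e1, Function.update_eq_self]
      exact hne
  intro a a' haa
  have ind : ∀ T : Finset (Fin n), (∀ i ∈ T, i ∉ S) →
      f (fun i => if i ∈ T then a' i else a i) = f a := by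
    intro T
    induction T using Finset.induction_on with
    | empty => intro _; simp
    | insert l T hl ih =>
      intro hT
      rw [← ih (fun i hi => hT i (Finset.mem_insert_of_mem hi)),
        ← one (fun i => if i ∈ T then a' i else a i) l (a' l) (hT l (Finset.mem_insert_self _ _))]
      congr 1
      funext i
      by_cases h : i = l
      · subst h; simp
      · simp [h]
  rw [← ind (Finset.univ.filter (fun i => i ∉ S)) (by simp)]
  congr 1
  funext i
  by_cases h : i ∈ S
  · simp [h, haa i h]
  · simp [h]

end SelfDual


namespace SelfDual
variable {C C' : ∀ n, Set (Op n)} {I J X : Type}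

def ee (f : (I → D3) → D3) (k : D3) (a : I → D3) : Bool :=
  bf f (fun i => decide (a i = k ∨ a i = k + 1))

def sel3 (e0 e1 e2 : Bool) (x : D3) : D3 :=
  if e0 && !e1 then 0 else if e1 && !e2 then 1 else if e2 && !e0 then 2 else x

def xi (f : (I → D3) → D3) (a : I → D3) : D3 :=
  sel3 (ee f 0 a) (ee f 1 a) (ee f 2 a) (f a)

theorem ee_shift (f : (I → D3) → D3) (k : D3) (a : I → D3) :
    ee f (k + 1) (fun i => a i + 1) = ee f k a := by
  simp only [ee, add_left_inj]

theorem xi_equi {f : (I → D3) → D3} (hf : Equi f) : Equi (xi f) := by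
  intro a
  have h0 : ee f 0 (fun i => a i + 1) = ee f 2 a := ee_shift f 2 a
  have h1 : ee f 1 (fun i => a i + 1) = ee f 0 a := ee_shift f 0 a
  have h2 : ee f 2 (fun i => a i + 1) = ee f 1 a := ee_shift f 1 a
  simp only [xi, h0, h1, h2, hf a]
  generalize ee f 0 a = e0
  generalize ee f 1 a = e1
  generalize ee f 2 a = e2
  generalize f a = x
  clear * -
  revert e0 e1 e2 x; decide

theorem xi_desc {f : (I → D3) → D3} {a : I → D3} {v : D3} (h : ee f v a = true)
    (h' : ee f (v + 1) a = false) : xi f a = v := by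
  simp only [xi]
  rcases d3c v with rfl | rfl | rfl
  · change ee f 1 a = false at h'
    rw [h, h']; rfl
  · change ee f 2 a = false at h'
    rw [h, h']
    generalize ee f 0 a = e0; cases e0 <;> rfl
  · change ee f 0 a = false at h'
    rw [h, h']
    generalize ee f 1 a = e0; cases e0 <;> rfl

theorem xi_or {f : (I → D3) → D3} {i1 : I} (hd : ∀ s, bf f s = true → s i1 = true) (a : I → D3) :
    (∃ v, ee f v a = true ∧ ee f (v + 1) a = false) ∨ ((∀ v, ee f v a = false) ∧ xi f a = f a) := by
  by_cases h : ∀ v, ee f v a = false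
  · right
    refine ⟨h, ?_⟩
    simp [xi, h, sel3]
  · left
    by_contra hcon
    push Not at hcon h
    simp only [ne_eq, Bool.not_eq_false] at hcon h
    obtain ⟨u, hu⟩ := h
    have h1 := hcon u hu
    have h2 := hcon _ h1
    have k0 := hd _ hu
    have k1 := hd _ h1
    have k2 := hd _ h2
    simp only [decide_eq_true_iff] at k0 k1 k2
    revert k0 k1 k2
    generalize a i1 = x
    clear * -
    revert u x; decide

def Meets (C : ∀ n, Set (Op n)) : Prop := ∀ n, ∀ f ∈ C n, ∃ S, IsMeet f S

theorem ee_meet {n : ℕ} {f : Op n} {S : Set (Fin n)} (hS : IsMeet f S) (k : D3) (a : Fin n → D3) :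
    ee f k a = true ↔ ∀ i ∈ S, a i = k ∨ a i = k + 1 := by
  rw [ee, hS]
  simp

theorem v_hom (hC : Good C) (hC' : Good C') (hm : Meets C) (ht : A2 C' tm) (hv : HasV C') :
    MHom C C' := by
  classical
  refine ⟨fun n f => xi f, ?_, fun _ _ _ _ _ => rfl⟩
  intro n f hf
  obtain ⟨S, hS⟩ := hm n f hf
  have hne := hS.ne hC hf
  obtain ⟨g, hg, mg, eg⟩ := lemmaV hC' ht hv S hne (xi_equi (fun a => hC.sd n f hf a))
  have : g = xi f := by
    funext a
    rcases surj_or S a with h | ⟨d, h⟩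
    · exact eg a h
    · obtain ⟨p, q⟩ := mg a d h
      have hed := (ee_meet hS d a).2 h
      by_cases hall : ∀ i ∈ S, a i = d + 1
      · rw [p hall]
        symm
        apply xi_desc
        · rw [ee_meet hS]
          exact fun i hi => Or.inl (hall i hi)
        · rw [Bool.eq_false_iff, ne_eq, ee_meet hS]
          intro hcon
          obtain ⟨i, hi⟩ := hne
          have := hcon i hi
          rw [hall i hi] at this
          clear * - this
          revert d; decide
      · push Not at hall
        obtain ⟨i, hi, h'⟩ := hall
        have h0 := (h i hi).resolve_right h'
        rw [q ⟨i, hi, h0⟩]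
        symm
        apply xi_desc hed
        rw [Bool.eq_false_iff, ne_eq, ee_meet hS]
        intro hcon
        have := hcon i hi
        rw [h0] at this
        clear * - this
        revert d; decide
  change xi f ∈ C' n
  rw [← this]
  exact hC'.mem hg

theorem m_hom (hC : Good C) (hC' : Good C') (hd : Dom C) (hmo : Mono C) (ht : A2 C' tm)
    (hG : HasG C') : MHom C C' := by
  classical
  refine ⟨fun n f => xi f, ?_, fun _ _ _ _ _ => rfl⟩
  intro n f hf
  have hv := hasV_of_G hC' ht hG
  obtain ⟨G, hG, hJ⟩ := hG
  obtain ⟨i1, hi1⟩ := hd n f hf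
  have fE : Equi f := fun a => hC.sd n f hf a
  have FE := xi_equi fE
  -- monotone: a set with `bf` true having values in `{d, d+1}`
  have mon : ∀ (M : Fin n → Bool) (a : Fin n → D3) d, bf f M = true →
      (∀ i, M i = true → a i = d ∨ a i = d + 1) → ee f d a = true := by
    intro M a d hM h
    refine hmo n f hf M _ ?_ hM
    intro i hi
    simpa using h i hi
  have ne : ∀ M : Fin n → Bool, bf f M = true → ({i | M i = true} : Set (Fin n)).Nonempty :=
    fun M hM => ⟨i1, hi1 M hM⟩
  have round : ∀ (X : (Fin n → D3) → D3) (c : (Fin n → D3) → D3), Acts C' X → Equi c →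
      (∀ a v, ee f v a = true → ee f (v + 1) a = false → (X a = a i1 ∨ X a = v) ∧ c a = v) →
      ∃ X' : (Fin n → D3) → D3, Acts C' X' ∧
        (∀ a v, ee f v a = true → ee f (v + 1) a = false → X' a = v) ∧
        (∀ a, (∀ v, ee f v a = false) → X' a = tm (X a) (c a)) := by
    intro X c hX hc hXc
    have hm : ∀ M : Fin n → Bool, ∃ m : (Fin n → D3) → D3, Acts C' m ∧ (bf f M = true →
        MeetOn {i | M i = true} m ∧
        ∀ a : Fin n → D3, (∀ u, ∃ i ∈ ({i | M i = true} : Set (Fin n)), a i = u) → m a = c a) := by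
      intro M
      by_cases hM : bf f M = true
      · obtain ⟨m, h1, h2, h3⟩ := lemmaV hC' ht hv _ (ne M hM) hc
        exact ⟨m, h1, fun _ => ⟨h2, h3⟩⟩
      · exact ⟨_, Acts.proj i1, fun h => absurd h hM⟩
    choose m hm1 hm2 using hm
    obtain ⟨X', h1, h2⟩ := join_fin hG hJ (Finset.univ.filter (fun M => bf f M = true))
      ⟨fun _ => true, by simp [bf_univ hC hf]⟩ m hm1 hX
    refine ⟨X', h1, ?_, ?_⟩
    · intro a v hev hev'
      obtain ⟨hXa, hca⟩ := hXc a v hev hev'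
      have val : ∀ M, bf f M = true → m M a = v ∨ (m M a = v + 2 ∧ ee f (v + 2) a = true) := by
        intro M hM
        obtain ⟨mm, em⟩ := hm2 M hM
        rcases surj_or {i | M i = true} a with h | ⟨d, h⟩
        · left; rw [em a h, hca]
        · have ed := mon M a d hM h
          have hdv : d = v ∨ d = v + 2 := by
            have : d ≠ v + 1 := by rintro rfl; rw [hev'] at ed; cases ed
            revert this; clear * -; revert d v; decide
          obtain ⟨p, q⟩ := mm a d h
          by_cases hall : ∀ i ∈ ({i | M i = true} : Set (Fin n)), a i = d + 1
          · rcases hdv with rfl | rfl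
            · exfalso
              have := mon M a (d + 1) hM (fun i hi => Or.inl (hall i hi))
              rw [hev'] at this; cases this
            · left
              rw [p hall]
              clear * -; revert v; decide
          · push Not at hall
            obtain ⟨i, hi, h'⟩ := hall
            rw [q ⟨i, hi, (h i hi).resolve_right h'⟩]
            rcases hdv with rfl | rfl
            · left; rfl
            · right; exact ⟨rfl, ed⟩
      have sp : ∃ M, bf f M = true ∧ m M a = v := by
        refine ⟨_, hev, ?_⟩
        obtain ⟨mm, em⟩ := hm2 _ hev
        have hv2 : ∀ i ∈ ({i | decide (a i = v ∨ a i = v + 1) = true} : Set (Fin n)),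
            a i = v ∨ a i = v + 1 := by
          intro i hi
          exact of_decide_eq_true hi
        obtain ⟨p, q⟩ := mm a v hv2
        apply q
        by_contra hcon
        push Not at hcon
        have := mon _ a (v + 1) hev (fun i hi => Or.inl ((hv2 i hi).resolve_left (hcon i hi)))
        rw [hev'] at this; cases this
      have ai := hi1 _ hev
      simp only [decide_eq_true_iff] at ai
      have v3 : v + 2 + 1 = v := by clear * -; revert v; decide
      by_cases hXv : X a = v
      · have := h2 a (v + 2) true (fun M => decide (m M a = v)) (by rw [hXv]; exact v3.symm) (by
          intro M hM
          rw [Finset.mem_filter] at hM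
          have hvv : v + 2 ≠ v := by clear * -; revert v; decide
          rcases val M hM.2 with e | ⟨e, -⟩
          · simp only [e, lv, decide_true, if_true]; exact v3.symm
          · simp only [e, lv, hvv, decide_false]; rfl)
        rw [this]
        have h3 : ∃ t ∈ Finset.univ.filter (fun M => bf f M = true), decide (m t a = v) = true := by
          obtain ⟨M, hM, e⟩ := sp
          exact ⟨M, by simp [hM], by simp [e]⟩
        simp only [h3, decide_true]
        exact v3
      · have hX1 : X a = a i1 := hXa.resolve_right hXv
        rw [hX1] at hXv
        have ai' := ai.resolve_left hXv
        have := h2 a v true (fun M => false) (by rw [hX1, ai']; rfl) (by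
          intro M hM
          rw [Finset.mem_filter] at hM
          rcases val M hM.2 with e | ⟨e, e2⟩
          · exact e
          · exfalso
            have := hi1 _ e2
            simp only [decide_eq_true_iff] at this
            rw [ai'] at this
            clear * - this
            revert v; decide)
        rw [this]
        simp [lv]
    · intro a ha
      have val : ∀ M, bf f M = true → m M a = c a := by
        intro M hM
        rcases surj_or {i | M i = true} a with h | ⟨d, h⟩
        · exact (hm2 M hM).2 a h
        · have ed := mon M a d hM h
          rw [ha] at ed; cases ed
      have h3 : ∃ t ∈ Finset.univ.filter (fun M => bf f M = true), True :=
          ⟨fun _ => true, by simp [bf_univ hC hf], trivial⟩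
      rcases (show X a = c a ∨ X a = c a + 1 ∨ c a = X a + 1 by
        generalize X a = x; generalize c a = y; clear * -; revert x y; decide) with h | h | h
      · have := h2 a (c a) false (fun _ => false) h (fun M hM => val M (Finset.mem_filter.1 hM).2)
        rw [this, h, (tm_low _).2.2]; rfl
      · have := h2 a (c a) true (fun _ => false) h (fun M hM => val M (Finset.mem_filter.1 hM).2)
        rw [this, h, (tm_low _).2.1]; simp [lv]
      · have := h2 a (X a) false (fun _ => true) rfl
          (fun M hM => (val M (Finset.mem_filter.1 hM).2).trans h)
        rw [this, h, (tm_low _).1]; rfl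
  have t3 : ∀ a, (∀ v, ee f v (fun i => a i + 1) = false) ↔ (∀ v, ee f v a = false) := by
    intro a
    constructor
    · intro h v
      rw [← ee_shift]; exact h _
    · intro h v
      have : v = v + 2 + 1 := by clear * -; revert v; decide
      rw [this, ee_shift]; exact h _
  let cc : ((Fin n → D3) → D3) → (Fin n → D3) → D3 := fun X a =>
    if (∀ v, ee f v a = false) ∧ X a = xi f a + 2 then xi f a + 1 else xi f a
  have ccE : ∀ X, Acts C' X → Equi (cc X) := by
    intro X hX a
    simp only [cc, t3, hC'.asd hX a, FE a]
    by_cases h : ∀ v, ee f v a = false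
    · simp only [h]
      generalize X a = x
      generalize xi f a = y
      clear * -
      revert x y
      simp
      decide
    · simp only [h, false_and, if_false]
  have ccn : ∀ X a v, ee f v a = true → ee f (v + 1) a = false → cc X a = v := by
    intro X a v h h'
    have : ¬ ∀ v, ee f v a = false := fun h2 => by rw [h2] at h; cases h
    simp only [cc, this, false_and, if_false]
    exact xi_desc h h'
  obtain ⟨X1, hX1, p1, q1⟩ := round (fun x => x i1) (cc (fun x => x i1)) (Acts.proj i1) (ccE _ (Acts.proj i1))
    (fun a v h h' => ⟨Or.inl rfl, ccn (fun x => x i1) a v h h'⟩)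
  obtain ⟨X2, hX2, p2, q2⟩ := round X1 (cc X1) hX1 (ccE _ hX1)
    (fun a v h h' => ⟨Or.inr (p1 a v h h'), ccn _ a v h h'⟩)
  have : X2 = xi f := by
    funext a
    rcases xi_or hi1 a with ⟨v, h, h'⟩ | ⟨h, -⟩
    · rw [p2 a v h h', xi_desc h h']
    · rw [q2 a h]
      simp only [cc]
      rw [q1 a h]
      simp only [cc, h]
      generalize a i1 = x
      generalize xi f a = y
      clear * -
      revert x y
      simp
      decide
  change xi f ∈ C' n
  rw [← this]
  exact hC'.mem hX2

end SelfDual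


namespace SelfDual
variable {C C' : ∀ n, Set (Op n)} {I J X : Type}

abbrev Key : Type := (Σ k : ℕ, Set (Op (3 ^ k))) ⊕ ℕ

def Kls (C : ∀ n, Set (Op n)) : ℕ → Prop
  | 0 => Aff C
  | 1 => ClsProj C
  | 2 => ClsMin C
  | 3 => Cons C ∧ Dom C ∧ A2 C tm ∧ HasJ C
  | 4 => Dom C ∧ Mono C ∧ A2 C tm ∧ HasG C
  | 5 => Cons C ∧ Pure C ∧ A2 C tm
  | 6 => Meets C ∧ A2 C tm ∧ HasV C
  | _ => False

def KP : Key → (∀ n, Set (Op n)) → Prop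
  | Sum.inl x, C => NU C x.1 ∧ C (3 ^ x.1) = x.2
  | Sum.inr k, C => Kls C k

theorem KP_hom (k : Key) (C C' : ∀ n, Set (Op n)) (hC : Good C) (hC' : Good C') (h : KP k C)
    (h' : KP k C') : MHom C C' := by
  rcases k with ⟨k, R⟩ | k
  · exact MHom.of_le (baker_pixley hC hC' h'.1 (h.2.trans h'.2.symm))
  · match k, h, h' with
    | 0, h, h' => exact MHom.of_le (aff_le hC hC' h h')
    | 1, h, h' => exact proj_hom hC hC' h
    | 2, h, h' => exact min_hom hC hC' h h'
    | 3, h, h' => exact MHom.of_le (j_le hC hC' h.1 h.2.1 h'.2.2.1 h'.2.2.2)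
    | 4, h, h' => exact m_hom hC hC' h.1 h.2.1 h'.2.2.1 h'.2.2.2
    | 5, h, h' => exact MHom.of_le (pure_le hC hC' h.1 h.2.1 h'.2.2)
    | 6, h, h' => exact v_hom hC hC' h.1 h'.2.1 h'.2.2

theorem KP_nu {k : ℕ} (h : NU C k) : ∃ k, KP k C := ⟨Sum.inl ⟨k, C (3 ^ k)⟩, h, rfl⟩
theorem KP_k {k : ℕ} (h : Kls C k) : ∃ k, KP k C := ⟨Sum.inr k, h⟩

theorem classify_tm (hC : Good C) (hc : Cons C) (ht : A2 C tm) : ∃ k, KP k C := by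
  by_cases hd : Dom C
  · by_cases hm : Mono C
    · by_cases hM : Meets C
      · by_cases hv : HasV C
        · exact KP_k (k := 6) ⟨hM, ht, hv⟩
        · exact KP_k (k := 5) ⟨hc, pure_or_V hC hc ht hM hv, ht⟩
      · exact KP_k (k := 4) ⟨hd, hm, ht, hasG_of hC hc ht hm hM⟩
    · exact KP_k (k := 3) ⟨hc, hd, ht, hasJ_of hC hc ht hd hm⟩
  · obtain ⟨k, hk⟩ := nu_of_not_dom hC hc ht hd
    exact KP_nu hk

def neg (C : ∀ n, Set (Op n)) : ∀ n, Set (Op n) :=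
  fun n => {f | (fun x => - f (fun i => - x i)) ∈ C n}

def ng {n : ℕ} (f : Op n) : Op n := fun x => - f (fun i => - x i)

theorem ng_minor {n r : ℕ} (f : Op n) (π : Fin n → Fin r) : ng (minor f π) = minor (ng f) π := rfl

theorem ng_ng {n : ℕ} (f : Op n) : ng (ng f) = f := by
  funext x
  simp only [ng, neg_neg]

theorem mem_neg {n : ℕ} {f : Op n} : f ∈ neg C n ↔ ng f ∈ C n := Iff.rfl

theorem neg_meq (C : ∀ n, Set (Op n)) : MinorEquivalent C (neg C) := by
  constructor
  · refine ⟨fun n f => ng f, ?_, ?_⟩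
    · intro n f hf
      rw [mem_neg, ng_ng]
      exact hf
    · intro n r f π hf
      exact ng_minor f π
  · refine ⟨fun n f => ng f, ?_, ?_⟩
    · intro n f hf
      exact mem_neg.1 hf
    · intro n r f π hf
      exact ng_minor f π

theorem neg_good (hC : Good C) : Good (neg C) := by
  refine ⟨⟨?_, ?_⟩, ?_, ?_⟩
  · intro n i
    change (fun x : Fin n → D3 => - - x i) ∈ C n
    simpa only [neg_neg] using hC.clone.proj_mem n i
  · intro n m f g hf hg
    have := hC.clone.comp_mem n m _ _ hf hg
    change (fun x => - f (fun i => g i (fun j => - x j))) ∈ C m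
    simpa only [neg_neg] using this
  · intro n f hf x
    have := hC.asdc (hC.acts hf) (fun i => - x i) 2
    have e : ∀ i, - (- x i + 2) = x i + 1 := by
      intro i
      generalize x i = y
      clear * -
      revert y; decide
    simp only [e, neg_neg] at this
    revert this
    generalize f x = y
    generalize f (fun i => x i + 1) = z
    clear * -
    revert y z; decide
  · intro n f hf c
    have := hC.idem n _ hf (- c)
    simpa only [neg_neg, neg_inj] using this

theorem neg_cons (hC : Good C) (hc : Cons C) : Cons (neg C) := by
  intro n f hf x hx h2
  have h1 := hc n _ hf (fun i => - x i + 1) (by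
    intro i
    have := hx i
    revert this
    generalize x i = y
    clear * -
    revert y; decide)
  have h3 := hC.sd n _ hf (fun i => - x i)
  rw [h3] at h1
  simp only [neg_neg, h2] at h1
  exact h1 (by decide)

theorem neg_tm (ht : A2 C tj) : A2 (neg C) tm := by
  intro n p q hp hq
  have := ht n _ _ hp hq
  change (fun x => - tm (p (fun i => - x i)) (q (fun i => - x i))) ∈ C n
  convert this using 2 with x
  generalize p (fun i => - x i) = y
  generalize q (fun i => - x i) = z
  clear * -
  revert y z; decide

theorem classify (hC : Good C) : ∃ k C', Good C' ∧ MinorEquivalent C C' ∧ KP k C' := by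
  have self : ∀ {k}, KP k C → ∃ k C', Good C' ∧ MinorEquivalent C C' ∧ KP k C' := fun {k} h =>
    ⟨k, C, hC, ⟨MHom.of_le fun _ _ h => h, MHom.of_le fun _ _ h => h⟩, h⟩
  by_cases hc : Cons C
  · rcases sel_or hC hc with h | h | h
    · obtain ⟨k, hk⟩ := classify_tm hC hc h
      exact self hk
    · obtain ⟨k, hk⟩ := classify_tm (neg_good hC) (neg_cons hC hc) (neg_tm h)
      exact ⟨k, neg C, neg_good hC, neg_meq C, hk⟩
    · by_cases hn : NU C 2
      · obtain ⟨k, hk⟩ := KP_nu hn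
        exact self hk
      · have tri := sel_tri hC h hn
        by_cases hp : ∃ p, A3 C p ∧ IsMin p
        · exact self (k := Sum.inr 2) ⟨hc, hp, tri⟩
        · refine self (k := Sum.inr 1) ⟨hc, fun g hg => ?_⟩
          rcases tri g hg with h' | h'
          · exact absurd ⟨g, hg, h'⟩ hp
          · exact h'
  · have hm := mm_of_not_cons hC hc
    by_cases ha : Aff C
    · exact self (k := Sum.inr 0) ha
    · obtain ⟨k, hk⟩ := KP_nu (nu_of_not_aff hC hm ha)
      exact self hk

end SelfDual


/-- There is a countable family of clones on `{0,1,2}` such that every clone of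
self-dual operations (operations preserving `C₃`) is minor equivalent to some member. -/
theorem stmt5 :
    ∃ Dfam : ℕ → (∀ n, Set (Op n)),
      (∀ i, IsClone (Dfam i)) ∧
      (∀ C : ∀ n, Set (Op n), IsClone C → (∀ n, ∀ f ∈ C n, Preserves f C3rel) →
        ∃ i, MinorEquivalent C (Dfam i)) := by
  exact SelfDual.assemble SelfDual.KP
    (fun C hC h3 => by
      obtain ⟨C1, hg, hm⟩ := SelfDual.to_good hC h3
      obtain ⟨k, C2, hg2, hm2, hk⟩ := SelfDual.classify hg
      exact ⟨k, C2, hg2, SelfDual.meq_trans hm hm2, hk⟩)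
    SelfDual.KP_hom
end

section
/- Let 𝔑_2 = ({0,1,2}; C_3, N, B_2) and let 𝔄 be the structure with domain {0,1,2}^4 (coordinates indexed 0,1,2,3) and relations C_3^A := {(x,y) : (x_0,y_0) ∈ C_3, x_1=y_2, x_2=y_3, x_3=y_1}, N^A := {(x,y) : x_3=0, x_0=x_2, (x_1,x_2) ∈ B_2, (x_1,y_1) ∈ ≤_2, (y_2,x_2) ∈ ≤_2, (y_3,x_0) ∈ ≤_2}, and B_2^A := {(x,y) : (x_0,y_0) ∈ B_2, x_0=x_2, y_0=y_2, x_3=y_3=0}. Then the map g with g(0)=(0,1,0,0), g(1)=(1,0,1,0), g(2)=(2,0,0,1) is a homomorphism from 𝔑_2 to 𝔄, and the map h with h(x_0,x_1,x_2,x_3)=0 if (x_1,x_2,x_3)∈{(1,0,0),(1,0,1)}, =1 if (x_1,x_2,x_3)∈{(0,1,0),(1,1,0)}, =2 if (x_1,x_2,x_3)∈{(0,0,1),(0,1,1)}, =x_0 otherwise, is a homomorphism from 𝔄 to 𝔑_2. -/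
/-- `C₃ = {(0,1),(1,2),(2,0)}`. -/
def C3P (a b : D3) : Prop := (a = 0 ∧ b = 1) ∨ (a = 1 ∧ b = 2) ∨ (a = 2 ∧ b = 0)

/-- `N = {(0,0),(1,0),(1,1),(1,2)}`. -/
def NP (a b : D3) : Prop :=
  (a = 0 ∧ b = 0) ∨ (a = 1 ∧ b = 0) ∨ (a = 1 ∧ b = 1) ∨ (a = 1 ∧ b = 2)

/-- `B₂ = {(1,0),(0,1),(1,1)}`. -/
def B2P (a b : D3) : Prop := (a = 1 ∧ b = 0) ∨ (a = 0 ∧ b = 1) ∨ (a = 1 ∧ b = 1)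

/-- `≤₂ = {(0,0),(0,1),(1,1)}`. -/
def le2P (a b : D3) : Prop := (a = 0 ∧ b = 0) ∨ (a = 0 ∧ b = 1) ∨ (a = 1 ∧ b = 1)

/-- The relation `C₃^𝔄` on `{0,1,2}⁴`. -/
def C3A (x y : Fin 4 → D3) : Prop :=
  C3P (x 0) (y 0) ∧ x 1 = y 2 ∧ x 2 = y 3 ∧ x 3 = y 1

/-- The relation `N^𝔄` on `{0,1,2}⁴`. -/
def NA (x y : Fin 4 → D3) : Prop :=
  x 3 = 0 ∧ x 0 = x 2 ∧ B2P (x 1) (x 2) ∧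
  le2P (x 1) (y 1) ∧ le2P (y 2) (x 2) ∧ le2P (y 3) (x 0)

/-- The relation `B₂^𝔄` on `{0,1,2}⁴`. -/
def B2A (x y : Fin 4 → D3) : Prop :=
  B2P (x 0) (y 0) ∧ x 0 = x 2 ∧ y 0 = y 2 ∧ x 3 = 0 ∧ y 3 = 0

/-- The map `g` with `g(0) = (0,1,0,0)`, `g(1) = (1,0,1,0)`, `g(2) = (2,0,0,1)`. -/
def gMap : D3 → Fin 4 → D3 := ![![0,1,0,0], ![1,0,1,0], ![2,0,0,1]]

/-- The map `h`. -/
def hMap (x : Fin 4 → D3) : D3 :=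
  if (x 1, x 2, x 3) = ((1 : D3), (0 : D3), (0 : D3)) ∨
     (x 1, x 2, x 3) = ((1 : D3), (0 : D3), (1 : D3)) then 0
  else if (x 1, x 2, x 3) = ((0 : D3), (1 : D3), (0 : D3)) ∨
          (x 1, x 2, x 3) = ((1 : D3), (1 : D3), (0 : D3)) then 1
  else if (x 1, x 2, x 3) = ((0 : D3), (0 : D3), (1 : D3)) ∨
          (x 1, x 2, x 3) = ((0 : D3), (1 : D3), (1 : D3)) then 2
  else x 0

/-- `g` is a homomorphism from `𝔑₂ = ({0,1,2}; C₃, N, B₂)` to `𝔄`, and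
`h` is a homomorphism from `𝔄` to `𝔑₂`. -/
theorem stmt6 :
    ((∀ a b : D3, C3P a b → C3A (gMap a) (gMap b)) ∧
     (∀ a b : D3, NP a b → NA (gMap a) (gMap b)) ∧
     (∀ a b : D3, B2P a b → B2A (gMap a) (gMap b))) ∧
    ((∀ x y : Fin 4 → D3, C3A x y → C3P (hMap x) (hMap y)) ∧
     (∀ x y : Fin 4 → D3, NA x y → NP (hMap x) (hMap y)) ∧
     (∀ x y : Fin 4 → D3, B2A x y → B2P (hMap x) (hMap y))) := by
  refine ⟨⟨?_, ?_, ?_⟩, ?_, ?_, ?_⟩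
  · unfold C3P C3A C3P gMap; decide
  · unfold NP NA B2P le2P gMap; decide
  · unfold B2P B2A B2P gMap; decide
  · rintro x y ⟨h0, h1, h2, h3⟩
    unfold hMap
    rw [h1, h2, h3]
    revert h0
    generalize x 0 = a
    generalize y 0 = b
    generalize y 1 = c
    generalize y 2 = d
    generalize y 3 = e
    unfold C3P
    rintro (⟨rfl, rfl⟩ | ⟨rfl, rfl⟩ | ⟨rfl, rfl⟩) <;> revert c d e <;> decide
  · rintro x y ⟨h3, h0, hB, h1, h2, h4⟩
    unfold hMap
    rw [h0] at *
    rw [h3]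
    revert hB h1 h2 h4
    generalize x 1 = a
    generalize x 2 = b
    generalize y 0 = c
    generalize y 1 = d
    generalize y 2 = e
    generalize y 3 = f
    unfold B2P le2P NP
    rintro (⟨rfl, rfl⟩ | ⟨rfl, rfl⟩ | ⟨rfl, rfl⟩)
    all_goals
      revert c d e f
      decide
  · rintro x y ⟨hB, h1, h2, h3, h4⟩
    unfold hMap
    rw [h3, h4, ← h1, ← h2]
    revert hB
    generalize x 0 = a
    generalize y 0 = b
    generalize x 1 = c
    generalize y 1 = d
    unfold B2P
    revert a b c d
    decide
end

section
/- Let [m,p] be the smallest set of operations on {0,1,2} that contains m, p, and all projections, and is closed under composition. Then every binary operation in [m,p] is a projection, and every ternary operation f in [m,p] maps {0,1}^3 into {0,1} and its restriction to {0,1} is either a projection or the ternary majority operation on {0,1}. -/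
/-- The operation `∨₃` (paper–scissor–stone), given by its table. -/
def or3 (a b : D3) : D3 := ![![0,1,0], ![1,1,2], ![0,2,2]] a b

/-- The operation `∧₃`, given by its table. -/
def and3 (a b : D3) : D3 := ![![0,0,2], ![0,1,1], ![2,1,2]] a b

/-- The operation `m`. -/
def mOp (x y z : D3) : D3 :=
  if x = y ∨ y = z ∨ x = z then or3 (or3 (and3 x y) (and3 x z)) (and3 y z) else x

/-- The operation `p`. -/
def pOp (x y z : D3) : D3 :=
  if x = y ∨ y = z ∨ x = z then x else x + 1

/-- The clone `[m,p]`: the smallest set of operations on `{0,1,2}` containing `m`, `p`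
and all projections, and closed under composition. -/
inductive Gen : ∀ n : ℕ, Op n → Prop
  | proj (n : ℕ) (i : Fin n) : Gen n fun x => x i
  | m_mem : Gen 3 fun v => mOp (v 0) (v 1) (v 2)
  | p_mem : Gen 3 fun v => pOp (v 0) (v 1) (v 2)
  | comp (n m : ℕ) (f : Op n) (g : Fin n → Op m) :
      Gen n f → (∀ i, Gen m (g i)) → Gen m fun x => f fun i => g i x

theorem gen_pres (R : D3 → D3 → Prop)
    (hm : ∀ a b c a' b' c', R a a' → R b b' → R c c' → R (mOp a b c) (mOp a' b' c'))
    (hp : ∀ a b c a' b' c', R a a' → R b b' → R c c' → R (pOp a b c) (pOp a' b' c'))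
    {n : ℕ} {f : Op n} (hf : Gen n f) :
    ∀ x y : Fin n → D3, (∀ i, R (x i) (y i)) → R (f x) (f y) := by
  induction hf with
  | proj n i => intro x y h; exact h i
  | m_mem => intro x y h; exact hm _ _ _ _ _ _ (h 0) (h 1) (h 2)
  | p_mem => intro x y h; exact hp _ _ _ _ _ _ (h 0) (h 1) (h 2)
  | comp n m f g _ _ ihf ihg => intro x y h; exact ihf _ _ fun i => ihg i x y h

theorem gen_const {n : ℕ} {f : Op n} (hf : Gen n f) (a : D3) (x : Fin n → D3)
    (h : ∀ i, x i = a) : f x = a := by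
  refine gen_pres (fun u _ => u = a) ?_ ?_ hf x x h
  · rintro _ _ _ _ _ _ h1 h2 h3; subst h1 h2 h3; clear h; decide +revert
  · rintro _ _ _ _ _ _ rfl rfl rfl; simp [pOp]

theorem gen_pair {n : ℕ} {f : Op n} (hf : Gen n f) (a b c d : D3) (hab : a ≠ b) (hcd : c ≠ d)
    (x y : Fin n → D3) (h : ∀ i, (x i = a ∧ y i = c) ∨ (x i = b ∧ y i = d)) :
    (f x = a ∧ f y = c) ∨ (f x = b ∧ f y = d) := by
  refine gen_pres (fun u v => (u = a ∧ v = c) ∨ (u = b ∧ v = d)) ?_ ?_ hf x y h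
  · rintro _ _ _ _ _ _ (⟨rfl, rfl⟩ | ⟨rfl, rfl⟩) (⟨h1, h2⟩ | ⟨h1, h2⟩) (⟨h3, h4⟩ | ⟨h3, h4⟩) <;>
    subst h1 h2 h3 h4 <;> clear h <;> decide +revert
  · rintro _ _ _ _ _ _ (⟨rfl, rfl⟩ | ⟨rfl, rfl⟩) (⟨h1, h2⟩ | ⟨h1, h2⟩) (⟨h3, h4⟩ | ⟨h3, h4⟩) <;>
    subst h1 h2 h3 h4 <;> clear h <;> decide +revert

theorem gen_mono {n : ℕ} {f : Op n} (hf : Gen n f)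
    (x y : Fin n → D3) (h : ∀ i, x i ≤ y i ∧ y i ≤ 1) : f x ≤ f y ∧ f y ≤ 1 := by
  refine gen_pres (fun u v => u ≤ v ∧ v ≤ 1) ?_ ?_ hf x y h
  · decide
  · decide

/-- Every binary operation in `[m,p]` is a projection, and every ternary operation in `[m,p]`
maps `{0,1}³` into `{0,1}` and its restriction to `{0,1}` is a projection or the
ternary majority operation. -/
theorem stmt10 :
    (∀ f : Op 2, Gen 2 f → ∃ i : Fin 2, f = fun x => x i) ∧
    (∀ f : Op 3, Gen 3 f →
      (∀ x : Fin 3 → D3, (∀ j, x j = 0 ∨ x j = 1) → (f x = 0 ∨ f x = 1)) ∧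
      ((∃ i : Fin 3, ∀ x : Fin 3 → D3, (∀ j, x j = 0 ∨ x j = 1) → f x = x i) ∨
       (∀ x : Fin 3 → D3, (∀ j, x j = 0 ∨ x j = 1) →
          f x = if x 0 = x 1 then x 0 else x 2))) := by
  constructor
  · intro f hf
    have key : ∀ a b : D3, a ≠ b → (f ![0, 1] = 0 ∧ f ![a, b] = a) ∨ (f ![0, 1] = 1 ∧ f ![a, b] = b) := by
      intro a b hab
      refine gen_pair hf 0 1 a b (by decide) hab _ _ ?_
      intro i; fin_cases i <;> simp
    have eta : ∀ x : Fin 2 → D3, x = ![x 0, x 1] := by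
      intro x; ext i; fin_cases i <;> rfl
    have h01 := key 0 1 (by decide)
    have cst : ∀ a : D3, f ![a, a] = a := fun a =>
      gen_const hf a _ (by intro i; fin_cases i <;> rfl)
    rcases h01 with ⟨h0, -⟩ | ⟨h0, -⟩
    · refine ⟨0, ?_⟩
      funext x
      rw [eta x]
      by_cases h : x 0 = x 1
      · rw [h, cst]; rfl
      · rcases key _ _ h with ⟨_, h2⟩ | ⟨h2, _⟩
        · exact h2
        · rw [h0] at h2; exact absurd h2 (by decide)
    · refine ⟨1, ?_⟩
      funext x
      rw [eta x]
      by_cases h : x 0 = x 1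
      · rw [h, cst]; rfl
      · rcases key _ _ h with ⟨h2, _⟩ | ⟨_, h2⟩
        · rw [h0] at h2; exact absurd h2 (by decide)
        · exact h2
  · intro f hf
    have eta : ∀ x : Fin 3 → D3, x = ![x 0, x 1, x 2] := by
      intro x; ext i; fin_cases i <;> rfl
    have red : ∀ P : (Fin 3 → D3) → Prop,
        (P ![0,0,0] ∧ P ![0,0,1] ∧ P ![0,1,0] ∧ P ![0,1,1] ∧
         P ![1,0,0] ∧ P ![1,0,1] ∧ P ![1,1,0] ∧ P ![1,1,1]) →
        ∀ x : Fin 3 → D3, (∀ j, x j = 0 ∨ x j = 1) → P x := by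
      rintro P ⟨a, b, c, d, e, g, h, i⟩ x hx
      rw [eta x]
      rcases hx 0 with h0 | h0 <;> rcases hx 1 with h1 | h1 <;> rcases hx 2 with h2 | h2 <;>
        rw [h0, h1, h2] <;> assumption
    have c0 : f ![0,0,0] = 0 := gen_const hf 0 _ (by decide)
    have c1 : f ![1,1,1] = 1 := gen_const hf 1 _ (by decide)
    have n0 := gen_pair hf 0 1 1 0 (by decide) (by decide) ![1,0,0] ![0,1,1] (by decide)
    have n1 := gen_pair hf 0 1 1 0 (by decide) (by decide) ![0,1,0] ![1,0,1] (by decide)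
    have n2 := gen_pair hf 0 1 1 0 (by decide) (by decide) ![0,0,1] ![1,1,0] (by decide)
    have m1 := (gen_mono hf ![1,0,0] ![1,0,1] (by decide)).1
    have m2 := (gen_mono hf ![1,0,0] ![1,1,0] (by decide)).1
    have m3 := (gen_mono hf ![0,1,0] ![1,1,0] (by decide)).1
    constructor
    · apply red
      rcases n0 with ⟨a, b⟩ | ⟨a, b⟩ <;> rcases n1 with ⟨c, d⟩ | ⟨c, d⟩ <;>
        rcases n2 with ⟨e, g⟩ | ⟨e, g⟩ <;> simp [a, b, c, d, e, g, c0, c1]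
    · rcases n0 with ⟨a, b⟩ | ⟨a, b⟩ <;> rcases n1 with ⟨c, d⟩ | ⟨c, d⟩ <;>
        rcases n2 with ⟨e, g⟩ | ⟨e, g⟩ <;> rw [a, d] at m1 <;> rw [a, g] at m2 <;>
        rw [c, g] at m3 <;>
        first
        | exact absurd m1 (by decide)
        | exact absurd m2 (by decide)
        | exact absurd m3 (by decide)
        | (right; apply red; simp [a, b, c, d, e, g, c0, c1]; done)
        | (left; refine ⟨0, ?_⟩; apply red; simp [a, b, c, d, e, g, c0, c1]; done)
        | (left; refine ⟨1, ?_⟩; apply red; simp [a, b, c, d, e, g, c0, c1]; done)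
        | (left; refine ⟨2, ?_⟩; apply red; simp [a, b, c, d, e, g, c0, c1]; done)
end

section
/- The four clones L_3 := Pol({0,1,2}; C_3, L_3rel), TL_2 := Pol({0,1,2}; C_3, T, L_2), TN := Pol({0,1,2}; C_3, T, N, N*), and W := Pol({0,1,2}; C_3, R^=_3) are pairwise incomparable with respect to minor-preserving maps: for any two distinct clones C, D among these four, there is no minor-preserving map from C to D. -/
/-- `L₃ = {(x,y,z) : x + y + z ≡ 0 (mod 3)}`. -/
def L3rel : Set (Fin 3 → D3) := { t | t 0 + t 1 + t 2 = 0 }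

/-- `T = {(0,1),(1,0),(2,2)}`. -/
def Trel : Set (Fin 2 → D3) :=
  { t | (t 0 = 0 ∧ t 1 = 1) ∨ (t 0 = 1 ∧ t 1 = 0) ∨ (t 0 = 2 ∧ t 1 = 2) }

/-- `L₂ = {(x,y,z) ∈ {0,1}³ : x + y + z ≡ 0 (mod 2)}`. -/
def L2rel : Set (Fin 3 → D3) :=
  { t | (t 0 = 0 ∨ t 0 = 1) ∧ (t 1 = 0 ∨ t 1 = 1) ∧ (t 2 = 0 ∨ t 2 = 1) ∧
        ((t 0).val + (t 1).val + (t 2).val) % 2 = 0 }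

/-- `N = {(0,0),(1,0),(1,1),(1,2)}`. -/
def Nrel : Set (Fin 2 → D3) :=
  { t | (t 0 = 0 ∧ t 1 = 0) ∨ (t 0 = 1 ∧ t 1 = 0) ∨ (t 0 = 1 ∧ t 1 = 1) ∨ (t 0 = 1 ∧ t 1 = 2) }

/-- `N* = {(0,0),(0,1),(1,1),(0,2)}`. -/
def Nstarrel : Set (Fin 2 → D3) :=
  { t | (t 0 = 0 ∧ t 1 = 0) ∨ (t 0 = 0 ∧ t 1 = 1) ∨ (t 0 = 1 ∧ t 1 = 1) ∨ (t 0 = 0 ∧ t 1 = 2) }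

/-- `R⁼₃ = {(x,y,z) : x ∈ {0,1} ∧ (x = 0 → y = z)}`. -/
def Req3rel : Set (Fin 3 → D3) :=
  { t | (t 0 = 0 ∨ t 0 = 1) ∧ (t 0 = 0 → t 1 = t 2) }

/-- The polymorphism clone of a family of relations on `{0,1,2}`. -/
def Pol (A : Set (Σ k : ℕ, Set (Fin k → D3))) : ∀ n, Set (Op n) :=
  fun n => { f | ∀ R ∈ A, Preserves f R.2 }

def L3clone : ∀ n, Set (Op n) :=
  Pol ({⟨2, C3rel⟩, ⟨3, L3rel⟩} : Set (Σ k : ℕ, Set (Fin k → D3)))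

def TL2clone : ∀ n, Set (Op n) :=
  Pol ({⟨2, C3rel⟩, ⟨2, Trel⟩, ⟨3, L2rel⟩} : Set (Σ k : ℕ, Set (Fin k → D3)))

def TNclone : ∀ n, Set (Op n) :=
  Pol ({⟨2, C3rel⟩, ⟨2, Trel⟩, ⟨2, Nrel⟩, ⟨2, Nstarrel⟩} : Set (Σ k : ℕ, Set (Fin k → D3)))

def Wclone : ∀ n, Set (Op n) :=
  Pol ({⟨2, C3rel⟩, ⟨3, Req3rel⟩} : Set (Σ k : ℕ, Set (Fin k → D3)))

/-- Ternary operation from a curried function. -/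
def op3 (g : D3 → D3 → D3 → D3) : Op 3 := fun x => g (x 0) (x 1) (x 2)

/-- Binary operation from a curried function. -/
def op2 (g : D3 → D3 → D3) : Op 2 := fun x => g (x 0) (x 1)

lemma pres32 (g : D3 → D3 → D3 → D3) (P : D3 → D3 → Prop) (R : Set (Fin 2 → D3))
    (hR : ∀ t, t ∈ R ↔ P (t 0) (t 1))
    (h : ∀ a b, P a b → ∀ a' b', P a' b' → ∀ a'' b'', P a'' b'' → P (g a a' a'') (g b b' b'')) :
    Preserves (op3 g) R := by
  intro t ht
  rw [hR]
  exact h _ _ ((hR _).1 (ht 0)) _ _ ((hR _).1 (ht 1)) _ _ ((hR _).1 (ht 2))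

lemma pres33 (g : D3 → D3 → D3 → D3) (P : D3 → D3 → D3 → Prop) (R : Set (Fin 3 → D3))
    (hR : ∀ t, t ∈ R ↔ P (t 0) (t 1) (t 2))
    (h : ∀ a b c, P a b c → ∀ a' b' c', P a' b' c' → ∀ a'' b'' c'', P a'' b'' c'' →
      P (g a a' a'') (g b b' b'') (g c c' c'')) :
    Preserves (op3 g) R := by
  intro t ht
  rw [hR]
  exact h _ _ _ ((hR _).1 (ht 0)) _ _ _ ((hR _).1 (ht 1)) _ _ _ ((hR _).1 (ht 2))

lemma pres22 (g : D3 → D3 → D3) (P : D3 → D3 → Prop) (R : Set (Fin 2 → D3))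
    (hR : ∀ t, t ∈ R ↔ P (t 0) (t 1))
    (h : ∀ a b, P a b → ∀ a' b', P a' b' → P (g a a') (g b b')) :
    Preserves (op2 g) R := by
  intro t ht
  rw [hR]
  exact h _ _ ((hR _).1 (ht 0)) _ _ ((hR _).1 (ht 1))

lemma pres23 (g : D3 → D3 → D3) (P : D3 → D3 → D3 → Prop) (R : Set (Fin 3 → D3))
    (hR : ∀ t, t ∈ R ↔ P (t 0) (t 1) (t 2))
    (h : ∀ a b c, P a b c → ∀ a' b' c', P a' b' c' → P (g a a') (g b b') (g c c')) :
    Preserves (op2 g) R := by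
  intro t ht
  rw [hR]
  exact h _ _ _ ((hR _).1 (ht 0)) _ _ _ ((hR _).1 (ht 1))

lemma mem_L3 {n} {f : Op n} : f ∈ L3clone n ↔ Preserves f C3rel ∧ Preserves f L3rel := by
  simp [L3clone, Pol]

lemma mem_TL2 {n} {f : Op n} :
    f ∈ TL2clone n ↔ Preserves f C3rel ∧ Preserves f Trel ∧ Preserves f L2rel := by
  simp [TL2clone, Pol]

lemma mem_TN {n} {f : Op n} : f ∈ TNclone n ↔
    Preserves f C3rel ∧ Preserves f Trel ∧ Preserves f Nrel ∧ Preserves f Nstarrel := by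
  simp [TNclone, Pol]

lemma mem_W {n} {f : Op n} : f ∈ Wclone n ↔ Preserves f C3rel ∧ Preserves f Req3rel := by
  simp [Wclone, Pol]

/-- Predicate forms of the relations. -/
abbrev pC (a b : D3) : Prop := (a = 0 ∧ b = 1) ∨ (a = 1 ∧ b = 2) ∨ (a = 2 ∧ b = 0)
abbrev pL3 (a b c : D3) : Prop := a + b + c = 0
abbrev pT (a b : D3) : Prop := (a = 0 ∧ b = 1) ∨ (a = 1 ∧ b = 0) ∨ (a = 2 ∧ b = 2)
def pL2 (a b c : D3) : Prop := (a = 0 ∨ a = 1) ∧ (b = 0 ∨ b = 1) ∧ (c = 0 ∨ c = 1) ∧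
        (a.val + b.val + c.val) % 2 = 0
instance (a b c : D3) : Decidable (pL2 a b c) := by unfold pL2; infer_instance
abbrev pN (a b : D3) : Prop :=
  (a = 0 ∧ b = 0) ∨ (a = 1 ∧ b = 0) ∨ (a = 1 ∧ b = 1) ∨ (a = 1 ∧ b = 2)
abbrev pNs (a b : D3) : Prop :=
  (a = 0 ∧ b = 0) ∨ (a = 0 ∧ b = 1) ∨ (a = 1 ∧ b = 1) ∨ (a = 0 ∧ b = 2)
abbrev pR (a b c : D3) : Prop := (a = 0 ∨ a = 1) ∧ (a = 0 → b = c)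

/-- witnesses -/
def gmal (x y z : D3) : D3 := x - y + z
def gcom (x y : D3) : D3 := 2 * x + 2 * y
def gmin (x y z : D3) : D3 := if x = y then z else if x = z then y else if y = z then x else x
def gmaj (x y z : D3) : D3 := if x = y then x else if x = z then x else if y = z then y else x
def rps (x y : D3) : D3 := if x = y then x else if y = x + 1 then (if x = 2 then 0 else
  if x = 0 then 1 else 2) else (if y = 2 then 0 else if y = 0 then 1 else 2)
def gwnu (x y z : D3) : D3 :=
  if x = y then rps x z else if x = z then rps x y else if y = z then rps x y else x

lemma mal_mem : op3 gmal ∈ L3clone 3 :=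
  mem_L3.2 ⟨pres32 _ pC _ (fun _ => Iff.rfl) (by decide +kernel),
    pres33 _ pL3 _ (fun _ => Iff.rfl) (by decide +kernel)⟩

lemma com_mem : op2 gcom ∈ L3clone 2 :=
  mem_L3.2 ⟨pres22 _ pC _ (fun _ => Iff.rfl) (by decide +kernel),
    pres23 _ pL3 _ (fun _ => Iff.rfl) (by decide +kernel)⟩

lemma min_mem : op3 gmin ∈ TL2clone 3 :=
  mem_TL2.2 ⟨pres32 _ pC _ (fun _ => Iff.rfl) (by decide +kernel),
    pres32 _ pT _ (fun _ => Iff.rfl) (by decide +kernel),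
    pres33 _ pL2 _ (fun _ => Iff.rfl) (by decide +kernel)⟩

lemma maj_mem : op3 gmaj ∈ TNclone 3 :=
  mem_TN.2 ⟨pres32 _ pC _ (fun _ => Iff.rfl) (by decide +kernel),
    pres32 _ pT _ (fun _ => Iff.rfl) (by decide +kernel),
    pres32 _ pN _ (fun _ => Iff.rfl) (by decide +kernel),
    pres32 _ pNs _ (fun _ => Iff.rfl) (by decide +kernel)⟩

lemma rps_mem : op2 rps ∈ Wclone 2 :=
  mem_W.2 ⟨pres22 _ pC _ (fun _ => Iff.rfl) (by decide +kernel),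
    pres23 _ pR _ (fun _ => Iff.rfl) (by decide +kernel)⟩

lemma wnu_mem : op3 gwnu ∈ Wclone 3 :=
  mem_W.2 ⟨pres32 _ pC _ (fun _ => Iff.rfl) (by decide +kernel),
    pres33 _ pR _ (fun _ => Iff.rfl) (by decide +kernel)⟩

/-- Curried forms. -/
abbrev ap3 (f : Op 3) (a b c : D3) : D3 := f ![a, b, c]
abbrev ap2 (f : Op 2) (a b : D3) : D3 := f ![a, b]

lemma use32 {f : Op 3} {R : Set (Fin 2 → D3)} (P : D3 → D3 → Prop) (hf : Preserves f R)
    (hR : ∀ t, t ∈ R ↔ P (t 0) (t 1)) (a b a' b' a'' b'' : D3) (h : P a b) (h' : P a' b')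
    (h'' : P a'' b'') : P (ap3 f a a' a'') (ap3 f b b' b'') := by
  have := (hR _).1 (hf ![![a, b], ![a', b'], ![a'', b'']] (by
    intro i; rw [hR]; fin_cases i <;> simpa))
  convert this using 2 <;> (funext i; fin_cases i <;> rfl)

lemma use33 {f : Op 3} {R : Set (Fin 3 → D3)} (P : D3 → D3 → D3 → Prop) (hf : Preserves f R)
    (hR : ∀ t, t ∈ R ↔ P (t 0) (t 1) (t 2)) (a b c a' b' c' a'' b'' c'' : D3) (h : P a b c)
    (h' : P a' b' c') (h'' : P a'' b'' c'') :
    P (ap3 f a a' a'') (ap3 f b b' b'') (ap3 f c c' c'') := by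
  have := (hR _).1 (hf ![![a, b, c], ![a', b', c'], ![a'', b'', c'']] (by
    intro i; rw [hR]; fin_cases i <;> simpa))
  convert this using 2 <;> (funext i; fin_cases i <;> rfl)

lemma use22 {f : Op 2} {R : Set (Fin 2 → D3)} (P : D3 → D3 → Prop) (hf : Preserves f R)
    (hR : ∀ t, t ∈ R ↔ P (t 0) (t 1)) (a b a' b' : D3) (h : P a b) (h' : P a' b') :
    P (ap2 f a a') (ap2 f b b') := by
  have := (hR _).1 (hf ![![a, b], ![a', b']] (by
    intro i; rw [hR]; fin_cases i <;> simpa))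
  convert this using 2 <;> (funext i; fin_cases i <;> rfl)

lemma use23 {f : Op 2} {R : Set (Fin 3 → D3)} (P : D3 → D3 → D3 → Prop) (hf : Preserves f R)
    (hR : ∀ t, t ∈ R ↔ P (t 0) (t 1) (t 2)) (a b c a' b' c' : D3) (h : P a b c)
    (h' : P a' b' c') :
    P (ap2 f a a') (ap2 f b b') (ap2 f c c') := by
  have := (hR _).1 (hf ![![a, b, c], ![a', b', c']] (by
    intro i; rw [hR]; fin_cases i <;> simpa))
  convert this using 2 <;> (funext i; fin_cases i <;> rfl)

/-- Transfer of a ternary minor identity (in two variables). -/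
lemma transfer3 {C D ξ} (h : IsMinorHom C D ξ) {f : Op 3} (hf : f ∈ C 3)
    (p q r p' q' r' : Fin 2)
    (e : ∀ x y : D3, ap3 f (![x, y] p) (![x, y] q) (![x, y] r)
      = ap3 f (![x, y] p') (![x, y] q') (![x, y] r')) (x y : D3) :
    ap3 (ξ 3 f) (![x, y] p) (![x, y] q) (![x, y] r)
      = ap3 (ξ 3 f) (![x, y] p') (![x, y] q') (![x, y] r') := by
  have key : ∀ (g : Op 3) (u v w : Fin 2) (z : Fin 2 → D3),
      minor g ![u, v, w] z = ap3 g (![z 0, z 1] u) (![z 0, z 1] v) (![z 0, z 1] w) := by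
    intro g u v w z
    have hz : ![z 0, z 1] = z := by funext i; fin_cases i <;> rfl
    rw [hz]
    unfold minor ap3
    congr 1; funext i; fin_cases i <;> rfl
  have e' : minor f ![p, q, r] = minor f ![p', q', r'] := by
    funext z; rw [key, key]; exact e _ _
  have h1 := h.2 3 2 f ![p, q, r] hf
  have h2 := h.2 3 2 f ![p', q', r'] hf
  rw [e', h2] at h1
  have := congrFun h1 ![x, y]
  rw [key, key] at this
  exact this.symm

lemma transfer2 {C D ξ} (h : IsMinorHom C D ξ) {f : Op 2} (hf : f ∈ C 2)
    (e : ∀ x y : D3, ap2 f x y = ap2 f y x) (x y : D3) :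
    ap2 (ξ 2 f) x y = ap2 (ξ 2 f) y x := by
  have key : ∀ (g : Op 2) (u v : Fin 2) (z : Fin 2 → D3),
      minor g ![u, v] z = ap2 g (z u) (z v) := by
    intro g u v z
    unfold minor ap2
    congr 1; funext i; fin_cases i <;> rfl
  have e' : minor f ![(0 : Fin 2), 1] = minor f ![(1 : Fin 2), 0] := by
    funext z; rw [key, key]; exact e _ _
  have h1 := h.2 2 2 f ![0, 1] hf
  have h2 := h.2 2 2 f ![1, 0] hf
  rw [e', h2] at h1
  have := congrFun h1 ![x, y]
  rw [key, key] at this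
  exact this.symm

/-- Commutativity is impossible with `T` and `{0,1}` preserved. -/
lemma no_com {f : Op 2} (e : ∀ x y, ap2 f x y = ap2 f y x) (hT : Preserves f Trel)
    (h01 : ap2 f 0 1 = 0 ∨ ap2 f 0 1 = 1) : False := by
  have h := use22 pT hT (fun _ => Iff.rfl) 0 1 1 0 (by decide) (by decide)
  rw [e 1 0] at h
  revert h h01
  generalize ap2 f 0 1 = a
  revert a; decide

lemma com_TL2 {f : Op 2} (e : ∀ x y, ap2 f x y = ap2 f y x) (hf : f ∈ TL2clone 2) : False := by
  rw [mem_TL2] at hf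
  exact no_com e hf.2.1
    (use23 pL2 hf.2.2 (fun _ => Iff.rfl) 0 0 0 1 1 0 (by decide) (by decide)).1

lemma com_TN {f : Op 2} (e : ∀ x y, ap2 f x y = ap2 f y x) (hf : f ∈ TNclone 2) : False := by
  rw [mem_TN] at hf
  refine no_com e hf.2.1 ?_
  have := use22 pN hf.2.2.1 (fun _ => Iff.rfl) 0 0 1 1 (by decide) (by decide)
  revert this
  generalize ap2 f 0 1 = a
  generalize ap2 f 0 1 = b
  revert a b; decide

lemma idemT {f : Op 3} (hC : Preserves f C3rel) (hT : Preserves f Trel) (x : D3) :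
    ap3 f x x x = x := by
  have h1 := use32 pC hC (fun _ => Iff.rfl) 0 1 0 1 0 1 (by decide) (by decide) (by decide)
  have h2 := use32 pC hC (fun _ => Iff.rfl) 1 2 1 2 1 2 (by decide) (by decide) (by decide)
  have h3 := use32 pT hT (fun _ => Iff.rfl) 0 1 0 1 0 1 (by decide) (by decide) (by decide)
  have h4 : x = 0 ∨ x = 1 ∨ x = 2 := by revert x; decide
  revert h1 h2 h3
  rcases h4 with rfl | rfl | rfl <;>
  · generalize ap3 f 0 0 0 = a
    generalize ap3 f 1 1 1 = b
    generalize ap3 f 2 2 2 = c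
    revert a b c; decide

lemma idemW {f : Op 3} (hf : f ∈ Wclone 3) (x : D3) :
    ap3 f x x x = x := by
  rw [mem_W] at hf
  obtain ⟨hC, hR⟩ := hf
  have h1 := use32 pC hC (fun _ => Iff.rfl) 0 1 0 1 0 1 (by decide) (by decide) (by decide)
  have h2 := use32 pC hC (fun _ => Iff.rfl) 1 2 1 2 1 2 (by decide) (by decide) (by decide)
  have h3 := (use33 pR hR (fun _ => Iff.rfl) 0 0 0 0 0 0 0 0 0
    (by decide) (by decide) (by decide)).1
  have h5 := (use33 pR hR (fun _ => Iff.rfl) 1 0 0 1 0 0 1 0 0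
    (by decide) (by decide) (by decide)).1
  have h4 : x = 0 ∨ x = 1 ∨ x = 2 := by revert x; decide
  revert h1 h2 h3 h5
  rcases h4 with rfl | rfl | rfl <;>
  · generalize ap3 f 0 0 0 = a
    generalize ap3 f 1 1 1 = b
    generalize ap3 f 2 2 2 = c
    revert a b c; decide

lemma mal_W {f : Op 3} (e1 : ∀ x y, ap3 f x x y = ap3 f y y y)
    (e2 : ∀ x y, ap3 f y x x = ap3 f y y y) (hf : f ∈ Wclone 3) : False := by
  have id := idemW hf
  rw [mem_W] at hf
  have := (use33 pR hf.2 (fun _ => Iff.rfl) 0 0 0 1 0 1 1 1 1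
    (by decide) (by decide) (by decide)).2 (by rw [e2 1 0, id])
  rw [e1 0 1, e2 1 0, id, id] at this
  exact absurd this (by decide)

lemma maj_W {f : Op 3} (e1 : ∀ x y, ap3 f x x y = ap3 f x x x)
    (e2 : ∀ x y, ap3 f x y x = ap3 f x x x) (e3 : ∀ x y, ap3 f y x x = ap3 f x x x)
    (hf : f ∈ Wclone 3) : False := by
  have id := idemW hf
  rw [mem_W] at hf
  have := (use33 pR hf.2 (fun _ => Iff.rfl) 0 0 0 0 1 1 1 0 1
    (by decide) (by decide) (by decide)).2 (by rw [e1 0 1, id])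
  rw [e2 0 1, e3 1 0, id, id] at this
  exact absurd this (by decide)

lemma min_TN {f : Op 3} (e1 : ∀ x y, ap3 f x x y = ap3 f y y y)
    (e2 : ∀ x y, ap3 f y x x = ap3 f y y y) (hf : f ∈ TNclone 3) : False := by
  rw [mem_TN] at hf
  have id := idemT hf.1 hf.2.1
  have := use32 pN hf.2.2.1 (fun _ => Iff.rfl) 1 1 1 0 0 0
    (by decide) (by decide) (by decide)
  rw [e1 1 0, e2 0 1, id, id] at this
  exact absurd this (by decide)

lemma maj_TL2 {f : Op 3} (e1 : ∀ x y, ap3 f x x y = ap3 f x x x)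
    (e2 : ∀ x y, ap3 f x y x = ap3 f x x x) (e3 : ∀ x y, ap3 f y x x = ap3 f x x x)
    (hf : f ∈ TL2clone 3) : False := by
  rw [mem_TL2] at hf
  have id := idemT hf.1 hf.2.1
  have := use33 pL2 hf.2.2 (fun _ => Iff.rfl) 0 0 0 0 1 1 1 0 1
    (by decide) (by decide) (by decide)
  rw [e1 0 1, e2 0 1, e3 1 0, id, id] at this
  exact absurd this (by decide)

lemma L3sum {f : Op 3} (hf : f ∈ L3clone 3) :
    ap3 f 0 0 1 + ap3 f 0 1 0 + ap3 f 0 2 2 = 0 :=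
  use33 pL3 (mem_L3.1 hf).2 (fun _ => Iff.rfl) 0 0 0 0 1 2 1 0 2
    (by decide) (by decide) (by decide)

lemma L3shift {f : Op 3} (hf : f ∈ L3clone 3) (a b c : D3) :
    ap3 f (a + 1) (b + 1) (c + 1) = ap3 f a b c + 1 := by
  have := use32 pC (mem_L3.1 hf).1 (fun _ => Iff.rfl) a (a+1) b (b+1) c (c+1)
    (by revert a; decide) (by revert b; decide) (by revert c; decide)
  revert this
  generalize ap3 f a b c = u
  generalize ap3 f (a + 1) (b + 1) (c + 1) = v
  revert u v; decide

lemma min_L3 {f : Op 3} (e1 : ∀ x y, ap3 f x x y = ap3 f y y y)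
    (e2 : ∀ x y, ap3 f y x x = ap3 f y y y) (e3 : ∀ x y, ap3 f x y x = ap3 f y y y)
    (hf : f ∈ L3clone 3) : False := by
  have h := L3sum hf
  have s : ap3 f 1 1 1 = ap3 f 0 0 0 + 1 := L3shift hf 0 0 0
  rw [e1 0 1, e3 0 1, e2 2 0, s] at h
  revert h
  generalize ap3 f 0 0 0 = u
  revert u; decide

lemma maj_L3 {f : Op 3} (e1 : ∀ x y, ap3 f x x y = ap3 f x x x)
    (e2 : ∀ x y, ap3 f x y x = ap3 f x x x) (e3 : ∀ x y, ap3 f y x x = ap3 f x x x)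
    (hf : f ∈ L3clone 3) : False := by
  have h := L3sum hf
  have s : ap3 f 1 1 1 = ap3 f 0 0 0 + 1 := L3shift hf 0 0 0
  have s' : ap3 f 2 2 2 = ap3 f 1 1 1 + 1 := L3shift hf 1 1 1
  rw [e1 0 1, e2 0 1, e3 2 0, s', s] at h
  revert h
  generalize ap3 f 0 0 0 = u
  revert u; decide

lemma wnu_L3 {f : Op 3} (e1 : ∀ x y, ap3 f x x y = ap3 f y x x)
    (e2 : ∀ x y, ap3 f x y x = ap3 f y x x)
    (hf : f ∈ L3clone 3) : False := by
  have h := L3sum hf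
  have s : ap3 f 1 0 0 = ap3 f 0 2 2 + 1 := L3shift hf 0 2 2
  rw [e1 0 1, e2 0 1, s] at h
  revert h
  generalize ap3 f 0 2 2 = u
  revert u; decide

/-- The clones `L₃`, `TL₂`, `TN` and `W` are pairwise incomparable with respect to
minor-preserving maps. -/
theorem stmt13 :
    (¬ ∃ ξ, IsMinorHom L3clone TL2clone ξ) ∧
    (¬ ∃ ξ, IsMinorHom L3clone TNclone ξ) ∧
    (¬ ∃ ξ, IsMinorHom L3clone Wclone ξ) ∧
    (¬ ∃ ξ, IsMinorHom TL2clone L3clone ξ) ∧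
    (¬ ∃ ξ, IsMinorHom TL2clone TNclone ξ) ∧
    (¬ ∃ ξ, IsMinorHom TL2clone Wclone ξ) ∧
    (¬ ∃ ξ, IsMinorHom TNclone L3clone ξ) ∧
    (¬ ∃ ξ, IsMinorHom TNclone TL2clone ξ) ∧
    (¬ ∃ ξ, IsMinorHom TNclone Wclone ξ) ∧
    (¬ ∃ ξ, IsMinorHom Wclone L3clone ξ) ∧
    (¬ ∃ ξ, IsMinorHom Wclone TL2clone ξ) ∧
    (¬ ∃ ξ, IsMinorHom Wclone TNclone ξ) := by
  refine ⟨?_, ?_, ?_, ?_, ?_, ?_, ?_, ?_, ?_, ?_, ?_, ?_⟩ <;> rintro ⟨ξ, h⟩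
  · exact com_TL2 (transfer2 h com_mem (by decide)) (h.1 _ _ com_mem)
  · exact com_TN (transfer2 h com_mem (by decide)) (h.1 _ _ com_mem)
  · exact mal_W (transfer3 h mal_mem 0 0 1 1 1 1 (by decide))
      (transfer3 h mal_mem 1 0 0 1 1 1 (by decide)) (h.1 _ _ mal_mem)
  · exact min_L3 (transfer3 h min_mem 0 0 1 1 1 1 (by decide))
      (transfer3 h min_mem 1 0 0 1 1 1 (by decide))
      (transfer3 h min_mem 0 1 0 1 1 1 (by decide)) (h.1 _ _ min_mem)
  · exact min_TN (transfer3 h min_mem 0 0 1 1 1 1 (by decide))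
      (transfer3 h min_mem 1 0 0 1 1 1 (by decide)) (h.1 _ _ min_mem)
  · exact mal_W (transfer3 h min_mem 0 0 1 1 1 1 (by decide))
      (transfer3 h min_mem 1 0 0 1 1 1 (by decide)) (h.1 _ _ min_mem)
  · exact maj_L3 (transfer3 h maj_mem 0 0 1 0 0 0 (by decide))
      (transfer3 h maj_mem 0 1 0 0 0 0 (by decide))
      (transfer3 h maj_mem 1 0 0 0 0 0 (by decide)) (h.1 _ _ maj_mem)
  · exact maj_TL2 (transfer3 h maj_mem 0 0 1 0 0 0 (by decide))
      (transfer3 h maj_mem 0 1 0 0 0 0 (by decide))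
      (transfer3 h maj_mem 1 0 0 0 0 0 (by decide)) (h.1 _ _ maj_mem)
  · exact maj_W (transfer3 h maj_mem 0 0 1 0 0 0 (by decide))
      (transfer3 h maj_mem 0 1 0 0 0 0 (by decide))
      (transfer3 h maj_mem 1 0 0 0 0 0 (by decide)) (h.1 _ _ maj_mem)
  · exact wnu_L3 (transfer3 h wnu_mem 0 0 1 1 0 0 (by decide))
      (transfer3 h wnu_mem 0 1 0 1 0 0 (by decide)) (h.1 _ _ wnu_mem)
  · exact com_TL2 (transfer2 h rps_mem (by decide)) (h.1 _ _ rps_mem)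
  · exact com_TN (transfer2 h rps_mem (by decide)) (h.1 _ _ rps_mem)
end
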